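/- arXiv:2111.03955 — 4 statements merged into one kernel-verified Lean document; each statement's English description precedes it below -/
import Mathlib

section
/- Let 0 < r < 1 and 2 ≤ p < ∞ with h := r − 3/p > 0. There exists a constant C, depending only on r and p, such that for every Schwartz vector field v : ℝ³ → ℝ³ with div v = 0 and vorticity components ω^{mn} = ∂_m v^n − ∂_n v^m, one has both ‖∇v‖_{L^∞} ≤ C · ‖v‖_{L²}^{h/(h+5/2)} · (max_{m,n} [ω^{mn}]_{r,p})^{(5/2)/(h+5/2)} and max_{m,n} ‖ω^{mn}‖_{L^∞} ≤ C · ‖v‖_{L²}^{h/(h+5/2)} · (max_{m,n} [ω^{mn}]_{r,p})^{(5/2)/(h+5/2)}, where ‖∇v‖_{L^∞} is the supremum over x of the norm of the Jacobian matrix of v. -/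
open MeasureTheory ENNReal
open scoped RealInnerProductSpace

noncomputable section

/-- Shorthand for Euclidean space `ℝ^d`. -/
abbrev Ed (d : ℕ) := EuclideanSpace ℝ (Fin d)

/-- The homogeneous Besov (Gagliardo) seminorm `[f]_{r,p}`. -/
def gagliardo (d : ℕ) (r p : ℝ) {F : Type*} [NormedAddCommGroup F] (f : Ed d → F) : ℝ≥0∞ :=
  (∫⁻ x, ∫⁻ y, (‖f x - f y‖₊ : ℝ≥0∞) ^ p / (‖x - y‖₊ : ℝ≥0∞) ^ (r * p + d)) ^ (1 / p)

/-- The homogeneous Hölder seminorm `{f}_r`. -/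
def holderSemi (d : ℕ) (r : ℝ) {F : Type*} [NormedAddCommGroup F] (f : Ed d → F) : ℝ≥0∞ :=
  ⨆ x, ⨆ y, (‖f x - f y‖₊ : ℝ≥0∞) / (‖x - y‖₊ : ℝ≥0∞) ^ r

/-- The Fourier transform `f̂(κ) = ∫ e^{-i x·κ} f(x) dx`. -/
def ftransform (d : ℕ) (f : Ed d → ℂ) (κ : Ed d) : ℂ :=
  ∫ x, Complex.exp (-(Complex.I * (⟪x, κ⟫ : ℂ))) * f x

/-- The homogeneous Sobolev seminorm `[f]_θ = ((2π)^{-d} ∫ |κ|^{2θ} |f̂(κ)|² dκ)^{1/2}`. -/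
def sobolevSemi (d : ℕ) (θ : ℝ) (f : Ed d → ℂ) : ℝ≥0∞ :=
  (ENNReal.ofReal ((2 * Real.pi) ^ (-(d : ℝ))) *
    ∫⁻ κ, (‖κ‖₊ : ℝ≥0∞) ^ (2 * θ) * (‖ftransform d f κ‖₊ : ℝ≥0∞) ^ (2 : ℕ)) ^ ((1 : ℝ) / 2)

/-- A symbol of class `S⁰_{ph}`: smooth away from the origin and positively
homogeneous of degree `0`. -/
def IsSymbol0 (d : ℕ) (a : Ed d → ℂ) : Prop :=
  ContDiffOn ℝ (⊤ : ℕ∞) a {0}ᶜ ∧ ∀ (c : ℝ) (κ : Ed d), 0 < c → κ ≠ 0 → a (c • κ) = a κ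

/-- The operator `𝔞[f](x) = (2π)^{-d} ∫ e^{i x·κ} a(κ) f̂(κ) dκ` associated with a symbol. -/
def symbOp (d : ℕ) (a : Ed d → ℂ) (f : Ed d → ℂ) (x : Ed d) : ℂ :=
  (((2 * Real.pi) ^ (-(d : ℝ)) : ℝ) : ℂ) *
    ∫ κ, Complex.exp (Complex.I * (⟪x, κ⟫ : ℂ)) * a κ * ftransform d f κ

/-- The partial derivative `∂_i f(x)`. -/
def pd (d : ℕ) (i : Fin d) (f : Ed d → ℝ) (x : Ed d) : ℝ :=
  fderiv ℝ f x (EuclideanSpace.single i 1)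

/-- The half-wave propagator `(e^{itD} g)(x) = (2π)^{-d} ∫ e^{i x·κ} e^{i t|κ|} ĝ(κ) dκ`. -/
def halfWave (d : ℕ) (t : ℝ) (g : Ed d → ℂ) (x : Ed d) : ℂ :=
  (((2 * Real.pi) ^ (-(d : ℝ)) : ℝ) : ℂ) *
    ∫ κ, Complex.exp (Complex.I * ((⟪x, κ⟫ : ℂ) + (t : ℂ) * ((‖κ‖ : ℝ) : ℂ))) *
      ftransform d g κ

end

open SchwartzMap LineDeriv

lemma scale_lint (f : Ed 3 → ℝ≥0∞) (a : Ed 3) {t : ℝ} (ht : 0 < t) :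
    ∫⁻ w, f (a - t • w) = ENNReal.ofReal (t ^ (-3 : ℝ)) * ∫⁻ w, f w := by
  have h1 : ∫⁻ w, f (a - t • w) = ∫⁻ w, f (a - w) ∂(Measure.map (fun w : Ed 3 => t • w) volume) := by
    have := lintegral_map_equiv (μ := (volume : Measure (Ed 3))) (fun w => f (a - w))
      (Homeomorph.smulOfNeZero t ht.ne').toMeasurableEquiv
    rw [show ((Homeomorph.smulOfNeZero t ht.ne').toMeasurableEquiv : Ed 3 → Ed 3)
      = fun w => t • w from rfl] at this
    rw [this]
  have h2 := Measure.map_addHaar_smul (volume : Measure (Ed 3)) ht.ne'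
  rw [h1, h2, lintegral_smul_measure, lintegral_sub_left_eq_self (μ := volume) f a]
  simp only [finrank_euclideanSpace, Fintype.card_fin, smul_eq_mul]
  congr 2
  rw [abs_of_pos (by positivity), Real.rpow_neg ht.le]
  norm_cast

/-- Double average of `f` against the kernels `K` and `L` at scale `t`. -/
noncomputable def davg (K L f : 𝓢(Ed 3, ℝ)) (t : ℝ) (x : Ed 3) : ℝ :=
  ∫ q : Ed 3 × Ed 3, K q.1 * L q.2 * f (x - t • q.1 - t • q.2)

/-- Coordinate vector. -/
noncomputable def ev (m : Fin 3) : Ed 3 := EuclideanSpace.single m (1 : ℝ)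

lemma schwartz_bdd (f : 𝓢(Ed 3, ℝ)) : ∃ C, 0 ≤ C ∧ ∀ x, ‖f x‖ ≤ C := by
  obtain ⟨C, hC⟩ := f.decay 0 0
  exact ⟨C, hC.1.le, fun x => by simpa using hC.2 x⟩

lemma KL_integrable (K L : 𝓢(Ed 3, ℝ)) :
    Integrable (fun q : Ed 3 × Ed 3 => K q.1 * L q.2) :=
  K.integrable.mul_prod L.integrable

lemma davg_integrable (K L f : 𝓢(Ed 3, ℝ)) (t : ℝ) (x : Ed 3) :
    Integrable (fun q : Ed 3 × Ed 3 => K q.1 * L q.2 * f (x - t • q.1 - t • q.2)) := by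
  obtain ⟨C, -, hC⟩ := schwartz_bdd f
  refine (KL_integrable K L).mul_bdd (c := C) ?_ (Filter.Eventually.of_forall fun q => hC _)
  exact (f.continuous.comp (by fun_prop)).aestronglyMeasurable

lemma davg_swap (K L f : 𝓢(Ed 3, ℝ)) (t : ℝ) (x : Ed 3) : davg K L f t x = davg L K f t x := by
  unfold davg
  have := integral_prod_swap (μ := (volume : Measure (Ed 3))) (ν := (volume : Measure (Ed 3)))
    (fun q : Ed 3 × Ed 3 => L q.1 * K q.2 * f (x - t • q.1 - t • q.2))
  rw [Measure.volume_eq_prod, ← this]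
  congr 1; ext q
  simp only [Prod.fst_swap, Prod.snd_swap]
  rw [sub_right_comm, mul_comm (L _)]

lemma dderiv_comm (a b : Ed 3) (f : 𝓢(Ed 3, ℝ)) : ∂_{a} (∂_{b} f) = ∂_{b} (∂_{a} f) := by
  ext x
  have h := (f.smooth 2).contDiffAt (x := x)
  have h2 := h.isSymmSndFDerivAt (by simp)
  have key : ∀ u v : Ed 3, ∂_{u} (∂_{v} f) x = fderiv ℝ (fderiv ℝ f) x u v := by
    intro u v
    rw [SchwartzMap.lineDerivOp_apply_eq_fderiv]
    have : (⇑(∂_{v} f : 𝓢(Ed 3, ℝ))) = fun y => fderiv ℝ f y v := by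
      ext y; exact SchwartzMap.lineDerivOp_apply_eq_fderiv _ _ _
    rw [this]
    have hd : DifferentiableAt ℝ (fderiv ℝ f) x :=
      ((f.smooth 2).fderiv_right (m := 1) (by norm_num)).differentiable (by norm_num) x
    rw [fderiv_clm_apply hd (differentiableAt_const v)]
    simp
  rw [key, key]
  exact h2 a b

lemma fderiv_comp_scale (f : 𝓢(Ed 3, ℝ)) (a w : Ed 3) (t : ℝ) :
    HasFDerivAt (fun w => f (a - t • w)) (-(t • fderiv ℝ f (a - t • w))) w := by
  have h1 := f.hasFDerivAt (a - t • w)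
  have h2 : HasFDerivAt (fun w : Ed 3 => a - t • w) (-(t • ContinuousLinearMap.id ℝ (Ed 3))) w := by
    have := ((hasFDerivAt_id (𝕜 := ℝ) w).const_smul t).const_sub a
    exact this
  refine (HasFDerivAt.comp w h1 h2).congr_fderiv ?_
  ext u; simp

lemma ibp_inner (L f : 𝓢(Ed 3, ℝ)) (t : ℝ) (a u : Ed 3) :
    ∫ w, (∂_{u} L) w * f (a - t • w) = t * ∫ w, L w * (∂_{u} f) (a - t • w) := by
  have hb : ∀ (L f : 𝓢(Ed 3, ℝ)), Integrable (fun w => L w * f (a - t • w)) := by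
    intro L f
    obtain ⟨C, -, hC⟩ := schwartz_bdd f
    refine L.integrable.mul_bdd (c := C) ?_ (Filter.Eventually.of_forall fun q => hC _)
    exact (f.continuous.comp (by fun_prop)).aestronglyMeasurable
  have hfd : ∀ w, fderiv ℝ (fun w => f (a - t • w)) w u = - (t * (∂_{u} f) (a - t • w)) := by
    intro w
    rw [(fderiv_comp_scale f a w t).fderiv, SchwartzMap.lineDerivOp_apply_eq_fderiv]
    simp
  have hL : ∀ w, fderiv ℝ L w u = (∂_{u} L) w := fun w =>
    (SchwartzMap.lineDerivOp_apply_eq_fderiv _ _ _).symm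
  have := integral_mul_fderiv_eq_neg_fderiv_mul_of_integrable (μ := (volume : Measure (Ed 3)))
    (f := L) (g := fun w => f (a - t • w)) (v := u)
    (by simpa only [hL] using hb _ _)
    (by simp only [hfd]; 
        have := ((hb L (∂_{u} f)).const_mul (-t))
        refine this.congr (Filter.Eventually.of_forall fun w => ?_)
        simp only; ring)
    (hb _ _) (fun x _ => L.differentiableAt) (fun x _ => (fderiv_comp_scale f a x t).differentiableAt)
  simp only [hfd, hL] at this
  rw [← neg_inj, ← this, ← integral_const_mul, ← integral_neg]
  congr 1; ext w; ring

lemma davg_ibp (K L f : 𝓢(Ed 3, ℝ)) (t : ℝ) (x u : Ed 3) :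
    davg K (∂_{u} L) f t x = t * davg K L (∂_{u} f) t x := by
  unfold davg
  rw [Measure.volume_eq_prod, integral_prod _ (davg_integrable _ _ _ _ _),
    integral_prod _ (davg_integrable _ _ _ _ _), ← integral_const_mul]
  congr 1; ext z
  simp only [mul_assoc]
  rw [integral_const_mul, integral_const_mul, ibp_inner]
  ring

lemma dderiv_expand (g : 𝓢(Ed 3, ℝ)) (x z : Ed 3) :
    fderiv ℝ g x z = ∑ m, z m * (∂_{ev m} g) x := by
  have : z = ∑ m, z m • ev m := by
    ext i
    simp [ev, Pi.single_apply]
  conv_lhs => rw [this]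
  rw [map_sum]
  simp [SchwartzMap.lineDerivOp_apply_eq_fderiv]

lemma davg_zero (K L f : 𝓢(Ed 3, ℝ)) (x : Ed 3) :
    davg K L f 0 x = (∫ z, K z) * (∫ z, L z) * f x := by
  unfold davg
  simp only [zero_smul, sub_zero]
  rw [integral_mul_const, Measure.volume_eq_prod, integral_prod_mul]

lemma davg_hasDerivAt (φ ψ g : 𝓢(Ed 3, ℝ)) (h : ∀ m z, (∂_{ev m} ψ) z = - (z m * φ z))
    (x : Ed 3) (t : ℝ) :
    HasDerivAt (fun t => davg φ φ g t x) (2 * ∑ m, davg φ (∂_{ev m} ψ) (∂_{ev m} g) t x) t := by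
  set F' : ℝ → Ed 3 × Ed 3 → ℝ := fun t q =>
    ∑ m, (φ q.1 * (∂_{ev m} ψ) q.2 * (∂_{ev m} g) (x - t • q.1 - t • q.2)
      + (∂_{ev m} ψ) q.1 * φ q.2 * (∂_{ev m} g) (x - t • q.1 - t • q.2)) with hF'
  have hI : ∫ q, F' t q = 2 * ∑ m, davg φ (∂_{ev m} ψ) (∂_{ev m} g) t x := by
    rw [hF', integral_finsetSum]
    · rw [Finset.mul_sum]
      refine Finset.sum_congr rfl fun m _ => ?_
      rw [integral_add (davg_integrable _ _ _ _ _) (davg_integrable _ _ _ _ _)]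
      change davg _ _ _ _ _ + davg _ _ _ _ _ = _
      rw [davg_swap (∂_{ev m} ψ) φ]; ring
    · intro m _
      exact (davg_integrable _ _ _ _ _).add (davg_integrable _ _ _ _ _)
  rw [← hI]
  have hbd : ∀ m, ∃ C, 0 ≤ C ∧ ∀ x, ‖(∂_{ev m} g) x‖ ≤ C := fun m => schwartz_bdd _
  choose C hC0 hC using hbd
  refine (hasDerivAt_integral_of_dominated_loc_of_deriv_le (μ := (volume : Measure (Ed 3 × Ed 3)))
    (F := fun t q => φ q.1 * φ q.2 * g (x - t • q.1 - t • q.2)) (F' := F') (s := Set.univ)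
    (bound := fun q => ∑ m, (‖φ q.1 * (∂_{ev m} ψ) q.2‖ * C m + ‖(∂_{ev m} ψ) q.1 * φ q.2‖ * C m))
    Filter.univ_mem ?_ ?_ ?_ ?_ ?_ ?_).2
  · exact Filter.Eventually.of_forall fun s => (davg_integrable _ _ _ _ _).aestronglyMeasurable
  · exact davg_integrable _ _ _ _ _
  · refine Integrable.aestronglyMeasurable ?_
    exact integrable_finsetSum _ fun m _ =>
      (davg_integrable _ _ _ _ _).add (davg_integrable _ _ _ _ _)
  · refine Filter.Eventually.of_forall fun q s _ => ?_
    refine (norm_sum_le _ _).trans (Finset.sum_le_sum fun m _ => (norm_add_le _ _).trans ?_)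
    exact add_le_add (norm_mul_le_of_le le_rfl (hC _ _)) (norm_mul_le_of_le le_rfl (hC _ _))
  · exact integrable_finsetSum _ fun m _ =>
      ((KL_integrable _ _).norm.mul_const _).add ((KL_integrable _ _).norm.mul_const _)
  · refine Filter.Eventually.of_forall fun q s _ => ?_
    have h1 : HasDerivAt (fun s : ℝ => x - s • q.1 - s • q.2) (-q.1 - q.2) s := by
      have a1 := ((hasDerivAt_id s).smul_const q.1).const_sub x
      have a2 := a1.sub ((hasDerivAt_id s).smul_const q.2)
      refine a2.congr_deriv ?_
      simp
    have h2 := (g.hasFDerivAt (x - s • q.1 - s • q.2)).comp_hasDerivAt s h1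
    refine (h2.const_mul (φ q.1 * φ q.2)).congr_deriv ?_
    symm
    rw [dderiv_expand, Finset.mul_sum, hF']
    refine Finset.sum_congr rfl fun m _ => ?_
    rw [h, h]
    simp only [PiLp.sub_apply, PiLp.neg_apply]
    ring

lemma exists_kernels : ∃ φ ψ : 𝓢(Ed 3, ℝ), HasCompactSupport φ ∧ HasCompactSupport ψ ∧
    (∀ m z, (∂_{ev m} ψ) z = - (z m * φ z)) ∧ 0 < ∫ z, φ z := by
  set g : ℝ → ℝ := fun s => Real.smoothTransition (2 - s) with hg
  have hgs : ContDiff ℝ ((⊤ : ℕ∞) : WithTop ℕ∞) g := Real.smoothTransition.contDiff.comp (contDiff_const.sub contDiff_id)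
  have hg0 : ∀ s, 2 ≤ s → g s = 0 := fun s hs =>
    Real.smoothTransition.zero_of_nonpos (by linarith)
  have hganti : Antitone g := fun a b hab => Real.smoothTransition.monotone (by linarith)
  have hdg : ContDiff ℝ ((⊤ : ℕ∞) : WithTop ℕ∞) (deriv g) := ((contDiff_infty_iff_deriv (𝕜 := ℝ)).1 hgs).2
  have hn : ContDiff ℝ ((⊤ : ℕ∞) : WithTop ℕ∞) (fun z : Ed 3 => ‖z‖ ^ 2) := contDiff_norm_sq ℝ
  have hdg0 : ∀ s, 2 < s → deriv g s = 0 := by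
    intro s hs
    have : g =ᶠ[nhds s] fun _ => 0 := by
      filter_upwards [lt_mem_nhds hs] with y hy using hg0 y hy.le
    rw [this.deriv_eq]; simp
  have hlarge : ∀ z : Ed 3, z ∉ Metric.closedBall (0 : Ed 3) 2 → 2 < ‖z‖ ^ 2 := by
    intro z hz
    simp only [Metric.mem_closedBall, dist_zero_right, not_le] at hz
    nlinarith
  have hψc : HasCompactSupport (fun z : Ed 3 => g (‖z‖ ^ 2)) :=
    HasCompactSupport.intro (isCompact_closedBall 0 2) fun z hz => hg0 _ (hlarge z hz).le
  have hφc : HasCompactSupport (fun z : Ed 3 => -2 * deriv g (‖z‖ ^ 2)) :=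
    HasCompactSupport.intro (isCompact_closedBall 0 2) fun z hz => by
      rw [hdg0 _ (hlarge z hz)]; simp
  have hφs : ContDiff ℝ ((⊤ : ℕ∞) : WithTop ℕ∞) (fun z : Ed 3 => -2 * deriv g (‖z‖ ^ 2)) :=
    contDiff_const.mul (hdg.comp hn)
  refine ⟨hφc.toSchwartzMap hφs, hψc.toSchwartzMap (hgs.comp hn), hφc, hψc, ?_, ?_⟩
  · intro m z
    rw [SchwartzMap.lineDerivOp_apply_eq_fderiv]
    change fderiv ℝ (fun z : Ed 3 => g (‖z‖ ^ 2)) z (ev m) = -(z m * (-2 * deriv g (‖z‖ ^ 2)))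
    have h1 : HasFDerivAt (fun z : Ed 3 => ‖z‖ ^ 2) (2 • innerSL ℝ z) z :=
      (hasStrictFDerivAt_norm_sq z).hasFDerivAt
    have h2 : HasDerivAt g (deriv g (‖z‖ ^ 2)) (‖z‖ ^ 2) :=
      (hgs.differentiable (by simp) _).hasDerivAt
    change fderiv ℝ (g ∘ fun z : Ed 3 => ‖z‖ ^ 2) z (ev m) = _
    rw [(h2.comp_hasFDerivAt z h1).fderiv]
    simp [ev, EuclideanSpace.inner_single_right]
    ring
  · have hnn : ∀ s, deriv g s ≤ 0 := fun s => hganti.deriv_nonpos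
    have : ∃ s, 0 ≤ s ∧ deriv g s ≠ 0 := by
      by_contra! hcon
      obtain ⟨c, hc, hc'⟩ := exists_deriv_eq_slope g (show (0 : ℝ) < 2 by norm_num)
        hgs.continuous.continuousOn (hgs.differentiable (by simp)).differentiableOn
      rw [hcon c hc.1.le, hg0 2 le_rfl] at hc'
      have : g 0 = 1 := Real.smoothTransition.one_of_one_le (by norm_num)
      rw [this] at hc'
      norm_num at hc'
    obtain ⟨s, hs0, hs⟩ := this
    refine Continuous.integral_pos_of_hasCompactSupport_nonneg_nonzero hφs.continuous hφc
      (fun z => by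
        have := hnn (‖z‖ ^ 2)
        change 0 ≤ -2 * deriv g (‖z‖ ^ 2)
        linarith)
      (x := EuclideanSpace.single 0 (Real.sqrt s)) ?_
    simp [Real.sq_sqrt hs0, hs]

lemma integral_dderiv (L : 𝓢(Ed 3, ℝ)) (u : Ed 3) : ∫ w, (∂_{u} L) w = 0 := by
  simp only [SchwartzMap.lineDerivOp_apply_eq_fderiv]
  have h := integral_mul_fderiv_eq_neg_fderiv_mul_of_integrable (μ := (volume : Measure (Ed 3)))
    (f := fun _ => (1 : ℝ)) (g := L) (v := u) (by simp)
    (by simpa [SchwartzMap.lineDerivOp_apply_eq_fderiv] using (∂_{u} L).integrable (μ := volume))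
    (by simpa using L.integrable (μ := volume)) (fun x _ => by fun_prop) (fun x _ => L.differentiableAt)
  simpa using h

lemma davg_eq_diff (K H f : 𝓢(Ed 3, ℝ)) (hH : ∫ w, H w = 0) (t : ℝ) (x : Ed 3) :
    davg K H f t x = ∫ q : Ed 3 × Ed 3,
      K q.1 * H q.2 * (f (x - t • q.1 - t • q.2) - f (x - t • q.1)) := by
  have hint : Integrable (fun q : Ed 3 × Ed 3 => K q.1 * H q.2 * f (x - t • q.1)) := by
    obtain ⟨C, -, hC⟩ := schwartz_bdd f
    refine (KL_integrable K H).mul_bdd (c := C) ?_ (Filter.Eventually.of_forall fun q => hC _)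
    exact (f.continuous.comp (by fun_prop)).aestronglyMeasurable
  have h0 : ∫ q : Ed 3 × Ed 3, K q.1 * H q.2 * f (x - t • q.1) = 0 := by
    have : (fun q : Ed 3 × Ed 3 => K q.1 * H q.2 * f (x - t • q.1)) =
        fun q => (K q.1 * f (x - t • q.1)) * H q.2 := by ext q; ring
    rw [this, Measure.volume_eq_prod,
      integral_prod_mul (fun z => K z * f (x - t • z)) (fun w => H w), hH, mul_zero]
  simp only [mul_sub]
  rw [integral_sub (davg_integrable _ _ _ _ _) hint, h0, sub_zero]
  rfl

lemma lint_fin (K : 𝓢(Ed 3, ℝ)) (hK : HasCompactSupport K) (s q : ℝ) (hs : 0 ≤ s) (hq : 0 < q) :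
    ∫⁻ w, (‖K w‖ₑ * ‖w‖ₑ ^ s) ^ q < ∞ := by
  have h1 : Continuous (fun w => (‖K w‖ * ‖w‖ ^ s) ^ q) := by
    refine Continuous.rpow_const (K.continuous.norm.mul (continuous_norm.rpow_const
      fun _ => Or.inr hs)) fun _ => Or.inr hq.le
  have h2 : HasCompactSupport (fun w => (‖K w‖ * ‖w‖ ^ s) ^ q) := by
    refine hK.mono ?_
    intro w hw hw'
    apply hw
    simp [hw', hq.ne']
  have h3 := (h1.integrable_of_hasCompactSupport h2 (μ := volume)).2
  refine lt_of_eq_of_lt ?_ h3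
  refine lintegral_congr fun w => ?_
  change _ = ‖(‖K w‖ * ‖w‖ ^ s) ^ q‖ₑ
  rw [Real.enorm_eq_ofReal (r := (‖K w‖ * ‖w‖ ^ s) ^ q) (by positivity),
    ← ENNReal.ofReal_rpow_of_nonneg (by positivity) hq.le,
    ENNReal.ofReal_mul (by positivity), ← ENNReal.ofReal_rpow_of_nonneg (by positivity) hs,
    ofReal_norm, ofReal_norm]

lemma high_bound (r p : ℝ) (hr0 : 0 < r) (hp2 : 2 ≤ p) (K H : 𝓢(Ed 3, ℝ))
    (hK : HasCompactSupport K) (hHc : HasCompactSupport H) (hH : ∫ w, H w = 0) :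
    ∃ C : ℝ, 0 < C ∧ ∀ (f : 𝓢(Ed 3, ℝ)) (x : Ed 3) (t : ℝ), 0 < t →
      ‖davg K H f t x‖ₑ ≤ ENNReal.ofReal C * ENNReal.ofReal (t ^ (r - 3 / p)) * gagliardo 3 r p f := by
  have hp0 : 0 < p := by linarith
  set s := r + 3 / p with hs
  have hs0 : 0 < s := by positivity
  have hpq := Real.HolderConjugate.conjExponent (show 1 < p by linarith)
  set q := Real.conjExponent p with hq
  have hq0 : 0 < q := hpq.symm.pos
  set c : ℝ≥0∞ := (∫⁻ z, ‖K z‖ₑ ^ q) * ∫⁻ w, (‖H w‖ₑ * ‖w‖ₑ ^ s) ^ q with hc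
  have hcfin : c < ∞ := by
    refine ENNReal.mul_lt_top ?_ (lint_fin H hHc s q hs0.le hq0)
    simpa using lint_fin K hK 0 q le_rfl hq0
  refine ⟨(c ^ (1 / q)).toReal + 1, by positivity, fun f x t ht => ?_⟩
  have hcC : c ^ (1 / q) ≤ ENNReal.ofReal ((c ^ (1 / q)).toReal + 1) := by
    rw [← ENNReal.ofReal_toReal (ENNReal.rpow_lt_top_of_nonneg (by positivity) hcfin.ne).ne]
    exact ENNReal.ofReal_le_ofReal (by simp)
  set A : Ed 3 × Ed 3 → ℝ≥0∞ := fun z =>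
    ‖f (x - t • z.1) - f (x - t • z.1 - t • z.2)‖ₑ / ‖t • z.2‖ₑ ^ s with hA
  set B : Ed 3 × Ed 3 → ℝ≥0∞ := fun z => ‖K z.1‖ₑ * (‖H z.2‖ₑ * ‖t • z.2‖ₑ ^ s) with hB
  have hfm : Measurable f := f.continuous.measurable
  have hKm : Measurable K := K.continuous.measurable
  have hHm : Measurable H := H.continuous.measurable
  have hAm : Measurable A := by fun_prop
  have hBm : Measurable B := by fun_prop
  have step1 : ‖davg K H f t x‖ₑ ≤ ∫⁻ z, (A * B) z := by
    rw [davg_eq_diff K H f hH]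
    refine (enorm_integral_le_lintegral_enorm _).trans (lintegral_mono fun z => ?_)
    simp only [Pi.mul_apply, hA, hB, enorm_mul]
    by_cases hz : t • z.2 = 0
    · simp [hz]
    · have h0 : ‖t • z.2‖ₑ ^ s ≠ 0 := by
        rw [Ne, ENNReal.rpow_eq_zero_iff]
        rintro (⟨h, -⟩ | ⟨-, h⟩)
        · exact hz (enorm_eq_zero.1 h)
        · linarith
      have h1 : ‖t • z.2‖ₑ ^ s ≠ ∞ := ENNReal.rpow_ne_top_of_nonneg hs0.le enorm_ne_top
      rw [← enorm_neg (f _ - f _), neg_sub]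
      set D := ‖f (x - t • z.1) - f (x - t • z.1 - t • z.2)‖ₑ
      set N := ‖t • z.2‖ₑ ^ s
      apply le_of_eq
      calc ‖K z.1‖ₑ * ‖H z.2‖ₑ * D = ‖K z.1‖ₑ * ‖H z.2‖ₑ * (D / N * N) := by
            rw [ENNReal.div_mul_cancel h0 h1]
        _ = _ := by ring
  have step2 := ENNReal.lintegral_mul_le_Lp_mul_Lq (volume : Measure (Ed 3 × Ed 3)) hpq
    hAm.aemeasurable hBm.aemeasurable
  have hAint : ∫⁻ z, A z ^ p = ENNReal.ofReal (t ^ (-3 : ℝ)) * (ENNReal.ofReal (t ^ (-3 : ℝ)) *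
      ∫⁻ x, ∫⁻ y, (‖f x - f y‖₊ : ℝ≥0∞) ^ p / (‖x - y‖₊ : ℝ≥0∞) ^ (r * p + (3 : ℕ))) := by
    rw [Measure.volume_eq_prod, lintegral_prod _ (hAm.pow_const p).aemeasurable]
    set F : Ed 3 → Ed 3 → ℝ≥0∞ := fun x y =>
      (‖f x - f y‖₊ : ℝ≥0∞) ^ p / (‖x - y‖₊ : ℝ≥0∞) ^ (r * p + (3 : ℕ)) with hF
    have e1 : ∀ z w, A (z, w) ^ p = F (x - t • z) (x - t • z - t • w) := by
      intro z w
      simp only [hA, hF]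
      rw [ENNReal.div_rpow_of_nonneg _ _ hp0.le, ← ENNReal.rpow_mul, _root_.sub_sub_cancel]
      congr 2
      rw [hs]; field_simp; norm_num
    simp only [e1]
    have e2 : ∀ z, ∫⁻ w, F (x - t • z) (x - t • z - t • w) =
        ENNReal.ofReal (t ^ (-3 : ℝ)) * ∫⁻ w, F (x - t • z) w :=
      fun z => scale_lint (F (x - t • z)) _ ht
    simp only [e2]
    rw [lintegral_const_mul' _ _ ENNReal.ofReal_ne_top]
    congr 1
    exact scale_lint (fun a => ∫⁻ w, F a w) x ht
  have hBint : ∫⁻ z, B z ^ q = ENNReal.ofReal t ^ (s * q) * c := by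
    have e1 : ∀ z : Ed 3 × Ed 3, B z ^ q =
        ENNReal.ofReal t ^ (s * q) * (‖K z.1‖ₑ ^ q * (‖H z.2‖ₑ * ‖z.2‖ₑ ^ s) ^ q) := by
      intro z
      simp only [hB]
      rw [enorm_smul, ENNReal.mul_rpow_of_nonneg _ _ hs0.le, Real.enorm_eq_ofReal ht.le,
        ENNReal.rpow_mul, ← ENNReal.mul_rpow_of_nonneg _ _ hq0.le,
        ← ENNReal.mul_rpow_of_nonneg _ _ hq0.le]
      congr 1; ring
    simp only [e1]
    rw [lintegral_const_mul' _ _ (ENNReal.rpow_ne_top_of_nonneg (by positivity) ENNReal.ofReal_ne_top),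
      Measure.volume_eq_prod, lintegral_prod_mul (f := fun z => ‖K z‖ₑ ^ q)
        (g := fun w => (‖H w‖ₑ * ‖w‖ₑ ^ s) ^ q)]
    · exact (hKm.enorm.pow_const q).aemeasurable
    · exact Measurable.aemeasurable (by fun_prop)
  refine step1.trans (step2.trans ?_)
  rw [hAint, hBint]
  unfold gagliardo
  set J := ∫⁻ x, ∫⁻ y, (‖f x - f y‖₊ : ℝ≥0∞) ^ p / (‖x - y‖₊ : ℝ≥0∞) ^ (r * p + (3 : ℕ))
  have hip : 0 ≤ 1 / p := by positivity
  have hiq : 0 ≤ 1 / q := by positivity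
  rw [← mul_assoc, ← ENNReal.ofReal_mul (by positivity), ENNReal.mul_rpow_of_nonneg _ _ hip,
    ENNReal.mul_rpow_of_nonneg _ _ hiq, ← ENNReal.rpow_mul, ENNReal.ofReal_rpow_of_nonneg (by positivity) hip,
    ENNReal.ofReal_rpow_of_pos ht]
  have e3 : ((t ^ (-3 : ℝ) * t ^ (-3 : ℝ)) ^ (1 / p)) * t ^ (s * q * (1 / q)) = t ^ (r - 3 / p) := by
    rw [← Real.rpow_add ht, ← Real.rpow_mul ht.le, ← Real.rpow_add ht]
    congr 1
    rw [hs]; field_simp; ring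
  calc _ = ENNReal.ofReal ((t ^ (-3 : ℝ) * t ^ (-3 : ℝ)) ^ (1 / p)) * ENNReal.ofReal (t ^ (s * q * (1 / q)))
        * c ^ (1 / q) * J ^ (1 / p) := by ring
    _ = c ^ (1 / q) * ENNReal.ofReal (t ^ (r - 3 / p)) * J ^ (1 / p) := by
        rw [← ENNReal.ofReal_mul (by positivity), e3]; ring
    _ ≤ _ := by gcongr

lemma low_bound (K L : 𝓢(Ed 3, ℝ)) :
    ∃ C : ℝ, 0 < C ∧ ∀ (f : 𝓢(Ed 3, ℝ)) (x : Ed 3) (t : ℝ), 0 < t →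
      ‖davg K L f t x‖ₑ ≤ ENNReal.ofReal C * ENNReal.ofReal (t ^ (-(3 / 2) : ℝ)) * eLpNorm f 2 volume := by
  have hKm : Measurable K := K.continuous.measurable
  have hLm : Measurable L := L.continuous.measurable
  set c : ℝ≥0∞ := (∫⁻ z, ‖K z‖ₑ) * eLpNorm L 2 volume with hc
  have hcfin : c < ∞ := ENNReal.mul_lt_top K.integrable.2 (L.memLp 2 volume).2
  refine ⟨c.toReal + 1, by positivity, fun f x t ht => ?_⟩
  have hfm : Measurable f := f.continuous.measurable
  have hcC : c ≤ ENNReal.ofReal (c.toReal + 1) := by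
    rw [← ENNReal.ofReal_toReal hcfin.ne]
    exact ENNReal.ofReal_le_ofReal (by simp)
  have h2 : ∀ g : Ed 3 → ℝ, eLpNorm g 2 volume = (∫⁻ w, ‖g w‖ₑ ^ (2 : ℝ)) ^ (1 / (2 : ℝ)) := by
    intro g
    rw [eLpNorm_eq_lintegral_rpow_enorm_toReal (by norm_num) (by norm_num)]
    simp
  have inner : ∀ a : Ed 3, ∫⁻ w, ‖L w‖ₑ * ‖f (a - t • w)‖ₑ ≤
      eLpNorm L 2 volume * (ENNReal.ofReal (t ^ (-(3 / 2) : ℝ)) * eLpNorm f 2 volume) := by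
    intro a
    have := ENNReal.lintegral_mul_le_Lp_mul_Lq (volume : Measure (Ed 3)) Real.HolderConjugate.two_two
      (f := fun w => ‖L w‖ₑ) (g := fun w => ‖f (a - t • w)‖ₑ)
      (by fun_prop) (by fun_prop)
    refine this.trans (le_of_eq ?_)
    rw [h2, h2, scale_lint (fun w => ‖f w‖ₑ ^ (2 : ℝ)) a ht, ENNReal.mul_rpow_of_nonneg _ _ (by norm_num),
      ENNReal.ofReal_rpow_of_nonneg (by positivity) (by norm_num), ← Real.rpow_mul ht.le]
    norm_num
  calc ‖davg K L f t x‖ₑ ≤ ∫⁻ q : Ed 3 × Ed 3, ‖K q.1 * L q.2 * f (x - t • q.1 - t • q.2)‖ₑ :=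
        enorm_integral_le_lintegral_enorm _
    _ = ∫⁻ z, ∫⁻ w, ‖K z * L w * f (x - t • z - t • w)‖ₑ := by
        rw [Measure.volume_eq_prod, lintegral_prod]
        fun_prop
    _ = ∫⁻ z, ‖K z‖ₑ * ∫⁻ w, ‖L w‖ₑ * ‖f (x - t • z - t • w)‖ₑ := by
        refine lintegral_congr fun z => ?_
        rw [← lintegral_const_mul' _ _ enorm_ne_top]
        simp only [enorm_mul, mul_assoc]
    _ ≤ ∫⁻ z, ‖K z‖ₑ * (eLpNorm L 2 volume *
          (ENNReal.ofReal (t ^ (-(3 / 2) : ℝ)) * eLpNorm f 2 volume)) := by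
        refine lintegral_mono fun z => ?_
        gcongr
        exact inner _
    _ = c * ENNReal.ofReal (t ^ (-(3 / 2) : ℝ)) * eLpNorm f 2 volume := by
        rw [lintegral_mul_const _ hKm.enorm]; ring
    _ ≤ _ := by gcongr

lemma davg_add (K L f g : 𝓢(Ed 3, ℝ)) (t : ℝ) (x : Ed 3) :
    davg K L (f + g) t x = davg K L f t x + davg K L g t x := by
  unfold davg
  rw [← integral_add (davg_integrable _ _ _ _ _) (davg_integrable _ _ _ _ _)]
  congr 1; ext q
  rw [SchwartzMap.add_apply]; ring

lemma davg_zero_fun (K L : 𝓢(Ed 3, ℝ)) (t : ℝ) (x : Ed 3) : davg K L 0 t x = 0 := by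
  simp [davg]

/-- The vorticity components of a family of scalar Schwartz functions. -/
noncomputable def vort (f : Fin 3 → 𝓢(Ed 3, ℝ)) (m n : Fin 3) : 𝓢(Ed 3, ℝ) :=
  ∂_{ev m} (f n) - ∂_{ev n} (f m)

lemma deriv_identity (φ ψ : 𝓢(Ed 3, ℝ)) (f : Fin 3 → 𝓢(Ed 3, ℝ))
    (hdiv : ∑ m, ∂_{ev m} (f m) = 0) (k n : Fin 3) (t : ℝ) (ht : 0 < t) (x : Ed 3) :
    ∑ m, davg φ (∂_{ev m} ψ) (∂_{ev m} (∂_{ev k} (f n))) t x =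
      t⁻¹ * ∑ m, davg φ (∂_{ev k} (∂_{ev m} ψ)) (vort f m n) t x := by
  have h1 : ∀ m, davg φ (∂_{ev m} ψ) (∂_{ev m} (∂_{ev k} (f n))) t x =
      t⁻¹ * davg φ (∂_{ev k} (∂_{ev m} ψ)) (vort f m n) t x
        + t * davg φ ψ (∂_{ev k} (∂_{ev n} (∂_{ev m} (f m)))) t x := by
    intro m
    have e1 : ∂_{ev m} (∂_{ev k} (f n)) = ∂_{ev k} (vort f m n) + ∂_{ev k} (∂_{ev n} (f m)) := by
      rw [← lineDerivOp_add, vort, sub_add_cancel, dderiv_comm]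
    rw [e1, davg_add, davg_ibp φ (∂_{ev m} ψ) (vort f m n) t x (ev k), ← mul_assoc,
      inv_mul_cancel₀ ht.ne', one_mul, davg_ibp φ ψ (∂_{ev k} (∂_{ev n} (f m))) t x (ev m)]
    rw [dderiv_comm (ev m) (ev k), dderiv_comm (ev m) (ev n)]
  have h2 : ∑ m, davg φ ψ (∂_{ev k} (∂_{ev n} (∂_{ev m} (f m)))) t x = 0 := by
    have : ∂_{ev k} (∂_{ev n} (∑ m, ∂_{ev m} (f m))) = 0 := by
      rw [hdiv, lineDerivOp_zero, lineDerivOp_zero]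
    rw [Fin.sum_univ_three, lineDerivOp_add, lineDerivOp_add, lineDerivOp_add, lineDerivOp_add] at this
    rw [Fin.sum_univ_three, ← davg_add, ← davg_add, this, davg_zero_fun]
  simp only [h1]
  rw [Finset.sum_add_distrib, ← Finset.mul_sum, ← Finset.mul_sum, h2]
  ring

lemma ftc_bound (A A' : ℝ → ℝ) (hA : ∀ t, HasDerivAt A (A' t) t) (c h : ℝ) (hh : 0 < h)
    (hb : ∀ t, 0 < t → |A' t| ≤ c * t ^ (h - 1)) (R : ℝ) (hR : 0 < R) :
    |A 0| ≤ |A R| + c / h * R ^ h := by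
  have hcont : Continuous A := continuous_iff_continuousAt.2 fun t => (hA t).continuousAt
  have hBc : Continuous (fun t : ℝ => c / h * t ^ h) :=
    continuous_const.mul (continuous_id.rpow_const fun _ => Or.inr hh.le)
  have hBd : ∀ t, 0 < t → HasDerivAt (fun t : ℝ => c / h * t ^ h) (c * t ^ (h - 1)) t := by
    intro t ht
    refine ((Real.hasDerivAt_rpow_const (Or.inl ht.ne')).const_mul (c / h)).congr_deriv ?_
    field_simp
  have h0 : c / h * (0 : ℝ) ^ h = 0 := by rw [Real.zero_rpow hh.ne', mul_zero]
  have m0 : (0 : ℝ) ∈ Set.Icc 0 R := ⟨le_rfl, hR.le⟩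
  have mR : R ∈ Set.Icc 0 R := ⟨hR.le, le_rfl⟩
  have h1 : AntitoneOn (fun t => A t - c / h * t ^ h) (Set.Icc 0 R) := by
    refine antitoneOn_of_deriv_nonpos (convex_Icc _ _) (hcont.sub hBc).continuousOn ?_ ?_
    · rw [interior_Icc]
      exact fun t ht => ((hA t).sub (hBd t ht.1)).differentiableAt.differentiableWithinAt
    · rw [interior_Icc]
      intro t ht
      have := ((hA t).fun_sub (hBd t ht.1)).deriv
      rw [this]
      linarith [(abs_le.1 (hb t ht.1)).2]
  have h2 : MonotoneOn (fun t => A t + c / h * t ^ h) (Set.Icc 0 R) := by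
    refine monotoneOn_of_deriv_nonneg (convex_Icc _ _) (hcont.add hBc).continuousOn ?_ ?_
    · rw [interior_Icc]
      exact fun t ht => ((hA t).add (hBd t ht.1)).differentiableAt.differentiableWithinAt
    · rw [interior_Icc]
      intro t ht
      have := ((hA t).fun_add (hBd t ht.1)).deriv
      rw [this]
      linarith [(abs_le.1 (hb t ht.1)).1]
  have i1 := h1 m0 mR hR.le
  have i2 := h2 m0 mR hR.le
  simp only [h0] at i1 i2
  rw [abs_le]
  constructor
  · linarith [neg_abs_le (A R)]
  · linarith [le_abs_self (A R)]

lemma opt_bound (h : ℝ) (hh : 0 < h) (g C V M : ℝ) (hV : 0 ≤ V) (hM : 0 ≤ M)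
    (H : ∀ R : ℝ, 0 < R → g ≤ C * (R ^ (-(5 / 2) : ℝ) * V + R ^ h * M)) :
    g ≤ 2 * C * (V ^ (h / (h + 5 / 2)) * M ^ ((5 / 2) / (h + 5 / 2))) := by
  have hs : 0 < h + 5 / 2 := by positivity
  rcases hV.eq_or_lt with hV | hV
  · subst hV
    rw [Real.zero_rpow (by positivity)]
    simp only [zero_mul, mul_zero, zero_add] at *
    have ht : Filter.Tendsto (fun R : ℝ => C * (R ^ h * M)) (nhdsWithin 0 (Set.Ioi 0)) (nhds 0) := by
      have : Continuous (fun R : ℝ => C * (R ^ h * M)) :=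
        continuous_const.mul ((continuous_id.rpow_const fun _ => Or.inr hh.le).mul continuous_const)
      have := this.tendsto 0
      simp only [Real.zero_rpow hh.ne', zero_mul, mul_zero] at this
      exact this.mono_left nhdsWithin_le_nhds
    refine ge_of_tendsto ht ?_
    filter_upwards [self_mem_nhdsWithin] with R hR using H R hR
  rcases hM.eq_or_lt with hM | hM
  · subst hM
    rw [Real.zero_rpow (by positivity)]
    simp only [mul_zero, add_zero] at *
    have ht : Filter.Tendsto (fun R : ℝ => C * (R ^ (-(5 / 2) : ℝ) * V)) Filter.atTop (nhds 0) := by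
      have := ((tendsto_rpow_neg_atTop (show (0 : ℝ) < 5 / 2 by norm_num)).mul_const V).const_mul C
      simpa using this
    refine ge_of_tendsto ht ?_
    filter_upwards [Filter.eventually_gt_atTop 0] with R hR using H R hR
  have hq : 0 < V / M := by positivity
  have := H ((V / M) ^ (1 / (h + 5 / 2))) (by positivity)
  refine this.trans (le_of_eq ?_)
  have d1 : ∀ y : ℝ, (V / M) ^ y = V ^ y * M ^ (-y) := fun y => by
    rw [Real.div_rpow hV.le hM.le, Real.rpow_neg hM.le, div_eq_mul_inv]
  rw [← Real.rpow_mul hq.le, ← Real.rpow_mul hq.le, d1, d1]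
  have e1 : V ^ (1 / (h + 5 / 2) * -(5 / 2)) * V = V ^ (h / (h + 5 / 2)) := by
    nth_rewrite 2 [← Real.rpow_one V]
    rw [← Real.rpow_add hV]; congr 1; field_simp; ring
  have e2 : M ^ (-(1 / (h + 5 / 2) * h)) * M = M ^ ((5 / 2) / (h + 5 / 2)) := by
    nth_rewrite 2 [← Real.rpow_one M]
    rw [← Real.rpow_add hM]; congr 1; field_simp; ring
  have e3 : -(1 / (h + 5 / 2) * -(5 / 2)) = (5 / 2) / (h + 5 / 2) := by ring
  have e4 : 1 / (h + 5 / 2) * h = h / (h + 5 / 2) := by ring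
  calc _ = C * ((V ^ (1 / (h + 5 / 2) * -(5 / 2)) * V) * M ^ (-(1 / (h + 5 / 2) * -(5 / 2)))
        + V ^ (1 / (h + 5 / 2) * h) * (M ^ (-(1 / (h + 5 / 2) * h)) * M)) := by ring
    _ = _ := by rw [e1, e2, e3, e4]; ring

lemma grad_bound (r p : ℝ) (hr0 : 0 < r) (hp2 : 2 ≤ p) (hh : 0 < r - 3 / p) (k n : Fin 3) :
    ∃ C : ℝ, 0 < C ∧ ∀ f : Fin 3 → 𝓢(Ed 3, ℝ), ∑ m, ∂_{ev m} (f m) = 0 →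
      ∀ V M : ℝ, 0 ≤ V → 0 ≤ M → eLpNorm (f n) 2 volume ≤ ENNReal.ofReal V →
      (∀ m, gagliardo 3 r p (vort f m n) ≤ ENNReal.ofReal M) → ∀ x : Ed 3,
      |(∂_{ev k} (f n)) x| ≤ C * (V ^ ((r - 3 / p) / (r - 3 / p + 5 / 2)) *
        M ^ ((5 / 2) / (r - 3 / p + 5 / 2))) := by
  obtain ⟨φ, ψ, hφc, hψc, hφψ, hφ⟩ := exists_kernels
  set h := r - 3 / p with hh'
  have hHc : ∀ m, HasCompactSupport (∂_{ev k} (∂_{ev m} ψ) : 𝓢(Ed 3, ℝ)) := fun m =>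
    IsCompact.of_isClosed_subset hψc (isClosed_tsupport _)
      ((SchwartzMap.tsupport_lineDerivOp_subset _ _).trans
        (SchwartzMap.tsupport_lineDerivOp_subset _ _))
  have hhigh := fun m => high_bound r p hr0 hp2 φ (∂_{ev k} (∂_{ev m} ψ)) hφc (hHc m)
    (integral_dderiv _ _)
  choose D hD0 hD using hhigh
  obtain ⟨B, hB0, hB⟩ := low_bound φ (∂_{ev k} φ)
  set I := ∫ z, φ z with hI
  set S := ∑ m, D m with hS
  have hS0 : 0 < S := Finset.sum_pos (fun m _ => hD0 m) Finset.univ_nonempty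
  refine ⟨2 * ((B + 2 * S / h) / (I * I)), by positivity, fun f hdiv V M hV hM hfV hfM x => ?_⟩
  refine opt_bound h hh _ _ V M hV hM fun R hR => ?_
  have key := ftc_bound (fun t => davg φ φ (∂_{ev k} (f n)) t x) _
    (fun t => davg_hasDerivAt φ ψ (∂_{ev k} (f n)) hφψ x t) (2 * S * M) h hh ?_ R hR
  · rw [davg_zero, abs_mul, abs_of_pos (by positivity)] at key
    have hlow : |davg φ φ (∂_{ev k} (f n)) R x| ≤ B * (R ^ (-(5 / 2) : ℝ) * V) := by
      have e1 : davg φ φ (∂_{ev k} (f n)) R x = R⁻¹ * davg φ (∂_{ev k} φ) (f n) R x := by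
        rw [davg_ibp, ← mul_assoc, inv_mul_cancel₀ hR.ne', one_mul]
      have e2 : |davg φ (∂_{ev k} φ) (f n) R x| ≤ B * R ^ (-(3 / 2) : ℝ) * V := by
        have := (hB (f n) x R hR).trans (mul_le_mul_right hfV _)
        rw [← ENNReal.ofReal_mul (by positivity), ← ENNReal.ofReal_mul (by positivity),
          Real.enorm_eq_ofReal_abs] at this
        exact (ENNReal.ofReal_le_ofReal_iff (by positivity)).1 this
      have e3 : R ^ (-(5 / 2) : ℝ) = R⁻¹ * R ^ (-(3 / 2) : ℝ) := by
        rw [← Real.rpow_neg_one, ← Real.rpow_add hR]; norm_num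
      rw [e1, abs_mul, abs_of_pos (by positivity), e3]
      calc _ ≤ R⁻¹ * (B * R ^ (-(3 / 2) : ℝ) * V) := by gcongr
        _ = _ := by ring
    rw [div_mul_eq_mul_div, le_div_iff₀ (by positivity)]
    have hRh : 0 ≤ R ^ h * M := by positivity
    have hRl : 0 ≤ R ^ (-(5 / 2) : ℝ) * V := by positivity
    have q1 : 0 ≤ 2 * S / h := by positivity
    have e4 : 2 * S * M / h * R ^ h = 2 * S / h * (R ^ h * M) := by ring
    rw [e4] at key
    nlinarith [mul_nonneg q1 hRl, mul_nonneg hB0.le hRh]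
  · intro t ht
    rw [deriv_identity φ ψ f hdiv k n t ht x]
    have e1 : ∀ m, |davg φ (∂_{ev k} (∂_{ev m} ψ)) (vort f m n) t x| ≤ D m * t ^ h * M := by
      intro m
      have := (hD m (vort f m n) x t ht).trans (mul_le_mul_right (hfM m) _)
      rw [← ENNReal.ofReal_mul (hD0 m).le, ← ENNReal.ofReal_mul (mul_nonneg (hD0 m).le (by positivity)),
        Real.enorm_eq_ofReal_abs] at this
      exact (ENNReal.ofReal_le_ofReal_iff
        (mul_nonneg (mul_nonneg (hD0 m).le (by positivity)) hM)).1 this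
    have e2 : |∑ m, davg φ (∂_{ev k} (∂_{ev m} ψ)) (vort f m n) t x| ≤ S * t ^ h * M := by
      refine (Finset.abs_sum_le_sum_abs _ _).trans ((Finset.sum_le_sum fun m _ => e1 m).trans ?_)
      rw [← Finset.sum_mul, ← Finset.sum_mul]
    rw [abs_mul, abs_mul, abs_two, abs_of_pos (inv_pos.2 ht), Real.rpow_sub_one ht.ne']
    calc _ ≤ 2 * (t⁻¹ * (S * t ^ h * M)) := by gcongr
      _ = _ := by ring

/-- Components of a Schwartz vector field. -/
noncomputable def comps (v : 𝓢(Ed 3, Ed 3)) (n : Fin 3) : 𝓢(Ed 3, ℝ) :=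
  SchwartzMap.postcompCLM (𝕜 := ℝ) (EuclideanSpace.proj n : Ed 3 →L[ℝ] ℝ) v

lemma comps_apply (v : 𝓢(Ed 3, Ed 3)) (n : Fin 3) (x : Ed 3) : comps v n x = v x n := rfl

lemma pd_eq (v : 𝓢(Ed 3, Ed 3)) (m n : Fin 3) (x : Ed 3) :
    pd 3 m (fun y => v y n) x = (∂_{ev m} (comps v n)) x := by
  rw [SchwartzMap.lineDerivOp_apply_eq_fderiv]
  rfl

lemma fderiv_norm_le (v : 𝓢(Ed 3, Ed 3)) (x : Ed 3) (T : ℝ) (hT : 0 ≤ T)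
    (h : ∀ k n, |(∂_{ev k} (comps v n)) x| ≤ T) : ‖fderiv ℝ v x‖ ≤ 9 * T := by
  refine ContinuousLinearMap.opNorm_le_bound _ (by positivity) fun z => ?_
  have hcomp : ∀ n, (fderiv ℝ v x z) n = fderiv ℝ (comps v n) x z := by
    intro n
    have h1 := v.hasFDerivAt x
    have h2 : HasFDerivAt (comps v n) ((EuclideanSpace.proj n : Ed 3 →L[ℝ] ℝ) ∘L fderiv ℝ v x) x :=
      (EuclideanSpace.proj n : Ed 3 →L[ℝ] ℝ).hasFDerivAt.comp x h1
    rw [h2.fderiv]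
    rfl
  have hz : ∀ m, |z m| ≤ ‖z‖ := fun m => by simpa using PiLp.norm_apply_le z m
  have hn : ∀ n, |(fderiv ℝ v x z) n| ≤ 3 * T * ‖z‖ := by
    intro n
    rw [hcomp, dderiv_expand]
    refine (Finset.abs_sum_le_sum_abs _ _).trans ?_
    have : ∀ m ∈ Finset.univ, |z m * (∂_{ev m} (comps v n)) x| ≤ ‖z‖ * T := by
      intro m _
      rw [abs_mul]
      exact mul_le_mul (hz m) (h m n) (abs_nonneg _) (norm_nonneg _)
    refine (Finset.sum_le_sum this).trans (le_of_eq ?_)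
    simp; ring
  have hsum : fderiv ℝ v x z = ∑ n, (fderiv ℝ v x z) n • ev n := by
    ext i
    simp [ev, Pi.single_apply]
  rw [hsum]
  refine (norm_sum_le _ _).trans ?_
  have : ∀ n ∈ Finset.univ, ‖(fderiv ℝ v x z) n • ev n‖ ≤ 3 * T * ‖z‖ := by
    intro n _
    rw [norm_smul, ev]
    simpa using hn n
  refine (Finset.sum_le_sum this).trans (le_of_eq ?_)
  simp; ring

/-- For a divergence-free Schwartz vector field `v` on `ℝ³` with vorticity
components `ω^{mn} = ∂_m v^n − ∂_n v^m`, `0 < r < 1`, `2 ≤ p < ∞`, `h = r − 3/p > 0`: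
`‖∇v‖_∞` and `max ‖ω^{mn}‖_∞` are bounded by
`C ‖v‖₂^{h/(h+5/2)} (max [ω^{mn}]_{r,p})^{(5/2)/(h+5/2)}`. -/
theorem stmt12 (r p : ℝ) (hr0 : 0 < r) (hr1 : r < 1) (hp2 : 2 ≤ p)
    (hh : 0 < r - 3 / p) :
    ∃ C : ℝ, 0 < C ∧ ∀ v : SchwartzMap (Ed 3) (Ed 3),
      (∀ x, ∑ i : Fin 3, pd 3 i (fun y => v y i) x = 0) →
      ((⨆ x, (‖fderiv ℝ (⇑v) x‖₊ : ℝ≥0∞))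
          ≤ ENNReal.ofReal C *
              eLpNorm (⇑v) 2 volume ^ ((r - 3 / p) / (r - 3 / p + 5 / 2)) *
              (⨆ m : Fin 3, ⨆ n : Fin 3, gagliardo 3 r p
                  (fun x => pd 3 m (fun y => v y n) x - pd 3 n (fun y => v y m) x))
                ^ ((5 / 2) / (r - 3 / p + 5 / 2))) ∧
      ((⨆ m : Fin 3, ⨆ n : Fin 3, ⨆ x,
            (‖pd 3 m (fun y => v y n) x - pd 3 n (fun y => v y m) x‖₊ : ℝ≥0∞))
          ≤ ENNReal.ofReal C *
              eLpNorm (⇑v) 2 volume ^ ((r - 3 / p) / (r - 3 / p + 5 / 2)) *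
              (⨆ m : Fin 3, ⨆ n : Fin 3, gagliardo 3 r p
                  (fun x => pd 3 m (fun y => v y n) x - pd 3 n (fun y => v y m) x))
                ^ ((5 / 2) / (r - 3 / p + 5 / 2))) := by
  have hg := fun k n => grad_bound r p hr0 hp2 hh k n
  choose D hD0 hD using hg
  set S := ∑ k, ∑ n, D k n with hS
  have hS0 : 0 < S := Finset.sum_pos (fun k _ => Finset.sum_pos (fun n _ => hD0 k n)
    Finset.univ_nonempty) Finset.univ_nonempty
  have hDS : ∀ k n, D k n ≤ S := fun k n =>
    (Finset.single_le_sum (fun n _ => (hD0 k n).le) (Finset.mem_univ n)).trans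
      (Finset.single_le_sum (f := fun k => ∑ n, D k n)
        (fun k _ => Finset.sum_nonneg fun n _ => (hD0 k n).le) (Finset.mem_univ k))
  refine ⟨9 * S, by positivity, fun v hdiv => ?_⟩
  set f := comps v with hf
  set α := (r - 3 / p) / (r - 3 / p + 5 / 2) with hα
  set β := (5 / 2) / (r - 3 / p + 5 / 2) with hβ
  have hα0 : 0 < α := by positivity
  have hβ0 : 0 < β := by positivity
  have hv : ∀ m n, (fun x => pd 3 m (fun y => v y n) x - pd 3 n (fun y => v y m) x)
      = ⇑(vort f m n) := by
    intro m n; ext x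
    rw [pd_eq, pd_eq]; rfl
  have hv' : ∀ m n x, pd 3 m (fun y => v y n) x - pd 3 n (fun y => v y m) x
      = vort f m n x := fun m n x => congrFun (hv m n) x
  simp only [hv, hv']
  have hdiv' : ∑ m, ∂_{ev m} (f m) = 0 := by
    ext x
    have := hdiv x
    simp only [pd_eq] at this
    rw [Fin.sum_univ_three] at this ⊢
    simpa using this
  set M := ⨆ m : Fin 3, ⨆ n : Fin 3, gagliardo 3 r p (vort f m n) with hM
  set V := eLpNorm v 2 volume with hV
  have hVfin : V ≠ ∞ := (v.memLp 2 volume).2.ne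
  -- it suffices to bound all first derivatives
  have main : ∃ T : ℝ, 0 ≤ T ∧ (∀ k n x, |(∂_{ev k} (f n)) x| ≤ T) ∧
      ENNReal.ofReal (9 * T) ≤ ENNReal.ofReal (9 * S) * V ^ α * M ^ β := by
    by_cases hMt : M = ∞
    · by_cases hV0 : V = 0
      · have hv0 : ∀ x, v x = 0 := by
          have h1 := (eLpNorm_eq_zero_iff v.continuous.aestronglyMeasurable (by norm_num)).1 hV0
          have h2 := (Continuous.ae_eq_iff_eq (volume : Measure (Ed 3)) v.continuous
            continuous_const).1 h1
          exact fun x => congrFun h2 x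
        refine ⟨0, le_rfl, fun k n x => ?_, by simp⟩
        have : f n = 0 := by
          ext y; rw [hf, comps_apply, hv0]; rfl
        rw [this, lineDerivOp_zero]; simp
      · obtain ⟨T, hT⟩ : ∃ T : ℝ, ∀ k n x, |(∂_{ev k} (f n)) x| ≤ T := by
          have := fun k n => schwartz_bdd (∂_{ev k} (f n))
          choose T hT0 hT using this
          refine ⟨∑ k, ∑ n, T k n, fun k n x => (hT k n x).trans ?_⟩
          exact (Finset.single_le_sum (fun n _ => (hT0 k n)) (Finset.mem_univ n)).trans
            (Finset.single_le_sum (f := fun k => ∑ n, T k n)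
              (fun k _ => Finset.sum_nonneg fun n _ => (hT0 k n)) (Finset.mem_univ k))
        refine ⟨T, (abs_nonneg _).trans (hT 0 0 0), hT, ?_⟩
        rw [hMt, ENNReal.top_rpow_of_pos hβ0, ENNReal.mul_top]
        · exact le_top
        · refine mul_ne_zero (by simpa using hS0) ?_
          rw [Ne, ENNReal.rpow_eq_zero_iff]
          rintro (⟨h, -⟩ | ⟨h, -⟩)
          · exact hV0 h
          · exact hVfin h
    · refine ⟨S * (V.toReal ^ α * M.toReal ^ β), by positivity, fun k n x => ?_, ?_⟩
      · refine (hD k n f hdiv' V.toReal M.toReal toReal_nonneg toReal_nonneg ?_ ?_ x).trans ?_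
        · rw [ENNReal.ofReal_toReal hVfin]
          refine eLpNorm_mono fun y => ?_
          rw [hf, comps_apply]
          exact PiLp.norm_apply_le (v y) n
        · intro m
          rw [ENNReal.ofReal_toReal hMt]
          exact (le_iSup (fun n => gagliardo 3 r p (vort f m n)) n).trans
            (le_iSup (fun m => ⨆ n, gagliardo 3 r p (vort f m n)) m)
        · gcongr
          exact hDS k n
      · apply le_of_eq
        rw [← mul_assoc, ENNReal.ofReal_mul (by positivity),
          ENNReal.ofReal_mul (p := V.toReal ^ α) (by positivity),
          ← ENNReal.ofReal_rpow_of_nonneg toReal_nonneg hα0.le,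
          ← ENNReal.ofReal_rpow_of_nonneg toReal_nonneg hβ0.le,
          ENNReal.ofReal_toReal hVfin, ENNReal.ofReal_toReal hMt, ← mul_assoc]
  obtain ⟨T, hT0, hT, hTle⟩ := main
  constructor
  · refine iSup_le fun x => le_trans ?_ hTle
    rw [← enorm_eq_nnnorm, ← ofReal_norm]
    exact ENNReal.ofReal_le_ofReal (fderiv_norm_le v x T hT0 fun k n => hT k n x)
  · refine iSup_le fun m => iSup_le fun n => iSup_le fun x => le_trans ?_ hTle
    rw [← enorm_eq_nnnorm, ← ofReal_norm]
    refine ENNReal.ofReal_le_ofReal ?_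
    have : vort f m n x = (∂_{ev m} (f n)) x - (∂_{ev n} (f m)) x := rfl
    rw [this, Real.norm_eq_abs]
    refine (abs_sub _ _).trans ?_
    linarith [hT m n x, hT n m x]
end

section
/- Let 0 < r < 1 and 2 ≤ p < ∞ with h := r − 3/p > 0. There exists a constant C, depending only on r and p, such that for every Schwartz vector field v : ℝ³ → ℝ³ with div v = 0 and vorticity components ω^{mn} = ∂_m v^n − ∂_n v^m, one has ‖v‖_{L^∞} ≤ C · ‖v‖_{L²}^{(h+1)/(h+5/2)} · (max_{m,n} [ω^{mn}]_{r,p})^{(3/2)/(h+5/2)}. -/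
open MeasureTheory ENNReal
open scoped RealInnerProductSpace

theorem aux_sq (s : ℝ) : HasDerivAt (fun s : ℝ => (max 0 s) ^ 2) (2 * max 0 s) s := by
  rcases lt_trichotomy s 0 with h | h | h
  · have : (fun s : ℝ => (max 0 s) ^ 2) =ᶠ[nhds s] fun _ => 0 := by
      filter_upwards [gt_mem_nhds h] with a ha
      simp [max_eq_left ha.le]
    rw [max_eq_left h.le]
    simpa using (hasDerivAt_const s (0:ℝ)).congr_of_eventuallyEq this
  · subst h
    rw [hasDerivAt_iff_isLittleO]
    simp only [max_self, sub_zero, mul_zero, smul_zero, ne_eq, OfNat.ofNat_ne_zero,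
      not_false_eq_true, zero_pow]
    have h1 : (fun x : ℝ => (max 0 x) ^ 2) =O[nhds 0] fun x => x ^ 2 := by
      refine Asymptotics.IsBigO.of_bound 1 (Filter.Eventually.of_forall fun x => ?_)
      rw [one_mul, norm_pow, norm_pow]
      gcongr
      rw [Real.norm_eq_abs, Real.norm_eq_abs, abs_of_nonneg (le_max_left _ _)]
      exact max_le (abs_nonneg _) (le_abs_self _)
    exact h1.trans_isLittleO (Asymptotics.isLittleO_pow_id (by norm_num))
  · have : (fun s : ℝ => (max 0 s) ^ 2) =ᶠ[nhds s] fun s => s ^ 2 := by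
      filter_upwards [lt_mem_nhds h] with a ha
      simp [max_eq_right ha.le]
    rw [max_eq_right h.le]
    simpa using (hasDerivAt_pow 2 s).congr_of_eventuallyEq this

/-- The cutoff. -/
noncomputable def aphi (y : Ed 3) : ℝ := max 0 (1 - ‖y‖ ^ 2)

noncomputable def apsi (y : Ed 3) : ℝ := aphi y ^ 2

theorem aphi_cont : Continuous aphi := by unfold aphi; fun_prop

theorem apsi_cont : Continuous apsi := by unfold apsi; have := aphi_cont; fun_prop

theorem aphi_nonneg (y) : 0 ≤ aphi y := le_max_left _ _

theorem aphi_le (y) : aphi y ≤ 1 := by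
  unfold aphi; exact max_le (by norm_num) (by nlinarith [sq_nonneg ‖y‖])

theorem aphi_zero {y : Ed 3} (hy : y ∉ Metric.closedBall (0 : Ed 3) 1) : aphi y = 0 := by
  simp only [Metric.mem_closedBall, dist_zero_right, not_le] at hy
  unfold aphi; exact max_eq_left (by nlinarith)

theorem aphi_supp : HasCompactSupport aphi :=
  HasCompactSupport.intro (isCompact_closedBall (0 : Ed 3) 1) fun _ h => aphi_zero h

theorem apsi_supp : HasCompactSupport apsi :=
  HasCompactSupport.intro (isCompact_closedBall (0 : Ed 3) 1) fun _ h => by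
    simp [apsi, aphi_zero h]

theorem aphi_int_pos : 0 < ∫ y, aphi y := by
  refine aphi_cont.integral_pos_of_hasCompactSupport_nonneg_nonzero aphi_supp aphi_nonneg (x := 0) ?_
  simp [aphi]

theorem apsi_fderiv (y : Ed 3) :
    HasFDerivAt apsi ((2 * aphi y) • (-(2 • (innerSL ℝ y)) : Ed 3 →L[ℝ] ℝ)) y := by
  have h1 : HasFDerivAt (fun y : Ed 3 => 1 - ‖y‖ ^ 2) (-(2 • (innerSL ℝ y))) y := by
    simpa using (HasStrictFDerivAt.hasFDerivAt (hasStrictFDerivAt_norm_sq y)).const_sub 1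
  exact (aux_sq (1 - ‖y‖ ^ 2)).comp_hasFDerivAt y h1

theorem apsi_diff : Differentiable ℝ apsi := fun y => (apsi_fderiv y).differentiableAt

theorem apsi_pd (y : Ed 3) (m : Fin 3) :
    fderiv ℝ apsi y (EuclideanSpace.single m 1) = -4 * (aphi y * y m) := by
  rw [(apsi_fderiv y).fderiv]
  simp [EuclideanSpace.inner_single_right]
  ring

theorem ak_cont (m : Fin 3) : Continuous (fun y : Ed 3 => aphi y * y m) := by
  have := aphi_cont; fun_prop

theorem ak_supp (m : Fin 3) : HasCompactSupport (fun y : Ed 3 => aphi y * y m) :=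
  HasCompactSupport.intro (isCompact_closedBall (0 : Ed 3) 1) fun _ h => by
    simp [aphi_zero h]

theorem ak_le (m : Fin 3) (y : Ed 3) : ‖aphi y * y m‖ₑ ≤
    (Metric.closedBall (0 : Ed 3) 1).indicator (fun _ => 1) y := by
  by_cases hy : y ∈ Metric.closedBall (0 : Ed 3) 1
  · rw [Set.indicator_of_mem hy]
    rw [← ofReal_norm, ← ENNReal.ofReal_one]
    apply ENNReal.ofReal_le_ofReal
    rw [norm_mul, Real.norm_of_nonneg (aphi_nonneg y)]
    have h1 : ‖y m‖ ≤ 1 := (PiLp.norm_apply_le y m).trans (by simpa using hy)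
    exact mul_le_one₀ (aphi_le y) (norm_nonneg _) h1
  · rw [Set.indicator_of_notMem hy, aphi_zero hy]; simp

theorem ak_int (m : Fin 3) : ∫ y : Ed 3, aphi y * y m = 0 := by
  have h := integral_neg_eq_self (fun y : Ed 3 => aphi y * y m) volume
  have h2 : (fun y : Ed 3 => aphi (-y) * (-y) m) = fun y => -(aphi y * y m) := by
    funext y; simp [aphi]
  rw [h2, integral_neg] at h
  linarith

/-- scaling -/
theorem lint_scale (f : Ed 3 → ℝ≥0∞) (x : Ed 3) {t : ℝ} (ht : 0 < t) :
    ∫⁻ y, f (x + t • y) = ENNReal.ofReal ((t ^ 3)⁻¹) * ∫⁻ y, f y := by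
  have h0 := ht.ne'
  have h1 : ∫⁻ y, f (x + t • y) = ∫⁻ y, f (x + y) ∂(Measure.map (t • ·) volume) := by
    exact (lintegral_map_equiv (fun y => f (x + y)) (Homeomorph.smulOfNeZero t h0).toMeasurableEquiv).symm
  rw [h1, Measure.map_addHaar_smul _ h0, lintegral_smul_measure, lintegral_add_left_eq_self]
  simp [abs_of_pos ht]

theorem jensen {p : ℝ} (hp : 1 < p) (s : Set (Ed 3)) (f : Ed 3 → ℝ≥0∞) (hf : Measurable f) :
    (∫⁻ y in s, f y) ^ p ≤ volume s ^ (p - 1) * ∫⁻ y in s, f y ^ p := by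
  have hpq := (Real.HolderConjugate.conjExponent hp)
  have h := ENNReal.lintegral_mul_le_Lp_mul_Lq (volume.restrict s) hpq hf.aemeasurable
    (g := fun _ => 1) aemeasurable_const
  simp only [Pi.mul_apply, mul_one, ENNReal.one_rpow, lintegral_const, one_mul,
    Measure.restrict_apply_univ] at h
  have hp0 : 0 < p := by linarith
  calc _ ≤ _ := ENNReal.rpow_le_rpow h hp0.le
    _ = _ := by
      rw [ENNReal.mul_rpow_of_nonneg _ _ hp0.le, ← ENNReal.rpow_mul, ← ENNReal.rpow_mul, mul_comm]
      congr 1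
      · congr 1
        rw [Real.conjExponent]
        field_simp
      · rw [one_div_mul_cancel hp0.ne', ENNReal.rpow_one]

theorem morrey_pt {f : Ed 3 → ℝ} (hf : Continuous f) (m : Fin 3) (x : Ed 3) (t : ℝ) (z : Ed 3) :
    ‖∫ y, (aphi y * y m) * f (x + t • y)‖ₑ ≤
      ∫⁻ y in Metric.closedBall (0 : Ed 3) 1, ‖f (x + t • z) - f (x + t • y)‖ₑ := by
  have i1 : Integrable (fun y : Ed 3 => (aphi y * y m) * f (x + t • y)) :=
    ((ak_cont m).mul (by fun_prop)).integrable_of_hasCompactSupport (ak_supp m).mul_right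
  have i2 : Integrable (fun y : Ed 3 => (aphi y * y m) * f (x + t • z)) :=
    ((ak_cont m).mul (by fun_prop)).integrable_of_hasCompactSupport (ak_supp m).mul_right
  have h : ∫ y, (aphi y * y m) * f (x + t • y) =
      ∫ y, (aphi y * y m) * (f (x + t • y) - f (x + t • z)) := by
    simp only [mul_sub]
    rw [integral_sub i1 i2, integral_mul_const, ak_int]; simp
  rw [h]
  refine (enorm_integral_le_lintegral_enorm _).trans ?_
  rw [← lintegral_indicator Metric.isClosed_closedBall.measurableSet]
  refine lintegral_mono fun y => ?_
  rw [enorm_mul]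
  refine (mul_le_mul_left (ak_le m y) _).trans (le_of_eq ?_)
  by_cases hy : y ∈ Metric.closedBall (0 : Ed 3) 1
  · rw [Set.indicator_of_mem hy, Set.indicator_of_mem hy, one_mul, ← enorm_neg, neg_sub]
  · rw [Set.indicator_of_notMem hy, Set.indicator_of_notMem hy, zero_mul]

theorem morrey (r p : ℝ) (hr0 : 0 < r) (hp2 : 2 ≤ p) :
    ∃ K : ℝ, 0 < K ∧ ∀ (f : Ed 3 → ℝ), Continuous f → ∀ (m : Fin 3) (x : Ed 3) (t : ℝ), 0 < t →
      ‖∫ y, (aphi y * y m) * f (x + t • y)‖ₑ ≤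
        ENNReal.ofReal (K * t ^ (r - 3 / p)) * gagliardo 3 r p f := by
  set B := Metric.closedBall (0 : Ed 3) 1 with hB
  have hb0 : volume B ≠ 0 := (Metric.measure_closedBall_pos volume _ one_pos).ne'
  have hbt : volume B ≠ ⊤ := measure_closedBall_lt_top.ne
  obtain ⟨β, hβ, hβB⟩ : ∃ β : ℝ, 0 < β ∧ volume B = ENNReal.ofReal β :=
    ⟨(volume B).toReal, ENNReal.toReal_pos hb0 hbt, (ENNReal.ofReal_toReal hbt).symm⟩
  have hp0 : 0 < p := by linarith
  have hs : 0 < r * p + 3 := by positivity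
  refine ⟨(β ^ (p - 2) * 2 ^ (r * p + 3)) ^ (1 / p), by positivity, ?_⟩
  intro f hf m x t ht
  set I := ‖∫ y, (aphi y * y m) * f (x + t • y)‖ₑ with hI
  set G := ∫⁻ x, ∫⁻ y, (‖f x - f y‖₊ : ℝ≥0∞) ^ p / (‖x - y‖₊ : ℝ≥0∞) ^ (r * p + (3:ℕ)) with hG
  have h1 : ∀ z, I ^ p ≤ volume B ^ (p - 1) *
      ∫⁻ y in B, ‖f (x + t • z) - f (x + t • y)‖ₑ ^ p := fun z =>
    (ENNReal.rpow_le_rpow (morrey_pt hf m x t z) hp0.le).trans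
      (jensen (by linarith) B _ (Continuous.measurable (by fun_prop)))
  have h2 : ∀ z ∈ B, I ^ p ≤ volume B ^ (p - 1) * (ENNReal.ofReal ((2 * t) ^ (r * p + 3)) *
      ∫⁻ y, (‖f (x + t • z) - f (x + t • y)‖₊ : ℝ≥0∞) ^ p /
        (‖(x + t • z) - (x + t • y)‖₊ : ℝ≥0∞) ^ (r * p + (3:ℕ))) := by
    intro z hz
    refine (h1 z).trans ?_
    gcongr
    rw [← lintegral_const_mul' _ _ ENNReal.ofReal_ne_top]
    refine le_trans (setLIntegral_mono' Metric.isClosed_closedBall.measurableSet ?_)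
      (setLIntegral_le_lintegral B _)
    intro y hy
    by_cases hyz : z = y
    · subst hyz; simp [hp0]
    have hd : ‖x + t • z - (x + t • y)‖ ≤ 2 * t := by
      rw [add_sub_add_left_eq_sub, ← smul_sub, norm_smul, Real.norm_of_nonneg ht.le]
      have : ‖z - y‖ ≤ 1 + 1 := (norm_sub_le _ _).trans
        (add_le_add (by simpa [hB] using hz) (by simpa [hB] using hy))
      nlinarith
    have hd0 : 0 < ‖x + t • z - (x + t • y)‖ := by
      rw [add_sub_add_left_eq_sub, ← smul_sub, norm_smul, Real.norm_of_nonneg ht.le]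
      exact mul_pos ht (norm_pos_iff.2 (sub_ne_zero.2 hyz))
    have e1 : (‖x + t • z - (x + t • y)‖₊ : ℝ≥0∞) ^ (r * p + (3:ℕ)) =
        ENNReal.ofReal (‖x + t • z - (x + t • y)‖ ^ (r * p + 3)) := by
      rw [← ENNReal.ofReal_rpow_of_pos hd0, ofReal_norm]; norm_num [enorm]
    rw [e1, ← mul_div_assoc, ENNReal.le_div_iff_mul_le]
    · rw [mul_comm, ← enorm_eq_nnnorm]
      gcongr
    · left; simpa using Real.rpow_pos_of_pos hd0 _
    · left; exact ENNReal.ofReal_ne_top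
  have h3 : volume B * I ^ p ≤ volume B ^ (p - 1) * (ENNReal.ofReal ((2 * t) ^ (r * p + 3)) *
      (ENNReal.ofReal ((t ^ 3)⁻¹) * (ENNReal.ofReal ((t ^ 3)⁻¹) * G))) := by
    have hc : volume B * I ^ p = ∫⁻ z in B, I ^ p := by
      rw [setLIntegral_const, mul_comm]
    rw [hc]
    refine (setLIntegral_mono' Metric.isClosed_closedBall.measurableSet h2).trans ?_
    refine (setLIntegral_le_lintegral B _).trans ?_
    rw [lintegral_const_mul' _ _ (ENNReal.rpow_ne_top_of_nonneg (by linarith) hbt),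
      lintegral_const_mul' _ _ ENNReal.ofReal_ne_top]
    gcongr
    rw [hG]
    rw [← lint_scale (fun w => ∫⁻ y, (‖f w - f y‖₊ : ℝ≥0∞) ^ p /
      (‖w - y‖₊ : ℝ≥0∞) ^ (r * p + (3:ℕ))) x ht]
    rw [← lintegral_const_mul' _ _ ENNReal.ofReal_ne_top]
    refine lintegral_mono fun z => le_of_eq ?_
    exact lint_scale (fun w => (‖f (x + t • z) - f w‖₊ : ℝ≥0∞) ^ p /
      (‖(x + t • z) - w‖₊ : ℝ≥0∞) ^ (r * p + (3:ℕ))) x ht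
  have h4 : I ^ p ≤ ENNReal.ofReal (β ^ (p - 2) * 2 ^ (r * p + 3) * t ^ (r * p - 3)) * G := by
    rw [← ENNReal.mul_le_mul_iff_right hb0 hbt]
    refine h3.trans (le_of_eq ?_)
    rw [hβB, ENNReal.ofReal_rpow_of_pos hβ]
    simp only [← mul_assoc]
    rw [← ENNReal.ofReal_mul (by positivity), ← ENNReal.ofReal_mul (by positivity),
      ← ENNReal.ofReal_mul (by positivity), ← ENNReal.ofReal_mul (by positivity)]
    congr 2
    have e1 : β ^ (p - 1) = β * β ^ (p - 2) := by
      rw [← Real.rpow_one_add' hβ.le (by linarith)]; congr 1; ring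
    have e2 : t ^ (r * p + 3) = t ^ (r * p - 3) * (t ^ 3 * t ^ 3) := by
      rw [← pow_add, ← Real.rpow_natCast, ← Real.rpow_add ht]; congr 1; push_cast; ring
    rw [e1, Real.mul_rpow (by norm_num) ht.le, e2]
    field_simp
  have h5 := ENNReal.rpow_le_rpow h4 (one_div_nonneg.2 hp0.le)
  rw [← ENNReal.rpow_mul, mul_one_div_cancel hp0.ne', ENNReal.rpow_one,
    ENNReal.mul_rpow_of_nonneg _ _ (one_div_nonneg.2 hp0.le),
    ENNReal.ofReal_rpow_of_pos (by positivity), Real.mul_rpow (by positivity) (by positivity),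
    ← Real.rpow_mul ht.le] at h5
  have e : (r * p - 3) * (1 / p) = r - 3 / p := by field_simp
  rw [e] at h5
  exact h5

theorem l2bd {g : Ed 3 → ℝ} {v : Ed 3 → Ed 3} (hv : Continuous v)
    (hgv : ∀ y, ‖g y‖ₑ ≤ ‖v y‖ₑ) (x : Ed 3) (t : ℝ) (ht : 0 < t) :
    ‖∫ y, aphi y * g (x + t • y)‖ₑ ≤
      volume (Metric.closedBall (0 : Ed 3) 1) ^ (1 / 2 : ℝ) *
        (ENNReal.ofReal (t ^ (-(3 / 2) : ℝ)) * eLpNorm v 2 volume) := by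
  set B := Metric.closedBall (0 : Ed 3) 1 with hB
  have h0 : ‖∫ y, aphi y * g (x + t • y)‖ₑ ≤ ∫⁻ y in B, ‖v (x + t • y)‖ₑ := by
    refine (enorm_integral_le_lintegral_enorm _).trans ?_
    rw [← lintegral_indicator Metric.isClosed_closedBall.measurableSet]
    refine lintegral_mono fun y => ?_
    by_cases hy : y ∈ B
    · rw [Set.indicator_of_mem hy, enorm_mul]
      have hc : ‖aphi y‖ₑ * ‖g (x + t • y)‖ₑ ≤ 1 * ‖v (x + t • y)‖ₑ := by
        refine mul_le_mul' ?_ (hgv _)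
        rw [← ofReal_norm, Real.norm_of_nonneg (aphi_nonneg y)]
        exact ENNReal.ofReal_le_one.2 (aphi_le y)
      simpa using hc
    · rw [aphi_zero hy]; simp
  have h1 := (ENNReal.rpow_le_rpow h0 (z := 2) (by norm_num)).trans
    (jensen (p := 2) (by norm_num) B (fun y => ‖v (x + t • y)‖ₑ) (Continuous.measurable (by fun_prop)))
  have h2 := h1.trans (mul_le_mul_right (setLIntegral_le_lintegral B _) _)
  rw [lint_scale (fun w => ‖v w‖ₑ ^ (2:ℝ)) x ht] at h2
  have h3 := ENNReal.rpow_le_rpow h2 (z := 1 / 2) (by norm_num)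
  rw [← ENNReal.rpow_mul, ENNReal.mul_rpow_of_nonneg _ _ (by norm_num),
    ENNReal.mul_rpow_of_nonneg _ _ (by norm_num), ENNReal.ofReal_rpow_of_pos (by positivity),
    ← ENNReal.rpow_mul] at h3
  rw [eLpNorm_eq_lintegral_rpow_enorm_toReal (by norm_num) (by norm_num)]
  have e : ((t ^ 3)⁻¹) ^ (1 / 2 : ℝ) = t ^ (-(3 / 2) : ℝ) := by
    rw [← Real.rpow_natCast, ← Real.rpow_neg ht.le, ← Real.rpow_mul ht.le]; norm_num
  rw [e] at h3
  norm_num at h3 ⊢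
  exact h3

theorem deriv_A {g : Ed 3 → ℝ} (hg : ContDiff ℝ 2 g) {M : ℝ} (hM : ∀ x, ‖fderiv ℝ g x‖ ≤ M)
    (x : Ed 3) (t : ℝ) :
    HasDerivAt (fun t : ℝ => ∫ y, aphi y * g (x + t • y))
      (∫ y, aphi y * fderiv ℝ g (x + t • y) y) t := by
  have hc := aphi_cont
  have hgc := hg.continuous
  have hgd : Continuous (fderiv ℝ g) := hg.continuous_fderiv (by norm_num)
  refine (hasDerivAt_integral_of_dominated_loc_of_deriv_le
    (F := fun (t : ℝ) y => aphi y * g (x + t • y))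
    (F' := fun (t : ℝ) y => aphi y * fderiv ℝ g (x + t • y) y)
    (bound := fun y => aphi y * (M * ‖y‖)) (s := Set.univ) Filter.univ_mem ?_ ?_ ?_ ?_ ?_ ?_).2
  · exact Filter.Eventually.of_forall fun s => Continuous.aestronglyMeasurable (by fun_prop)
  · exact Continuous.integrable_of_hasCompactSupport (by fun_prop) aphi_supp.mul_right
  · exact Continuous.aestronglyMeasurable (by fun_prop)
  · refine Filter.Eventually.of_forall fun y s _ => ?_
    rw [norm_mul, Real.norm_of_nonneg (aphi_nonneg y)]
    refine mul_le_mul_of_nonneg_left ?_ (aphi_nonneg y)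
    exact (ContinuousLinearMap.le_opNorm _ _).trans
      (mul_le_mul_of_nonneg_right (hM _) (norm_nonneg _))
  · exact Continuous.integrable_of_hasCompactSupport (by fun_prop) aphi_supp.mul_right
  · refine Filter.Eventually.of_forall fun y s _ => ?_
    have h1 : HasDerivAt (fun s : ℝ => x + s • y) y s := by
      simpa using ((hasDerivAt_id s).smul_const y).const_add x
    exact ((hg.differentiable (by norm_num) _).hasFDerivAt.comp_hasDerivAt s h1).const_mul _

theorem pd_cd {g : Ed 3 → ℝ} (hg : ContDiff ℝ 2 g) (m : Fin 3) : ContDiff ℝ 1 (pd 3 m g) := by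
  unfold pd
  exact (hg.fderiv_right (m := 1) (by norm_num)).clm_apply contDiff_const

theorem pd_comm {g : Ed 3 → ℝ} (hg : ContDiff ℝ 2 g) (m n : Fin 3) (x : Ed 3) :
    pd 3 m (pd 3 n g) x = pd 3 n (pd 3 m g) x := by
  have h := (hg.contDiffAt (x := x)).isSymmSndFDerivAt (by simp)
  have hd : DifferentiableAt ℝ (fderiv ℝ g) x :=
    ((hg.fderiv_right (m := 1) (by norm_num)).differentiable (by norm_num)) x
  have key : ∀ a b : Fin 3, pd 3 a (pd 3 b g) x =
      fderiv ℝ (fderiv ℝ g) x (EuclideanSpace.single a 1) (EuclideanSpace.single b 1) := by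
    intro a b
    unfold pd
    rw [fderiv_clm_apply hd (differentiableAt_const _)]
    simp
  rw [key, key]
  exact h _ _

theorem clm_coord_sum (L : Ed 3 →L[ℝ] ℝ) (y : Ed 3) :
    L y = ∑ m : Fin 3, y m * L (EuclideanSpace.single m 1) := by
  have h : y = ∑ m : Fin 3, y m • EuclideanSpace.single m (1:ℝ) := by
    ext i; fin_cases i <;> simp [Fin.sum_univ_three]
  conv_lhs => rw [h]
  simp

theorem ibp {g : Ed 3 → ℝ} (hg : ContDiff ℝ 1 g) (m : Fin 3) (x : Ed 3) (t : ℝ) :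
    4 * ∫ y, (aphi y * y m) * g (x + t • y) = t * ∫ y, apsi y * pd 3 m g (x + t • y) := by
  have hgc := hg.continuous
  have hgd : Continuous (fderiv ℝ g) := hg.continuous_fderiv (by norm_num)
  have hps := apsi_cont
  have hd : ∀ y, HasFDerivAt (fun y => g (x + t • y)) (t • fderiv ℝ g (x + t • y)) y := by
    intro y
    have h1 : HasFDerivAt (fun y : Ed 3 => x + t • y) (t • ContinuousLinearMap.id ℝ (Ed 3)) y :=
      ((hasFDerivAt_id y).const_smul t).const_add x
    convert! (hg.differentiable (by norm_num) _).hasFDerivAt.comp y h1 using 1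
    ext w; simp
  have h := integral_mul_fderiv_eq_neg_fderiv_mul_of_integrable (μ := volume) (f := apsi)
    (g := fun y => g (x + t • y)) (v := EuclideanSpace.single m (1:ℝ)) ?_ ?_ ?_
    (fun y _ => apsi_diff y) (fun y _ => (hd y).differentiableAt)
  · simp only [apsi_pd, (hd _).fderiv] at h
    simp only [smul_apply, smul_eq_mul] at h
    have e1 : ∀ y : Ed 3, -4 * (aphi y * y m) * g (x + t • y) =
      -4 * ((aphi y * y m) * g (x + t • y)) := fun y => by ring
    have e2 : ∀ y : Ed 3, apsi y * (t * fderiv ℝ g (x + t • y) (EuclideanSpace.single m 1)) =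
      t * (apsi y * pd 3 m g (x + t • y)) := fun y => by unfold pd; ring
    simp only [e1, e2] at h
    rw [integral_const_mul, integral_const_mul] at h
    rw [h]; ring
  · simp only [apsi_pd]
    refine Continuous.integrable_of_hasCompactSupport ?_ ?_
    · have := ak_cont m; fun_prop
    · exact ((ak_supp m).mul_left (f := fun _ => (-4:ℝ))).mul_right
  · simp only [(hd _).fderiv]
    exact Continuous.integrable_of_hasCompactSupport (by fun_prop) apsi_supp.mul_right
  · exact Continuous.integrable_of_hasCompactSupport (by fun_prop) apsi_supp.mul_right

theorem derivA_eq {u : Fin 3 → Ed 3 → ℝ} (hu : ∀ n, ContDiff ℝ 2 (u n))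
    (hdiv : ∀ x, ∑ i : Fin 3, pd 3 i (u i) x = 0) (n : Fin 3) (x : Ed 3) (t : ℝ) :
    ∫ y, aphi y * fderiv ℝ (u n) (x + t • y) y =
      ∑ m : Fin 3, ∫ y, (aphi y * y m) * (pd 3 m (u n) (x + t • y) - pd 3 n (u m) (x + t • y)) := by
  have hint : ∀ m a (b : Fin 3), Integrable
      (fun y : Ed 3 => (aphi y * y m) * pd 3 a (u b) (x + t • y)) := by
    intro m a b
    have h1 := (pd_cd (hu b) a).continuous
    have h2 := ak_cont m
    exact Continuous.integrable_of_hasCompactSupport (by fun_prop) (ak_supp m).mul_right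
  have h1 : ∀ y : Ed 3, aphi y * fderiv ℝ (u n) (x + t • y) y =
      ∑ m : Fin 3, (aphi y * y m) * pd 3 m (u n) (x + t • y) := by
    intro y
    rw [clm_coord_sum _ y, Finset.mul_sum]
    refine Finset.sum_congr rfl fun m _ => ?_
    unfold pd; ring
  have h2 : ∑ m : Fin 3, ∫ y, (aphi y * y m) * pd 3 n (u m) (x + t • y) = 0 := by
    have h3 : ∑ m : Fin 3, (4 * ∫ y, (aphi y * y m) * pd 3 n (u m) (x + t • y)) = 0 := by
      simp only [fun m => ibp (pd_cd (hu m) n) m x t]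
      rw [← Finset.mul_sum, ← integral_finsetSum]
      · have h4 : ∀ w, ∑ m : Fin 3, pd 3 m (pd 3 n (u m)) w = 0 := by
          intro w
          simp only [fun m => pd_comm (hu m) m n w]
          have h5 : fderiv ℝ (fun x => ∑ m : Fin 3, pd 3 m (u m) x) w = 0 := by
            have : (fun x => ∑ m : Fin 3, pd 3 m (u m) x) = fun _ => 0 := funext hdiv
            rw [this]; simp
          rw [fderiv_fun_sum (fun m _ => (pd_cd (hu m) m).differentiable (by norm_num) w)] at h5
          have h6 := congrArg (fun L => L (EuclideanSpace.single n (1:ℝ))) h5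
          simpa [pd] using h6
        simp only [← Finset.mul_sum, h4]
        simp
      · intro m _
        have h1 : Continuous (pd 3 m (pd 3 n (u m))) := by
          have := (pd_cd (hu m) n).continuous_fderiv (by norm_num)
          unfold pd at this ⊢
          fun_prop
        have := apsi_cont
        exact Continuous.integrable_of_hasCompactSupport (by fun_prop) apsi_supp.mul_right
    rw [← Finset.mul_sum] at h3
    linarith
  simp only [h1, mul_sub]
  rw [integral_finsetSum _ (fun m _ => hint m m n)]
  simp only [fun m => integral_sub (hint m m n) (hint m n m)]
  rw [Finset.sum_sub_distrib, h2, sub_zero]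

/-- Real-valued key estimate. -/
theorem key_est (r p : ℝ) (hr0 : 0 < r) (hp2 : 2 ≤ p) (hh : 0 < r - 3 / p) :
    ∃ K : ℝ, 0 < K ∧ ∀ v : SchwartzMap (Ed 3) (Ed 3),
      (∀ x, ∑ i : Fin 3, pd 3 i (fun y => v y i) x = 0) → ∀ N W : ℝ, 0 ≤ N → 0 ≤ W →
      eLpNorm (⇑v) 2 volume ≤ ENNReal.ofReal N →
      (∀ m n : Fin 3, gagliardo 3 r p
        (fun x => pd 3 m (fun y => v y n) x - pd 3 n (fun y => v y m) x) ≤ ENNReal.ofReal W) →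
      ∀ x R, 0 < R → ‖v x‖ ≤ K * (R ^ (-(3 / 2) : ℝ) * N + R ^ (r - 3 / p + 1) * W) := by
  obtain ⟨K, hK, hKm⟩ := morrey r p hr0 hp2
  set h := r - 3 / p with hh_def
  set c := ∫ y, aphi y with hc
  have hc0 : 0 < c := aphi_int_pos
  set b := ((volume (Metric.closedBall (0 : Ed 3) 1)) ^ (1 / 2 : ℝ)).toReal with hb
  have hbt : (volume (Metric.closedBall (0 : Ed 3) 1)) ^ (1 / 2 : ℝ) ≠ ⊤ :=
    ENNReal.rpow_ne_top_of_nonneg (by norm_num) measure_closedBall_lt_top.ne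
  have hb0 : 0 ≤ b := ENNReal.toReal_nonneg
  refine ⟨3 * (c⁻¹ * (b + 3 * K)), by positivity, ?_⟩
  intro v hdiv N W hN hW hvN hvW x R hR
  have hu : ∀ n : Fin 3, ContDiff ℝ 2 (fun y => v y n) := fun n => by
    have := v.smooth 2
    exact ((EuclideanSpace.proj n : Ed 3 →L[ℝ] ℝ)).contDiff.comp this
  obtain ⟨M, hM⟩ : ∃ M, ∀ x, ‖fderiv ℝ v x‖ ≤ M := by
    obtain ⟨C, hC⟩ := v.decay 0 1
    exact ⟨C, fun x => by simpa [norm_iteratedFDeriv_one] using hC.2 x⟩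
  have hMn : ∀ (n : Fin 3) x, ‖fderiv ℝ (fun y => v y n) x‖ ≤
      ‖(EuclideanSpace.proj n : Ed 3 →L[ℝ] ℝ)‖ * M := by
    intro n x
    have : HasFDerivAt (fun y => v y n)
        (((EuclideanSpace.proj n : Ed 3 →L[ℝ] ℝ)).comp (fderiv ℝ v x)) x :=
      ((EuclideanSpace.proj n : Ed 3 →L[ℝ] ℝ)).hasFDerivAt.comp x
        v.differentiableAt.hasFDerivAt
    rw [this.fderiv]
    exact (ContinuousLinearMap.opNorm_comp_le _ _).trans
      (mul_le_mul_of_nonneg_left (hM x) (norm_nonneg _))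
  have hcomp : ∀ n : Fin 3, ‖v x n‖ ≤ c⁻¹ * (b + 3 * K) *
      (R ^ (-(3 / 2) : ℝ) * N + R ^ (h + 1) * W) := by
    intro n
    set A : ℝ → ℝ := fun t => ∫ y, aphi y * v (x + t • y) n with hA
    have hder : ∀ t, HasDerivAt A (∑ m : Fin 3, ∫ y, (aphi y * y m) *
        (pd 3 m (fun y => v y n) (x + t • y) - pd 3 n (fun y => v y m) (x + t • y))) t := by
      intro t
      have := deriv_A (hu n) (hMn n) x t
      rwa [derivA_eq (u := fun n y => v y n) hu hdiv n x t] at this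
    have hcontA : Continuous A :=
      continuous_iff_continuousAt.2 fun t => (hder t).continuousAt
    have hA0 : A 0 = c * v x n := by
      simp [hA, hc, integral_mul_const]
    have hAR : ‖A R‖ ≤ b * (R ^ (-(3 / 2) : ℝ) * N) := by
      have h1 := l2bd (g := fun y => v y n) (v := v) v.continuous (fun y => by
        rw [enorm_le_iff_norm_le]; exact PiLp.norm_apply_le (v y) n) x R hR
      rw [← toReal_enorm]
      refine ENNReal.toReal_le_of_le_ofReal (by positivity) (h1.trans ?_)
      rw [ENNReal.ofReal_mul hb0, ENNReal.ofReal_mul (by positivity), hb,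
        ENNReal.ofReal_toReal hbt]
      gcongr
    have hbound : ∀ t, 0 ≤ t → ‖∑ m : Fin 3, ∫ y, (aphi y * y m) *
        (pd 3 m (fun y => v y n) (x + t • y) - pd 3 n (fun y => v y m) (x + t • y))‖ ≤
        3 * K * W * t ^ h := by
      intro t ht
      have h1 : ∀ m : Fin 3, ‖∫ y, (aphi y * y m) *
        (pd 3 m (fun y => v y n) (x + t • y) - pd 3 n (fun y => v y m) (x + t • y))‖ ≤
        K * W * t ^ h := by
        intro m
        rcases ht.eq_or_lt with h0 | h0
        · subst h0
          simp only [zero_smul, add_zero]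
          rw [integral_mul_const, ak_int]
          simp only [zero_mul, norm_zero]
          positivity
        · have hcont : Continuous (fun w => pd 3 m (fun y => v y n) w - pd 3 n (fun y => v y m) w) :=
            (pd_cd (hu n) m).continuous.sub (pd_cd (hu m) n).continuous
          have h2 := hKm _ hcont m x t h0
          rw [← toReal_enorm]
          refine ENNReal.toReal_le_of_le_ofReal (by positivity) (h2.trans ?_)
          have e : K * W * t ^ h = (K * t ^ h) * W := by ring
          rw [e, ENNReal.ofReal_mul (p := K * t ^ h) (by positivity)]
          exact mul_le_mul_right (hvW m n) _
      refine (norm_sum_le _ _).trans ((Finset.sum_le_sum fun m _ => h1 m).trans (le_of_eq ?_))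
      simp; ring
    have hfin : ‖A R - A 0‖ ≤ 3 * K * W * (R ^ (h + 1) / (h + 1)) := by
      refine image_norm_le_of_norm_deriv_right_le_deriv_boundary (a := 0) (b := R)
        (f := fun t => A t - A 0) (B := fun t => 3 * K * W * (t ^ (h + 1) / (h + 1)))
        (B' := fun t => 3 * K * W * t ^ h)
        (by fun_prop) (fun t _ => ((hder t).sub_const _).hasDerivWithinAt) ?_ ?_
        (fun t ht => hbound t ht.1) (Set.right_mem_Icc.2 hR.le)
      · simp [Real.zero_rpow (by positivity : h + 1 ≠ 0)]
      · intro t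
        have := ((Real.hasDerivAt_rpow_const (x := t) (p := h + 1) (Or.inr (by linarith))).div_const
          (h + 1)).const_mul (3 * K * W)
        convert! this using 1
        have : h + 1 ≠ 0 := by positivity
        rw [add_sub_cancel_right]
        field_simp
    have hle : R ^ (h + 1) / (h + 1) ≤ R ^ (h + 1) :=
      div_le_self (by positivity) (by linarith)
    have h3 : c * ‖v x n‖ ≤ b * (R ^ (-(3 / 2) : ℝ) * N) + 3 * K * W * R ^ (h + 1) := by
      have : c * ‖v x n‖ = ‖A R - (A R - A 0)‖ := by
        rw [_root_.sub_sub_cancel, hA0, norm_mul, Real.norm_of_nonneg hc0.le]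
      rw [this]
      refine (norm_sub_le _ _).trans (add_le_add hAR (hfin.trans ?_))
      gcongr
    have hX : 0 ≤ R ^ (-(3 / 2) : ℝ) * N := by positivity
    have hY : 0 ≤ R ^ (h + 1) * W := by positivity
    have h4 : c * ‖v x n‖ ≤ (b + 3 * K) * (R ^ (-(3 / 2) : ℝ) * N + R ^ (h + 1) * W) := by
      nlinarith [mul_nonneg hb0 hY, mul_nonneg hK.le hX]
    rw [mul_assoc, ← div_eq_inv_mul, le_div_iff₀ hc0, mul_comm]
    exact h4
  have hsum : ‖v x‖ ≤ ∑ n : Fin 3, ‖v x n‖ := by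
    rw [EuclideanSpace.norm_eq]
    apply Real.sqrt_le_iff.2 ⟨by positivity, Finset.sum_sq_le_sq_sum_of_nonneg (fun _ _ => norm_nonneg _)⟩
  refine hsum.trans ((Finset.sum_le_sum fun n _ => hcomp n).trans (le_of_eq ?_))
  simp; ring

theorem opt_est {h N W : ℝ} (hh : 0 < h) (hN : 0 < N) (hW : 0 < W) :
    ∃ R : ℝ, 0 < R ∧ R ^ (-(3 / 2) : ℝ) * N + R ^ (h + 1) * W =
      2 * (N ^ ((h + 1) / (h + 5 / 2)) * W ^ ((3 / 2) / (h + 5 / 2))) := by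
  have hd : h + 5 / 2 ≠ 0 := by positivity
  refine ⟨(N / W) ^ (1 / (h + 5 / 2)), by positivity, ?_⟩
  rw [← Real.rpow_mul (by positivity), ← Real.rpow_mul (by positivity),
    Real.div_rpow hN.le hW.le, Real.div_rpow hN.le hW.le]
  have e1 : N ^ (1 / (h + 5 / 2) * -(3 / 2)) * N = N ^ ((h + 1) / (h + 5 / 2)) := by
    rw [← Real.rpow_add_one hN.ne']; congr 1; field_simp; ring
  have e2 : W ^ ((3 / 2) / (h + 5 / 2)) * W ^ (1 / (h + 5 / 2) * -(3 / 2)) = 1 := by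
    rw [← Real.rpow_add hW]
    rw [show (3 / 2) / (h + 5 / 2) + 1 / (h + 5 / 2) * -(3 / 2) = 0 by ring, Real.rpow_zero]
  have e3 : W ^ ((3 / 2) / (h + 5 / 2)) * W ^ (1 / (h + 5 / 2) * (h + 1)) = W := by
    rw [← Real.rpow_add hW]
    rw [show (3 / 2) / (h + 5 / 2) + 1 / (h + 5 / 2) * (h + 1) = 1 by field_simp; ring,
      Real.rpow_one]
  have e4 : 1 / (h + 5 / 2) * (h + 1) = (h + 1) / (h + 5 / 2) := by ring
  have p1 : 0 < W ^ (1 / (h + 5 / 2) * -(3 / 2)) := by positivity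
  have p2 : 0 < W ^ (1 / (h + 5 / 2) * (h + 1)) := by positivity
  have t1 : N ^ (1 / (h + 5 / 2) * -(3 / 2)) / W ^ (1 / (h + 5 / 2) * -(3 / 2)) * N =
      N ^ ((h + 1) / (h + 5 / 2)) * W ^ ((3 / 2) / (h + 5 / 2)) := by
    rw [div_mul_eq_mul_div, e1, div_eq_iff p1.ne', mul_assoc, e2, mul_one]
  have t2 : N ^ (1 / (h + 5 / 2) * (h + 1)) / W ^ (1 / (h + 5 / 2) * (h + 1)) * W =
      N ^ ((h + 1) / (h + 5 / 2)) * W ^ ((3 / 2) / (h + 5 / 2)) := by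
    rw [div_mul_eq_mul_div, div_eq_iff p2.ne', mul_assoc, e3, e4]
  rw [t1, t2]; ring

/-- For a divergence-free Schwartz vector field `v` on `ℝ³`, `0 < r < 1`,
`2 ≤ p < ∞`, `h = r − 3/p > 0`:
`‖v‖_∞ ≤ C ‖v‖₂^{(h+1)/(h+5/2)} (max [ω^{mn}]_{r,p})^{(3/2)/(h+5/2)}`. -/
theorem stmt13 (r p : ℝ) (hr0 : 0 < r) (hr1 : r < 1) (hp2 : 2 ≤ p)
    (hh : 0 < r - 3 / p) :
    ∃ C : ℝ, 0 < C ∧ ∀ v : SchwartzMap (Ed 3) (Ed 3),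
      (∀ x, ∑ i : Fin 3, pd 3 i (fun y => v y i) x = 0) →
      (⨆ x, (‖v x‖₊ : ℝ≥0∞))
        ≤ ENNReal.ofReal C *
            eLpNorm (⇑v) 2 volume ^ ((r - 3 / p + 1) / (r - 3 / p + 5 / 2)) *
            (⨆ m : Fin 3, ⨆ n : Fin 3, gagliardo 3 r p
                (fun x => pd 3 m (fun y => v y n) x - pd 3 n (fun y => v y m) x))
              ^ ((3 / 2) / (r - 3 / p + 5 / 2)) := by
  obtain ⟨K, hK, hKv⟩ := key_est r p hr0 hp2 hh
  set h := r - 3 / p with hhd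
  have hα : 0 < (h + 1) / (h + 5 / 2) := by positivity
  have hβ : 0 < (3 / 2) / (h + 5 / 2) := by positivity
  refine ⟨K * 2, by positivity, ?_⟩
  intro v hdiv
  set G := ⨆ m : Fin 3, ⨆ n : Fin 3, gagliardo 3 r p
    (fun x => pd 3 m (fun y => v y n) x - pd 3 n (fun y => v y m) x) with hG
  have hNt : eLpNorm (⇑v) 2 volume ≠ ⊤ := (v.memLp 2 volume).eLpNorm_lt_top.ne
  by_cases hN0 : eLpNorm (⇑v) 2 volume = 0
  · have hv0 : (v : Ed 3 → Ed 3) = 0 := by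
      rw [eLpNorm_eq_zero_iff v.continuous.aestronglyMeasurable (by norm_num)] at hN0
      exact (v.continuous.ae_eq_iff_eq volume continuous_zero).1 hN0
    have : ∀ x, v x = 0 := fun x => congrFun hv0 x
    simp [this]
  by_cases hGt : G = ⊤
  · rw [hGt, ENNReal.top_rpow_of_pos hβ, ENNReal.mul_top]
    · exact le_top
    · refine mul_ne_zero (by simpa using hK) ?_
      rw [Ne, ENNReal.rpow_eq_zero_iff]
      rintro (⟨h1, -⟩ | ⟨h1, -⟩)
      · exact hN0 h1
      · exact hNt h1
  refine iSup_le fun x => ?_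
  set N := (eLpNorm (⇑v) 2 volume).toReal with hN
  have hNp : 0 < N := ENNReal.toReal_pos hN0 hNt
  have hNe : eLpNorm (⇑v) 2 volume = ENNReal.ofReal N := (ENNReal.ofReal_toReal hNt).symm
  have hGe : G = ENNReal.ofReal G.toReal := (ENNReal.ofReal_toReal hGt).symm
  have hG0 : 0 ≤ G.toReal := ENNReal.toReal_nonneg
  have main : ∀ W, G.toReal < W → ‖v x‖ ≤
      K * (2 * (N ^ ((h + 1) / (h + 5 / 2)) * W ^ ((3 / 2) / (h + 5 / 2)))) := by
    intro W hW
    obtain ⟨R, hR, hRe⟩ := opt_est hh hNp (hG0.trans_lt hW)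
    rw [← hRe]
    refine hKv v hdiv N W hNp.le (hG0.trans hW.le) hNe.le (fun m n => ?_) x R hR
    refine le_trans ?_ (hGe.le.trans (ENNReal.ofReal_le_ofReal hW.le))
    exact le_iSup₂ (f := fun m n : Fin 3 => gagliardo 3 r p
      (fun x => pd 3 m (fun y => v y n) x - pd 3 n (fun y => v y m) x)) m n
  have lim : ‖v x‖ ≤
      K * (2 * (N ^ ((h + 1) / (h + 5 / 2)) * G.toReal ^ ((3 / 2) / (h + 5 / 2)))) := by
    have hc : Continuous fun W : ℝ =>
        K * (2 * (N ^ ((h + 1) / (h + 5 / 2)) * W ^ ((3 / 2) / (h + 5 / 2)))) := by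
      have := Real.continuous_rpow_const hβ.le
      fun_prop
    refine ge_of_tendsto (hc.continuousAt.tendsto.mono_left
      (nhdsWithin_le_nhds (s := Set.Ioi G.toReal))) ?_
    filter_upwards [self_mem_nhdsWithin] with W hW using main W hW
  rw [hNe, hGe, ENNReal.ofReal_rpow_of_pos hNp, ENNReal.ofReal_rpow_of_nonneg hG0 hβ.le,
    ← ENNReal.ofReal_mul (by positivity), ← ENNReal.ofReal_mul (by positivity),
    ← enorm_eq_nnnorm, ← ofReal_norm]
  refine ENNReal.ofReal_le_ofReal (lim.trans (le_of_eq ?_))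
  ring
end

section
/- Let θ > 1/2. There exists a constant C, depending only on θ, such that for every Schwartz vector field v : ℝ³ → ℝ³ with div v = 0 and vorticity components ω^{mn} = ∂_m v^n − ∂_n v^m, one has ‖v‖_{L^∞} ≤ C · ‖v‖_{L²}^{(θ−1/2)/(θ+1)} · (max_{m,n} [ω^{mn}]_θ)^{(3/2)/(θ+1)}. -/
open MeasureTheory ENNReal
open scoped RealInnerProductSpace

section Helpers
open FourierTransform SchwartzMap LineDeriv

lemma lint_smul (R : ℝ) (hR : 0 < R) (f : Ed 3 → ℝ≥0∞) :
    ∫⁻ x, f (R • x) = ENNReal.ofReal ((R ^ 3)⁻¹) * ∫⁻ x, f x := by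
  have h1 := (Homeomorph.smulOfNeZero R hR.ne' (α := Ed 3)).measurableEmbedding.lintegral_map
    (μ := volume) f
  have h2 := Measure.map_addHaar_smul (volume : Measure (Ed 3)) hR.ne'
  have h3 : (⇑(Homeomorph.smulOfNeZero R hR.ne' (α := Ed 3))) = (R • ·) := rfl
  rw [h3, h2, lintegral_smul_measure] at h1
  rw [← h1]
  simp [abs_of_pos hR]

lemma core_ineq (s : ℝ) (hs : 1 ≤ 2 * s) (R : ℝ) (hR : 0 < R) (g : Ed 3 → ℂ)
    (hg : Continuous g) :
    (∫⁻ x, ‖g x‖ₑ) ^ 2 ≤ (∫⁻ x : Ed 3, ENNReal.ofReal ((1 + ‖x‖) ^ (-(2 * s)))) *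
      ENNReal.ofReal (R ^ 3) * (2 ^ (2 * s - 1) * ((∫⁻ x, ‖g x‖ₑ ^ 2) +
        ENNReal.ofReal (R ^ (-(2 * s))) * ∫⁻ x, ‖x‖ₑ ^ (2 * s) * ‖g x‖ₑ ^ 2)) := by
  set W : Ed 3 → ℝ≥0∞ := fun x => 1 + ‖R⁻¹ • x‖ₑ with hW
  have hWm : Measurable W := by fun_prop
  have hW0 : ∀ x, W x ≠ 0 := fun x => by simp [hW]
  have hWt : ∀ x, W x ≠ ∞ := fun x => by simp [hW]
  have e1 : ∀ x, ‖g x‖ₑ = ((fun x => W x ^ (-s)) * fun x => W x ^ s * ‖g x‖ₑ) x := fun x => by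
    simp only [Pi.mul_apply]
    rw [← mul_assoc, ← ENNReal.rpow_add _ _ (hW0 x) (hWt x)]
    simp
  have H := ENNReal.lintegral_mul_le_Lp_mul_Lq (volume : Measure (Ed 3)) Real.HolderConjugate.two_two
    (f := fun x => W x ^ (-s)) (g := fun x => W x ^ s * ‖g x‖ₑ)
    (hWm.pow_const _).aemeasurable
    ((hWm.pow_const _).mul hg.measurable.enorm).aemeasurable
  rw [← lintegral_congr e1] at H
  have e2 : ∫⁻ x, (W x ^ (-s)) ^ (2:ℝ) = ENNReal.ofReal (R ^ 3) *
      (∫⁻ x : Ed 3, ENNReal.ofReal ((1 + ‖x‖) ^ (-(2 * s)))) := by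
    have := lint_smul R⁻¹ (inv_pos.2 hR) (fun x => ENNReal.ofReal ((1 + ‖x‖) ^ (-(2 * s))))
    rw [inv_pow, inv_inv] at this
    rw [← this]
    refine lintegral_congr fun x => ?_
    rw [← ENNReal.rpow_mul, ← ENNReal.ofReal_rpow_of_pos (by positivity),
      ENNReal.ofReal_add (by positivity) (by positivity), ofReal_norm]
    simp only [hW, ENNReal.ofReal_one]
    congr 1; ring
  have e3 : ∫⁻ x, (W x ^ s * ‖g x‖ₑ) ^ (2:ℝ) ≤ (2 ^ (2 * s - 1) * ((∫⁻ x, ‖g x‖ₑ ^ 2) +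
        ENNReal.ofReal (R ^ (-(2 * s))) * ∫⁻ x, ‖x‖ₑ ^ (2 * s) * ‖g x‖ₑ ^ 2)) := by
    rw [← lintegral_const_mul _ (by fun_prop), ← lintegral_add_left (by fun_prop),
      ← lintegral_const_mul _ (by fun_prop)]
    refine lintegral_mono fun x => ?_
    simp only
    rw [ENNReal.mul_rpow_of_nonneg _ _ (by norm_num), ← ENNReal.rpow_mul, mul_comm s 2]
    have h := ENNReal.rpow_add_le_mul_rpow_add_rpow 1 ‖R⁻¹ • x‖ₑ hs
    have h4 : ‖R⁻¹ • x‖ₑ ^ (2 * s) = ENNReal.ofReal (R ^ (-(2 * s))) * ‖x‖ₑ ^ (2 * s) := by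
      rw [enorm_smul, ENNReal.mul_rpow_of_nonneg _ _ (by linarith)]
      congr 1
      rw [Real.enorm_of_nonneg (by positivity), ENNReal.ofReal_rpow_of_pos (by positivity),
        Real.inv_rpow hR.le, Real.rpow_neg hR.le]
    rw [h4, ENNReal.one_rpow] at h
    have h5 : ‖g x‖ₑ ^ (2:ℝ) = ‖g x‖ₑ ^ 2 := by norm_cast
    rw [h5]
    calc _ ≤ _ := mul_le_mul_left h _
      _ = _ := by ring
  have h6 : ∀ a : ℝ≥0∞, (a ^ (1 / (2:ℝ))) ^ 2 = a := fun a => by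
    rw [← ENNReal.rpow_natCast, ← ENNReal.rpow_mul]; simp
  calc _ ≤ _ := pow_le_pow_left' H 2
    _ ≤ _ := by
      rw [mul_pow, h6, h6, e2, mul_comm (ENNReal.ofReal (R ^ 3))]
      gcongr

lemma opt_real (θ : ℝ) (hθ : 1 / 2 < θ) (D a b y : ℝ) (hD : 0 ≤ D) (ha : 0 < a) (hb : 0 ≤ b)
    (hy : 0 ≤ y)
    (H : ∀ R : ℝ, 0 < R → y ^ 2 ≤ D * R ^ 3 * (a ^ 2 + R ^ (-(2 * (θ + 1))) * b ^ 2)) :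
    y ≤ Real.sqrt (2 * D) * a ^ ((θ - 1 / 2) / (θ + 1)) * b ^ ((3 / 2) / (θ + 1)) := by
  rcases hb.eq_or_lt with rfl | hb
  · have : y ^ 2 ≤ 0 := by
      have T : Filter.Tendsto (fun R : ℝ => D * R ^ 3 * (a ^ 2)) (nhdsWithin 0 (Set.Ioi 0))
          (nhds (D * 0 ^ 3 * a ^ 2)) :=
        Filter.Tendsto.mono_left (Continuous.tendsto (by fun_prop) 0) nhdsWithin_le_nhds
      simp only [ne_eq, OfNat.ofNat_ne_zero, not_false_eq_true, zero_pow, mul_zero, zero_mul] at T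
      refine ge_of_tendsto T ?_
      filter_upwards [self_mem_nhdsWithin] with R hR
      simpa using H R hR
    have : y = 0 := by nlinarith
    rw [this]; positivity
  · set s := θ + 1 with hs
    have hs0 : 0 < s := by linarith
    have h := H ((b / a) ^ (1 / s)) (by positivity)
    have e1 : ((b / a) ^ (1 / s)) ^ (-(2 * s)) = (b / a) ^ (-2 : ℝ) := by
      rw [← Real.rpow_mul (by positivity)]; congr 1; field_simp
    have e2 : (b / a) ^ (-2 : ℝ) * b ^ 2 = a ^ 2 := by
      rw [Real.rpow_neg (by positivity)]
      norm_cast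
      field_simp
    rw [e1, e2] at h
    refine le_of_sq_le_sq ?_ (by positivity)
    refine h.trans (le_of_eq ?_)
    rw [mul_pow, mul_pow, Real.sq_sqrt (by positivity), ← Real.rpow_natCast _ 3,
      ← Real.rpow_mul (by positivity), Real.div_rpow hb.le ha.le]
    simp only [← Real.rpow_natCast, ← Real.rpow_mul ha.le, ← Real.rpow_mul hb.le]
    have e3 : a ^ ((θ - 1 / 2) / s * ((2:ℕ):ℝ)) = a ^ (((2:ℕ):ℝ)) / a ^ (1 / s * ((3:ℕ):ℝ)) := by
      rw [← Real.rpow_sub ha]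
      congr 1
      field_simp
      push_cast
      rw [hs]; ring
    have e4 : (3 / 2) / s * ((2:ℕ):ℝ) = 1 / s * ((3:ℕ):ℝ) := by
      push_cast; ring
    rw [e3, e4]; ring

lemma ftransform_eq (f : Ed 3 → ℂ) (κ : Ed 3) :
    ftransform 3 f κ = 𝓕 f ((2 * Real.pi)⁻¹ • κ) := by
  rw [Real.fourier_eq', ftransform]
  refine integral_congr_ae (ae_of_all _ fun x => ?_)
  simp only [smul_eq_mul]
  congr 2
  rw [inner_smul_right]
  have : (Real.pi : ℂ) ≠ 0 := by exact_mod_cast Real.pi_ne_zero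
  push_cast
  field_simp

lemma sobolev_sq (θ : ℝ) (f : Ed 3 → ℂ) :
    sobolevSemi 3 θ f ^ 2 = ∫⁻ ξ, ‖(2 * Real.pi) • ξ‖ₑ ^ (2 * θ) * ‖𝓕 f ξ‖ₑ ^ 2 := by
  have h6 : ∀ a : ℝ≥0∞, (a ^ (1 / (2:ℝ))) ^ 2 = a := fun a => by
    rw [← ENNReal.rpow_natCast, ← ENNReal.rpow_mul]; simp
  have hp : 0 < 2 * Real.pi := by positivity
  rw [sobolevSemi, h6]
  have := lint_smul (2 * Real.pi) hp
    (fun κ => ‖κ‖ₑ ^ (2 * θ) * ‖ftransform 3 f κ‖ₑ ^ 2)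
  simp only [ftransform_eq, inv_smul_smul₀ hp.ne'] at this
  rw [this]
  simp only [ftransform_eq, enorm_eq_nnnorm]
  congr 2
  rw [Real.rpow_neg hp.le]
  norm_cast

/-- The `n`-th component of a Schwartz vector field, complexified. -/
noncomputable def vcomp (v : SchwartzMap (Ed 3) (Ed 3)) (n : Fin 3) : SchwartzMap (Ed 3) ℂ :=
  SchwartzMap.postcompCLM (𝕜 := ℝ)
    (Complex.ofRealCLM.comp (EuclideanSpace.proj n : Ed 3 →L[ℝ] ℝ)) v

lemma vcomp_apply (v : SchwartzMap (Ed 3) (Ed 3)) (n : Fin 3) (x : Ed 3) :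
    vcomp v n x = ((v x n : ℝ) : ℂ) := by
  simp [vcomp]

lemma vcomp_deriv (v : SchwartzMap (Ed 3) (Ed 3)) (m n : Fin 3) (x : Ed 3) :
    (∂_{(EuclideanSpace.single m (1:ℝ) : Ed 3)} (vcomp v n)) x
      = ((pd 3 m (fun y => v y n) x : ℝ) : ℂ) := by
  rw [SchwartzMap.lineDerivOp_apply_eq_fderiv, pd]
  have h0 : HasFDerivAt v (fderiv ℝ v x) x := v.hasFDerivAt x
  have h1 : HasFDerivAt (fun y => v y n)
      ((EuclideanSpace.proj n : Ed 3 →L[ℝ] ℝ).comp (fderiv ℝ v x)) x :=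
    (EuclideanSpace.proj n : Ed 3 →L[ℝ] ℝ).hasFDerivAt.comp x h0
  have h2 : HasFDerivAt (fun y => vcomp v n y)
      ((Complex.ofRealCLM.comp (EuclideanSpace.proj n : Ed 3 →L[ℝ] ℝ)).comp (fderiv ℝ v x)) x :=
    (Complex.ofRealCLM.comp (EuclideanSpace.proj n : Ed 3 →L[ℝ] ℝ)).hasFDerivAt.comp x h0
  rw [h1.fderiv, h2.fderiv]
  simp

lemma fourier_deriv (f : SchwartzMap (Ed 3) ℂ) (m : Fin 3) (ξ : Ed 3) :
    (𝓕 (∂_{(EuclideanSpace.single m (1:ℝ) : Ed 3)} f)) ξ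
      = (2 * Real.pi * Complex.I) * ((ξ m : ℝ) : ℂ) * (𝓕 f) ξ := by
  have : (fun x : Ed 3 => inner ℝ x (EuclideanSpace.single m (1:ℝ) : Ed 3)).HasTemperateGrowth :=
    ((innerSL ℝ).flip (EuclideanSpace.single m (1:ℝ) : Ed 3)).hasTemperateGrowth
  rw [SchwartzMap.fourier_lineDerivOp_eq, SchwartzMap.smul_apply,
    SchwartzMap.smulLeftCLM_apply_apply this]
  simp [EuclideanSpace.inner_single_right]
  ring

lemma fourier_div (v : SchwartzMap (Ed 3) (Ed 3))
    (hv : ∀ x, ∑ i : Fin 3, pd 3 i (fun y => v y i) x = 0) (ξ : Ed 3) :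
    ∑ m : Fin 3, ((ξ m : ℝ) : ℂ) * (𝓕 (vcomp v m)) ξ = 0 := by
  have h : ∑ m : Fin 3, (∂_{(EuclideanSpace.single m (1:ℝ) : Ed 3)} (vcomp v m)) = 0 := by
    ext x
    rw [SchwartzMap.sum_apply]
    simp only [vcomp_deriv, SchwartzMap.zero_apply]
    exact_mod_cast hv x
  have h2 := congrArg (fun f => (𝓕 f) ξ) h
  simp only [FourierTransform.fourier_sum, FourierTransform.fourier_zero, SchwartzMap.sum_apply,
    SchwartzMap.zero_apply, fourier_deriv, mul_assoc, ← Finset.mul_sum] at h2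
  have h3 : (2 * ((Real.pi : ℂ) * Complex.I)) ≠ 0 := by
    simp [Real.pi_ne_zero]
  simp only [← mul_assoc, ← Finset.mul_sum] at h2 h3
  simpa [h3, Real.pi_ne_zero] using h2

lemma fourier_vort (v : SchwartzMap (Ed 3) (Ed 3)) (m n : Fin 3) (ξ : Ed 3) :
    𝓕 (fun x => ((pd 3 m (fun y => v y n) x - pd 3 n (fun y => v y m) x : ℝ) : ℂ)) ξ
      = (2 * Real.pi * Complex.I) * (((ξ m : ℝ) : ℂ) * (𝓕 (vcomp v n)) ξ
        - ((ξ n : ℝ) : ℂ) * (𝓕 (vcomp v m)) ξ) := by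
  have h : (fun x => ((pd 3 m (fun y => v y n) x - pd 3 n (fun y => v y m) x : ℝ) : ℂ))
      = ⇑(∂_{(EuclideanSpace.single m (1:ℝ) : Ed 3)} (vcomp v n)
        - ∂_{(EuclideanSpace.single n (1:ℝ) : Ed 3)} (vcomp v m)) := by
    ext x
    rw [SchwartzMap.sub_apply, vcomp_deriv, vcomp_deriv]
    push_cast; rfl
  rw [h, ← SchwartzMap.fourier_coe, sub_eq_add_neg,
    FourierTransform.fourier_add, FourierTransform.fourier_neg, SchwartzMap.add_apply,
    SchwartzMap.neg_apply, fourier_deriv, fourier_deriv]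
  ring

lemma alg_bound (ξ : Ed 3) (g : Fin 3 → ℂ) (h : ∑ m : Fin 3, ((ξ m : ℝ) : ℂ) * g m = 0)
    (n : Fin 3) :
    ‖ξ‖ ^ 2 * ‖g n‖ ^ 2
      ≤ 3 * ∑ m : Fin 3, ‖((ξ m : ℝ) : ℂ) * g n - ((ξ n : ℝ) : ℂ) * g m‖ ^ 2 := by
  set T : Fin 3 → ℂ := fun m => ((ξ m : ℝ) : ℂ) * g n - ((ξ n : ℝ) : ℂ) * g m with hT
  have e0 : ‖ξ‖ ^ 2 = ∑ m : Fin 3, (ξ m) ^ 2 := by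
    rw [EuclideanSpace.norm_sq_eq]; simp
  have e1 : ((‖ξ‖ ^ 2 : ℝ) : ℂ) * g n = ∑ m : Fin 3, ((ξ m : ℝ) : ℂ) * T m := by
    have : ∑ m : Fin 3, ((ξ m : ℝ) : ℂ) * T m = (∑ m : Fin 3, ((ξ m : ℝ) : ℂ) ^ 2) * g n
        - ((ξ n : ℝ) : ℂ) * ∑ m : Fin 3, ((ξ m : ℝ) : ℂ) * g m := by
      simp only [hT, Fin.sum_univ_three]; ring
    rw [this, h, e0]; push_cast; ring
  have e2 : ‖ξ‖ ^ 2 * ‖g n‖ ≤ ‖ξ‖ * ∑ m : Fin 3, ‖T m‖ := by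
    have := congrArg norm e1
    rw [norm_mul, Complex.norm_real, Real.norm_of_nonneg (by positivity)] at this
    rw [this, Finset.mul_sum]
    refine (norm_sum_le _ _).trans (Finset.sum_le_sum fun m _ => ?_)
    rw [norm_mul, Complex.norm_real]
    gcongr
    exact PiLp.norm_apply_le ξ m
  rcases (norm_nonneg ξ).eq_or_lt with h0 | h0
  · rw [← h0]; simp; positivity
  have e3 : ‖ξ‖ * ‖g n‖ ≤ ∑ m : Fin 3, ‖T m‖ := by
    refine le_of_mul_le_mul_left ?_ h0
    linarith
  rw [← mul_pow]
  refine (pow_le_pow_left₀ (by positivity) e3 2).trans ?_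
  have := sq_sum_le_card_mul_sum_sq (s := (Finset.univ : Finset (Fin 3))) (f := fun m => ‖T m‖)
  simpa using this

lemma plancherel_cmp (f : SchwartzMap (Ed 3) ℂ) :
    ∫⁻ ξ, ‖(𝓕 f) ξ‖ₑ ^ 2 = ∫⁻ x, ‖f x‖ₑ ^ 2 := by
  have key : ∀ f : SchwartzMap (Ed 3) ℂ,
      ∫⁻ x, ‖f x‖ₑ ^ 2 = ENNReal.ofReal (∫ x, ‖f x‖ ^ 2) := fun f => by
    have hi : Integrable (fun x => ‖f x‖ ^ 2) volume := (f.memLp 2 volume).integrable_norm_pow (by norm_num)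
    rw [ofReal_integral_eq_lintegral_ofReal hi (ae_of_all _ fun x => by positivity)]
    refine lintegral_congr fun x => ?_
    rw [ENNReal.ofReal_pow (norm_nonneg _), ofReal_norm]
  rw [key, key, SchwartzMap.integral_norm_sq_fourier]

lemma inv_bound (f : SchwartzMap (Ed 3) ℂ) (x : Ed 3) :
    ‖f x‖ₑ ≤ ∫⁻ ξ, ‖(𝓕 f) ξ‖ₑ := by
  have h : f x = (𝓕⁻ (𝓕 f)) x := by rw [FourierTransform.fourierInv_fourier_eq]
  rw [h, SchwartzMap.fourierInv_coe, Real.fourierInv_eq']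
  refine (enorm_integral_le_lintegral_enorm _).trans (le_of_eq (lintegral_congr fun ξ => ?_))
  rw [enorm_smul]
  have : ‖Complex.exp (((2 * Real.pi * ⟪ξ, x⟫ : ℝ) : ℂ) * Complex.I)‖ₑ = 1 := by
    rw [← ofReal_norm, Complex.norm_exp_ofReal_mul_I]; simp
  rw [this, one_mul]

lemma high_bound_s14 (θ : ℝ) (hθ : 1 / 2 < θ) (v : SchwartzMap (Ed 3) (Ed 3))
    (hv : ∀ x, ∑ i : Fin 3, pd 3 i (fun y => v y i) x = 0) (n : Fin 3) (M : ℝ≥0∞)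
    (hM : ∀ m, sobolevSemi 3 θ
      (fun x => ((pd 3 m (fun y => v y n) x - pd 3 n (fun y => v y m) x : ℝ) : ℂ)) ≤ M) :
    ∫⁻ ξ, ‖ξ‖ₑ ^ (2 * (θ + 1)) * ‖(𝓕 (vcomp v n)) ξ‖ₑ ^ 2 ≤ 9 * M ^ 2 := by
  have hpi : (1:ℝ) ≤ 2 * Real.pi := by linarith [Real.pi_gt_three]
  have hc : ∀ n, Continuous fun ξ => (𝓕 (vcomp v n)) ξ := fun n => (𝓕 (vcomp v n)).continuous
  set T : Fin 3 → Ed 3 → ℂ := fun m ξ =>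
    ((ξ m : ℝ) : ℂ) * (𝓕 (vcomp v n)) ξ - ((ξ n : ℝ) : ℂ) * (𝓕 (vcomp v m)) ξ with hT
  have hTc : ∀ m, Continuous (T m) := fun m => by
    have := hc n
    have := hc m
    simp only [hT]
    fun_prop
  have b1 : ∀ m, ∫⁻ ξ, ‖ξ‖ₑ ^ (2 * θ) * ‖T m ξ‖ₑ ^ 2 ≤ M ^ 2 := fun m => by
    refine le_trans ?_ (pow_le_pow_left' (hM m) 2)
    rw [sobolev_sq]
    refine lintegral_mono fun ξ => ?_
    simp only
    rw [fourier_vort]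
    have h1 : ‖ξ‖ₑ ≤ ‖(2 * Real.pi) • ξ‖ₑ := by
      rw [← ofReal_norm, ← ofReal_norm]
      refine ENNReal.ofReal_le_ofReal ?_
      rw [norm_smul, Real.norm_of_nonneg (by linarith)]
      nlinarith [norm_nonneg ξ]
    have h2 : ‖T m ξ‖ₑ ≤ ‖(2 * Real.pi * Complex.I) * T m ξ‖ₑ := by
      rw [← ofReal_norm, ← ofReal_norm]
      refine ENNReal.ofReal_le_ofReal ?_
      rw [norm_mul]
      have : ‖(2 * Real.pi * Complex.I : ℂ)‖ = 2 * Real.pi := by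
        simp [abs_of_pos Real.pi_pos]
      rw [this]
      nlinarith [norm_nonneg (T m ξ)]
    gcongr
  have b2 : ∀ ξ, ‖ξ‖ₑ ^ (2 * (θ + 1)) * ‖(𝓕 (vcomp v n)) ξ‖ₑ ^ 2
      ≤ 3 * ∑ m, ‖ξ‖ₑ ^ (2 * θ) * ‖T m ξ‖ₑ ^ 2 := fun ξ => by
    have h := ENNReal.ofReal_le_ofReal
      (alg_bound ξ (fun m => (𝓕 (vcomp v m)) ξ) (fourier_div v hv ξ) n)
    rw [ENNReal.ofReal_mul (by positivity), ENNReal.ofReal_mul (by positivity),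
      ENNReal.ofReal_sum_of_nonneg (fun _ _ => by positivity)] at h
    simp only [ENNReal.ofReal_pow (norm_nonneg _), ofReal_norm] at h
    have e : ‖ξ‖ₑ ^ (2 * (θ + 1)) = ‖ξ‖ₑ ^ (2 * θ) * ‖ξ‖ₑ ^ 2 := by
      rw [mul_add, mul_one, ENNReal.rpow_add_of_nonneg _ _ (by linarith) (by norm_num)]
      norm_cast
    rw [e, mul_assoc, ← Finset.mul_sum, mul_left_comm (3 : ℝ≥0∞)]
    refine mul_le_mul_right (h.trans (le_of_eq ?_)) _
    simp [hT]
  calc _ ≤ _ := lintegral_mono b2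
    _ = 3 * ∑ m, ∫⁻ ξ, ‖ξ‖ₑ ^ (2 * θ) * ‖T m ξ‖ₑ ^ 2 := by
      have hm : ∀ m, Measurable fun ξ => ‖ξ‖ₑ ^ (2 * θ) * ‖T m ξ‖ₑ ^ 2 := fun m =>
        (measurable_enorm.pow_const _).mul ((hTc m).measurable.enorm.pow_const 2)
      rw [lintegral_const_mul _ (Finset.measurable_sum _ fun m _ => hm m),
        lintegral_finsetSum _ fun m _ => hm m]
    _ ≤ 3 * ∑ m : Fin 3, M ^ 2 := by gcongr with m _; exact b1 m
    _ = 9 * M ^ 2 := by simp; ring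

lemma low_bound_s14 (v : SchwartzMap (Ed 3) (Ed 3)) (n : Fin 3) :
    ∫⁻ ξ, ‖(𝓕 (vcomp v n)) ξ‖ₑ ^ 2 ≤ eLpNorm (⇑v) 2 volume ^ 2 := by
  rw [plancherel_cmp, eLpNorm_eq_lintegral_rpow_enorm_toReal (by norm_num) (by norm_num)]
  have h6 : ∀ a : ℝ≥0∞, (a ^ (1 / (2:ℝ))) ^ 2 = a := fun a => by
    rw [← ENNReal.rpow_natCast, ← ENNReal.rpow_mul]; simp
  rw [ENNReal.toReal_ofNat, h6]
  refine lintegral_mono fun x => ?_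
  simp only [vcomp_apply]
  have h : ‖((v x n : ℝ) : ℂ)‖ₑ ≤ ‖v x‖ₑ := by
    rw [← ofReal_norm, ← ofReal_norm]
    refine ENNReal.ofReal_le_ofReal ?_
    rw [Complex.norm_real]
    exact PiLp.norm_apply_le (v x) n
  have h5 : ‖v x‖ₑ ^ (2:ℝ) = ‖v x‖ₑ ^ 2 := by norm_cast
  rw [h5]
  gcongr

end Helpers

/-- For a divergence-free Schwartz vector field `v` on `ℝ³` and `θ > 1/2`:
`‖v‖_∞ ≤ C ‖v‖₂^{(θ−1/2)/(θ+1)} (max [ω^{mn}]_θ)^{(3/2)/(θ+1)}`. -/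
theorem stmt14 (θ : ℝ) (hθ : 1 / 2 < θ) :
    ∃ C : ℝ, 0 < C ∧ ∀ v : SchwartzMap (Ed 3) (Ed 3),
      (∀ x, ∑ i : Fin 3, pd 3 i (fun y => v y i) x = 0) →
      (⨆ x, (‖v x‖₊ : ℝ≥0∞))
        ≤ ENNReal.ofReal C *
            eLpNorm (⇑v) 2 volume ^ ((θ - 1 / 2) / (θ + 1)) *
            (⨆ m : Fin 3, ⨆ n : Fin 3, sobolevSemi 3 θ
                (fun x => ((pd 3 m (fun y => v y n) x - pd 3 n (fun y => v y m) x : ℝ) : ℂ)))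
              ^ ((3 / 2) / (θ + 1)) := by
  have hK : (∫⁻ x : Ed 3, ENNReal.ofReal ((1 + ‖x‖) ^ (-(2 * (θ + 1))))) < ∞ :=
    finite_integral_one_add_norm (by simp; linarith)
  obtain ⟨K, hK0, hKe⟩ : ∃ K : ℝ, 0 ≤ K ∧
      (∫⁻ x : Ed 3, ENNReal.ofReal ((1 + ‖x‖) ^ (-(2 * (θ + 1))))) = ENNReal.ofReal K :=
    ⟨_, ENNReal.toReal_nonneg, (ENNReal.ofReal_toReal hK.ne).symm⟩
  set D : ℝ := K * 2 ^ (2 * (θ + 1) - 1) * 9 with hD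
  have hD0 : 0 ≤ D := by positivity
  refine ⟨3 * (Real.sqrt (2 * D) + 1), by positivity, fun v hv => iSup_le fun x => ?_⟩
  set M := (⨆ m : Fin 3, ⨆ n : Fin 3, sobolevSemi 3 θ
                (fun x => ((pd 3 m (fun y => v y n) x - pd 3 n (fun y => v y m) x : ℝ) : ℂ)))
    with hMdef
  set A := eLpNorm (⇑v) 2 volume with hA
  have hAt : A ≠ ∞ := (v.eLpNorm_lt_top 2 volume).ne
  have hθ1 : 0 < θ + 1 := by linarith
  have hα : 0 < (θ - 1 / 2) / (θ + 1) := div_pos (by linarith) hθ1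
  have hβ : 0 < (3 / 2) / (θ + 1) := by positivity
  by_cases hA0 : A = 0
  · have h1 : (v : Ed 3 → Ed 3) =ᵐ[volume] 0 :=
      (eLpNorm_eq_zero_iff v.continuous.aestronglyMeasurable (by norm_num)).1 hA0
    have h2 : (v : Ed 3 → Ed 3) = 0 :=
      (v.continuous.ae_eq_iff_eq volume continuous_zero).1 h1
    simp [h2]
  by_cases hMt : M = ∞
  · rw [hMt, ENNReal.top_rpow_of_pos hβ, ENNReal.mul_top]
    · exact le_top
    · refine mul_ne_zero ?_ ?_
      · have : 0 < 3 * (Real.sqrt (2 * D) + 1) := by positivity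
        simpa using this
      · simp [ENNReal.rpow_eq_zero_iff, hA0, hAt]
  have comp : ∀ n, ‖v x n‖ ≤ Real.sqrt (2 * D) * A.toReal ^ ((θ - 1 / 2) / (θ + 1))
      * M.toReal ^ ((3 / 2) / (θ + 1)) := fun n => by
    refine opt_real θ hθ D _ _ _ hD0 (ENNReal.toReal_pos hA0 hAt) ENNReal.toReal_nonneg
      (norm_nonneg _) fun R hR => ?_
    have c := core_ineq (θ + 1) (by linarith) R hR _ (FourierTransform.fourier (vcomp v n)).continuous
    have hb := high_bound_s14 θ hθ v hv n M fun m => le_iSup₂_of_le m n le_rfl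
    have hl := low_bound_s14 v n
    have hi := pow_le_pow_left' (inv_bound (vcomp v n) x) 2
    have e : ‖vcomp v n x‖ₑ = ENNReal.ofReal ‖v x n‖ := by
      rw [vcomp_apply, ← ofReal_norm, Complex.norm_real]
    rw [e] at hi
    rw [hKe] at c
    have all : ENNReal.ofReal ‖v x n‖ ^ 2 ≤ ENNReal.ofReal K * ENNReal.ofReal (R ^ 3) *
        (2 ^ (2 * (θ + 1) - 1) * (9 * A ^ 2 + ENNReal.ofReal (R ^ (-(2 * (θ + 1)))) *
          (9 * M ^ 2))) := by
      refine hi.trans (c.trans ?_)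
      gcongr
      refine hl.trans ?_
      calc A ^ 2 = 1 * A ^ 2 := (one_mul _).symm
        _ ≤ 9 * A ^ 2 := by gcongr; norm_num
    have h2 : (2 : ℝ≥0∞) ^ (2 * (θ + 1) - 1) = ENNReal.ofReal (2 ^ (2 * (θ + 1) - 1)) := by
      rw [← ENNReal.ofReal_rpow_of_pos (by norm_num)]; simp
    have h9 : (9 : ℝ≥0∞) = ENNReal.ofReal 9 := by simp
    rw [← ENNReal.ofReal_toReal hAt, ← ENNReal.ofReal_toReal hMt, h2, h9,
      ← ENNReal.ofReal_pow (by positivity), ← ENNReal.ofReal_pow (by positivity),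
      ← ENNReal.ofReal_pow (by positivity), ← ENNReal.ofReal_mul (by positivity),
      ← ENNReal.ofReal_mul (by positivity), ← ENNReal.ofReal_mul (by positivity),
      ← ENNReal.ofReal_mul (by positivity), ← ENNReal.ofReal_add (by positivity) (by positivity),
      ← ENNReal.ofReal_mul (by positivity), ← ENNReal.ofReal_mul (by positivity),
      ENNReal.ofReal_le_ofReal_iff (by positivity)] at all
    refine all.trans (le_of_eq ?_)
    rw [hD]; ring
  have tot : ‖v x‖ ≤ 3 * (Real.sqrt (2 * D) + 1) * A.toReal ^ ((θ - 1 / 2) / (θ + 1))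
      * M.toReal ^ ((3 / 2) / (θ + 1)) := by
    have h1 : ‖v x‖ ≤ ∑ n, ‖v x n‖ := by
      rw [EuclideanSpace.norm_eq]
      refine Real.sqrt_le_iff.2 ⟨by positivity, ?_⟩
      exact Finset.sum_sq_le_sq_sum_of_nonneg fun _ _ => norm_nonneg _
    refine h1.trans ((Finset.sum_le_sum fun n _ => comp n).trans ?_)
    have : 0 ≤ A.toReal ^ ((θ - 1 / 2) / (θ + 1)) * M.toReal ^ ((3 / 2) / (θ + 1)) := by positivity
    simp only [Finset.sum_const, Finset.card_univ, Fintype.card_fin, nsmul_eq_mul]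
    push_cast
    nlinarith
  have := ENNReal.ofReal_le_ofReal tot
  rw [ENNReal.ofReal_mul (by positivity), ENNReal.ofReal_mul (by positivity),
    ← ENNReal.ofReal_rpow_of_nonneg (by positivity) hα.le,
    ← ENNReal.ofReal_rpow_of_nonneg (by positivity) hβ.le, ENNReal.ofReal_toReal hAt,
    ENNReal.ofReal_toReal hMt, ofReal_norm] at this
  exact this
end

section
/- Let d ≥ 1 and let Φ : ℝ^d → ℝ^d be a C¹ diffeomorphism that preserves Lebesgue measure and satisfies sup_ξ ‖DΦ(ξ)‖ ≤ M for some M ≥ 1. Then for every Schwartz function g : ℝ^d → ℝ: (i) for 0 < r < 1, the homogeneous Hölder seminorms satisfy {g∘Φ}_r ≤ M^r · {g}_r; (ii) for 0 < r < 1 and 2 ≤ p < ∞, there is a constant C = C(d, r, p), independent of Φ, M and g, with [g∘Φ]_{r,p} ≤ C · M^r · [g]_{r,p} (Gagliardo seminorms); (iii) for 0 ≤ θ ≤ 1, there is a constant C = C(d, θ), independent of Φ, M and g, with [g∘Φ]_θ ≤ C · M^θ · [g]_θ (homogeneous Sobolev seminorms). -/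
open MeasureTheory ENNReal
open scoped RealInnerProductSpace

/-- A `C¹` diffeomorphism of `ℝ^d` preserving Lebesgue measure, with derivative bounded by
`M ≥ 1` in operator norm. -/
def IsMPDiffeo (d : ℕ) (Φ : Ed d → Ed d) (M : ℝ) : Prop :=
  ContDiff ℝ 1 Φ ∧
  (∃ Ψ : Ed d → Ed d, ContDiff ℝ 1 Ψ ∧
    Function.LeftInverse Ψ Φ ∧ Function.RightInverse Ψ Φ) ∧
  MeasureTheory.Measure.map Φ MeasureTheory.volume = MeasureTheory.volume ∧
  1 ≤ M ∧ ∀ ξ, ‖fderiv ℝ Φ ξ‖ ≤ M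


theorem aux_lscale (d : ℕ) (f : Ed d → ℝ≥0∞) {r : ℝ} (hr : r ≠ 0) :
    ∫⁻ x, f (r • x) = ENNReal.ofReal |(r ^ d)⁻¹| * ∫⁻ x, f x := by
  have h := MeasureTheory.Measure.map_addHaar_smul (volume : Measure (Ed d)) hr
  rw [finrank_euclideanSpace, Fintype.card_fin] at h
  rw [← smul_eq_mul, ← lintegral_smul_measure, ← h]
  exact (lintegral_map_equiv f (MeasurableEquiv.smul₀ r hr)).symm

open FourierTransform in
theorem aux_plancherel0 (d : ℕ) (f : Ed d → ℂ) (h1 : Integrable f) (h2 : MemLp f 2) :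
    ∫⁻ κ, ‖𝓕 f κ‖ₑ ^ (2 : ℕ) = ∫⁻ x, ‖f x‖ₑ ^ (2 : ℕ) := by
  set F : Lp ℂ 2 (volume : Measure (Ed d)) := h2.toLp f with hF
  have hcont : Continuous (𝓕 f) := VectorFourier.fourierIntegral_continuous
      Real.continuous_fourierChar (by exact continuous_inner) h1
  have key : ∀ᵐ x, (𝓕 F : Lp ℂ 2 (volume : Measure (Ed d))) x = 𝓕 f x := by
    apply ae_eq_of_integral_contDiff_smul_eq
    · exact (Lp.memLp _).locallyIntegrable (by norm_num)
    · exact hcont.locallyIntegrable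
    intro g g_smooth g_cpt
    have hg₁ : HasCompactSupport (Complex.ofRealCLM ∘ g) := g_cpt.comp_left rfl
    have hg₂ : ContDiff ℝ (⊤ : ℕ∞) (Complex.ofRealCLM ∘ g) := by fun_prop
    set G := hg₁.toSchwartzMap hg₂
    have e1 : ∫ x, g x • (𝓕 F : Lp ℂ 2 (volume : Measure (Ed d))) x
        = ((𝓕 F : Lp ℂ 2 (volume : Measure (Ed d))) : TemperedDistribution (Ed d) ℂ) G := by
      rw [Lp.toTemperedDistribution_apply]
      rfl
    rw [e1, ← Lp.fourier_toTemperedDistribution_eq, TemperedDistribution.fourier_apply,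
      Lp.toTemperedDistribution_apply]
    have e2 : ∫ x, (𝓕 G) x • F x = ∫ x, (𝓕 (G : Ed d → ℂ)) x • f x := by
      apply integral_congr_ae
      filter_upwards [h2.coeFn_toLp] with x hx
      rw [hF, hx]
      rfl
    rw [e2]
    have := VectorFourier.integral_fourierIntegral_smul_eq_flip (L := innerₗ (Ed d)) (μ := volume) (ν := volume)
      (f := (G : Ed d → ℂ)) (g := f) Real.continuous_fourierChar
      (by exact continuous_inner) G.integrable h1
    rw [flip_innerₗ] at this
    exact this
  have n1 := Lp.norm_fourier_eq F
  have n2 : eLpNorm (𝓕 f) 2 volume = eLpNorm f 2 volume := by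
    rw [← eLpNorm_congr_ae key, ← eLpNorm_congr_ae h2.coeFn_toLp]
    rw [Lp.norm_def, Lp.norm_def] at n1
    exact (ENNReal.toReal_eq_toReal_iff' (Lp.eLpNorm_ne_top _) (Lp.eLpNorm_ne_top _)).1 n1
  have := congrArg (fun t => t ^ (2:ℕ)) n2

  rw [← ENNReal.rpow_natCast, ← ENNReal.rpow_natCast] at this
  rw [eLpNorm_eq_lintegral_rpow_enorm_toReal (by norm_num) (by norm_num),
    eLpNorm_eq_lintegral_rpow_enorm_toReal (by norm_num) (by norm_num),
    ← ENNReal.rpow_mul, ← ENNReal.rpow_mul] at this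
  simpa using this

open FourierTransform in
theorem aux_ft_eq (d : ℕ) (f : Ed d → ℂ) (κ : Ed d) :
    ftransform d f κ = 𝓕 f ((2 * Real.pi)⁻¹ • κ) := by
  rw [Real.fourier_eq', ftransform]
  congr 1
  ext x
  rw [smul_eq_mul]
  congr 2
  rw [real_inner_smul_right]
  push_cast
  have : (Real.pi : ℂ) ≠ 0 := by exact_mod_cast Real.pi_ne_zero
  field_simp

theorem aux_ft_cont (d : ℕ) (f : Ed d → ℂ) (h1 : Integrable f) : Continuous (ftransform d f) := by
  have hcont : Continuous (FourierTransform.fourier f) := VectorFourier.fourierIntegral_continuous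
      Real.continuous_fourierChar (by exact continuous_inner) h1
  have : ftransform d f = fun κ => FourierTransform.fourier f ((2 * Real.pi)⁻¹ • κ) :=
    funext (aux_ft_eq d f)
  rw [this]
  fun_prop

theorem aux_plancherel (d : ℕ) (f : Ed d → ℂ) (h1 : Integrable f) (h2 : MemLp f 2) :
    ENNReal.ofReal ((2 * Real.pi) ^ (-(d : ℝ))) * ∫⁻ κ, ‖ftransform d f κ‖ₑ ^ (2 : ℕ)
      = ∫⁻ x, ‖f x‖ₑ ^ (2 : ℕ) := by
  rw [← aux_plancherel0 d f h1 h2]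
  simp_rw [aux_ft_eq]
  have hpi : (0:ℝ) < 2 * Real.pi := by positivity
  have := aux_lscale d
    (fun κ => ‖FourierTransform.fourier f κ‖ₑ ^ (2 : ℕ)) (inv_ne_zero hpi.ne')
  rw [this, ← mul_assoc, ← ENNReal.ofReal_mul (by positivity)]
  have : (2 * Real.pi) ^ (-(d : ℝ)) * |((2 * Real.pi)⁻¹ ^ d)⁻¹| = 1 := by
    rw [abs_of_pos (by positivity), Real.rpow_neg hpi.le,
      Real.rpow_natCast, inv_pow, inv_inv, inv_mul_cancel₀ (by positivity)]
  rw [this]; simp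

theorem aux_ft_shift (d : ℕ) (f : Ed d → ℂ) (h1 : Integrable f) (h κ : Ed d) :
    ftransform d (fun x => f (x + h) - f x) κ
      = (Complex.exp (Complex.I * (⟪h, κ⟫ : ℂ)) - 1) * ftransform d f κ := by
  have hb : ∀ g : Ed d → ℂ, Integrable g → 
      Integrable (fun x => Complex.exp (-(Complex.I * (⟪x, κ⟫ : ℂ))) * g x) := by
    intro g hg
    refine hg.bdd_mul (c := 1) (by fun_prop) ?_
    filter_upwards with x
    rw [← mul_neg, ← Complex.ofReal_neg, mul_comm, Complex.norm_exp_ofReal_mul_I]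
  unfold ftransform
  simp_rw [mul_sub]
  rw [integral_sub (hb _ (h1.comp_add_right h)) (hb _ h1), sub_mul, one_mul]
  congr 1
  rw [← integral_const_mul]
  rw [← integral_add_right_eq_self (μ := volume) (fun x => Complex.exp (Complex.I * (⟪h, κ⟫ : ℂ)) * (Complex.exp (-(Complex.I * (⟪x, κ⟫ : ℂ))) * f x)) h]
  congr 1
  ext x
  rw [← mul_assoc, ← Complex.exp_add]
  congr 2
  rw [inner_add_left]
  push_cast
  ring

theorem aux_omega (d : ℕ) (f : Ed d → ℂ) (h1 : Integrable f) (h2 : MemLp f 2) (h : Ed d) :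
    ∫⁻ x, ‖f (x + h) - f x‖ₑ ^ (2 : ℕ) = 
    ENNReal.ofReal ((2 * Real.pi) ^ (-(d : ℝ))) *
      ∫⁻ κ, ‖Complex.exp (Complex.I * (⟪h, κ⟫ : ℂ)) - 1‖ₑ ^ (2 : ℕ) * ‖ftransform d f κ‖ₑ ^ (2 : ℕ) := by
  rw [← aux_plancherel d (fun x => f (x + h) - f x) ((h1.comp_add_right h).sub h1)
    (((h2.comp_measurePreserving (measurePreserving_add_right volume h))).sub h2)]
  simp_rw [aux_ft_shift d f h1, enorm_mul, mul_pow]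

theorem aux_ball (d : ℕ) {F : Type*} [NormedAddCommGroup F] (g : Ed d → F) (hg : Continuous g)
    {p : ℝ} (hp : 1 ≤ p) (t : ℝ) (u v : Ed d) (huv : ‖u - v‖ ≤ t) :
    volume (Metric.ball (0 : Ed d) t) * ‖g u - g v‖ₑ ^ p ≤
      2 ^ (p - 1) * ((∫⁻ z in Metric.ball (0 : Ed d) (2 * t), ‖g (u + z) - g u‖ₑ ^ p) +
        ∫⁻ z in Metric.ball (0 : Ed d) (2 * t), ‖g (v + z) - g v‖ₑ ^ p) := by
  have shift : ∀ u : Ed d, ∫⁻ z in Metric.ball (0 : Ed d) (2 * t), ‖g (u + z) - g u‖ₑ ^ p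
      = ∫⁻ y in Metric.ball u (2 * t), ‖g y - g u‖ₑ ^ p := by
    intro u
    rw [← lintegral_indicator Metric.isOpen_ball.measurableSet,
      ← lintegral_indicator Metric.isOpen_ball.measurableSet,
      ← lintegral_add_left_eq_self ((Metric.ball u (2 * t)).indicator _) u]
    congr 1
    ext z
    simp only [Set.indicator, Metric.mem_ball, dist_eq_norm, sub_zero, add_sub_cancel_left]
  have ht : 0 ≤ t := (norm_nonneg _).trans huv
  rw [shift, shift]
  have hvol : volume (Metric.ball (0 : Ed d) t) = volume (Metric.ball v t) := by
    rw [← Measure.addHaar_ball_center volume v t]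
  have hm : ∀ w : Ed d, Measurable fun y => ‖g y - g w‖ₑ ^ p := by
    intro w
    have : Continuous fun y => ‖g y - g w‖ₑ := by fun_prop
    exact this.measurable.pow_const p
  calc volume (Metric.ball (0 : Ed d) t) * ‖g u - g v‖ₑ ^ p
      = ∫⁻ y in Metric.ball v t, ‖g u - g v‖ₑ ^ p := by
        rw [setLIntegral_const, hvol, mul_comm]
    _ ≤ ∫⁻ y in Metric.ball v t, 2 ^ (p - 1) * (‖g y - g u‖ₑ ^ p + ‖g y - g v‖ₑ ^ p) := by
        apply lintegral_mono
        intro y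
        refine le_trans ?_ (ENNReal.rpow_add_le_mul_rpow_add_rpow _ _ hp)
        refine ENNReal.rpow_le_rpow ?_ (by linarith)
        have : g u - g v = -(g y - g u) + (g y - g v) := by abel
        rw [this]
        refine (enorm_add_le _ _).trans ?_
        rw [enorm_neg]
    _ = 2 ^ (p - 1) * ((∫⁻ y in Metric.ball v t, ‖g y - g u‖ₑ ^ p) +
          ∫⁻ y in Metric.ball v t, ‖g y - g v‖ₑ ^ p) := by
        rw [lintegral_const_mul _ (by exact (hm u).add (hm v)), lintegral_add_left (hm u)]
    _ ≤ _ := by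
        gcongr
        · intro y hy
          rw [Metric.mem_ball] at hy ⊢
          have h1 := dist_triangle y v u
          rw [dist_comm v u, dist_eq_norm u v] at h1
          linarith
        · linarith

theorem aux_meas (d : ℕ) {F : Type*} [NormedAddCommGroup F] (g : Ed d → F) (hg : Continuous g)
    (p : ℝ) : Measurable (Function.uncurry fun x z : Ed d => ‖g (x + z) - g x‖ₑ ^ p) := by
  have : Continuous fun q : Ed d × Ed d => ‖g (q.1 + q.2) - g q.1‖ₑ := by fun_prop
  exact this.measurable.pow_const p

theorem aux_core (d : ℕ) {F : Type*} [NormedAddCommGroup F] (g : Ed d → F) (hg : Continuous g)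
    (Φ : Ed d → Ed d) (hΦ : MeasurePreserving Φ) {M : ℝ}
    (hL : ∀ x y, ‖Φ x - Φ y‖ ≤ M * ‖x - y‖) {p : ℝ} (hp : 1 ≤ p) (h : Ed d) :
    volume (Metric.ball (0 : Ed d) (M * ‖h‖)) * ∫⁻ x, ‖g (Φ (x + h)) - g (Φ x)‖ₑ ^ p ≤
      2 ^ p * ∫⁻ z in Metric.ball (0 : Ed d) (2 * (M * ‖h‖)), ∫⁻ x, ‖g (x + z) - g x‖ₑ ^ p := by
  set B := Metric.ball (0 : Ed d) (2 * (M * ‖h‖))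
  set A : Ed d → ℝ≥0∞ := fun u => ∫⁻ z in B, ‖g (u + z) - g u‖ₑ ^ p with hA
  have hAm : Measurable A := (aux_meas d g hg p).lintegral_prod_right'
  have hsw : ∫⁻ z in B, ∫⁻ x, ‖g (x + z) - g x‖ₑ ^ p = ∫⁻ x, A x := by
    rw [lintegral_lintegral_swap]
    exact ((aux_meas d g hg p).comp measurable_swap).aemeasurable
  have e1 : ∫⁻ x, A (Φ x) = ∫⁻ x, A x := hΦ.lintegral_comp hAm
  have e2 : ∫⁻ x, A (Φ (x + h)) = ∫⁻ x, A x := by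
    rw [lintegral_add_right_eq_self (fun x => A (Φ x)) h, e1]
  rw [hsw]
  calc _ = ∫⁻ x, volume (Metric.ball (0 : Ed d) (M * ‖h‖)) * ‖g (Φ (x + h)) - g (Φ x)‖ₑ ^ p := by
        rw [lintegral_const_mul' _ _ measure_ball_lt_top.ne]
    _ ≤ ∫⁻ x, 2 ^ (p - 1) * (A (Φ (x + h)) + A (Φ x)) := by
        apply lintegral_mono
        intro x
        apply aux_ball d g hg hp
        simpa using hL (x + h) x
    _ = 2 ^ (p - 1) * ((∫⁻ x, A x) + ∫⁻ x, A x) := by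
        have m1 : Measurable fun x => A (Φ x) := hAm.comp hΦ.measurable
        have m2 : Measurable fun x => A (Φ (x + h)) := m1.comp (measurable_add_const h)
        rw [lintegral_const_mul _ (by exact m2.add m1), lintegral_add_left m2, e1, e2]
    _ = 2 ^ p * ∫⁻ x, A x := by
        rw [← two_mul, ← mul_assoc]
        congr 1
        nth_rewrite 2 [← ENNReal.rpow_one 2]
        rw [← ENNReal.rpow_add _ _ (by norm_num) (by norm_num)]
        congr 1
        ring
  
theorem aux_tail_fin (d : ℕ) {b : ℝ} (hb : (d : ℝ) < b) :
    ∫⁻ h : Ed d, (if 1 < ‖h‖ then ‖h‖ₑ ^ (-b) else 0) < ⊤ := by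
  have h0 : 0 ≤ b := le_trans (Nat.cast_nonneg d) hb.le
  have hf := finite_integral_one_add_norm (E := Ed d) (μ := volume) (r := b) (by simpa using hb)
  have : ∀ h : Ed d, (if 1 < ‖h‖ then ‖h‖ₑ ^ (-b) else 0)
      ≤ ENNReal.ofReal (2 ^ b) * ENNReal.ofReal ((1 + ‖h‖) ^ (-b)) := by
    intro h
    split_ifs with hh
    · rw [← ofReal_norm, ENNReal.ofReal_rpow_of_pos (by linarith), ← ENNReal.ofReal_mul (by positivity)]
      apply ENNReal.ofReal_le_ofReal
      have h1 : (2 * ‖h‖) ^ (-b) ≤ (1 + ‖h‖) ^ (-b) :=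
        Real.rpow_le_rpow_of_nonpos (by linarith) (by linarith) (by linarith)
      rw [Real.mul_rpow (by norm_num) (by linarith), Real.rpow_neg (by norm_num)] at h1
      have : (0:ℝ) < 2 ^ b := by positivity
      rwa [inv_mul_le_iff₀ this] at h1
    · exact zero_le
  refine (lintegral_mono this).trans_lt ?_
  rw [lintegral_const_mul' _ _ ENNReal.ofReal_ne_top]
  exact ENNReal.mul_lt_top ENNReal.ofReal_lt_top hf

theorem aux_tail_scale (d : ℕ) (b : ℝ) {ρ : ℝ} (hρ : 0 < ρ) :
    ∫⁻ h : Ed d, (if ρ < ‖h‖ then ‖h‖ₑ ^ (-b) else 0) =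
      ENNReal.ofReal ρ ^ ((d : ℝ) - b) * ∫⁻ h : Ed d, (if 1 < ‖h‖ then ‖h‖ₑ ^ (-b) else 0) := by
  have h1 := aux_lscale d (fun h => if ρ < ‖h‖ then ‖h‖ₑ ^ (-b) else 0) hρ.ne'
  have hr0 : ENNReal.ofReal ρ ≠ 0 := by simpa using hρ
  have h2 : ∀ x : Ed d, (if ρ < ‖ρ • x‖ then ‖ρ • x‖ₑ ^ (-b) else 0)
      = ENNReal.ofReal ρ ^ (-b) * (if 1 < ‖x‖ then ‖x‖ₑ ^ (-b) else 0) := by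
    intro x
    have e : ρ < ‖ρ • x‖ ↔ 1 < ‖x‖ := by
      rw [norm_smul, Real.norm_of_nonneg hρ.le]
      exact lt_mul_iff_one_lt_right hρ
    simp only [e]
    split_ifs with hx
    · rw [enorm_smul, Real.enorm_of_nonneg hρ.le, ENNReal.mul_rpow_of_ne_zero hr0]
      rw [← ofReal_norm]
      simp; intro h; simp [h] at hx; linarith
    · simp
  simp_rw [h2] at h1
  rw [lintegral_const_mul' _ _ (by simp [ENNReal.rpow_eq_top_iff, hρ])] at h1
  have h3 : ENNReal.ofReal |(ρ ^ d)⁻¹| = ENNReal.ofReal ρ ^ (-(d : ℝ)) := by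
    rw [abs_of_pos (by positivity), ENNReal.ofReal_rpow_of_pos hρ, Real.rpow_neg hρ.le, Real.rpow_natCast]
  rw [h3] at h1
  rw [sub_eq_add_neg, ENNReal.rpow_add _ _ hr0 ENNReal.ofReal_ne_top, mul_assoc, h1, ← mul_assoc,
    ← ENNReal.rpow_add _ _ hr0 ENNReal.ofReal_ne_top]
  simp

theorem aux_meas2 (d : ℕ) {F : Type*} [NormedAddCommGroup F] (g : Ed d → F) (hg : Continuous g)
    (p : ℝ) : Measurable fun z : Ed d => ∫⁻ x, ‖g (x + z) - g x‖ₑ ^ p :=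
  (aux_meas d g hg p).lintegral_prod_left'

theorem aux_gag (d : ℕ) (a p : ℝ) (ha : 0 < a) (hp : 1 ≤ p) :
    ∃ C : ℝ≥0∞, C ≠ ⊤ ∧ ∀ {F : Type} [NormedAddCommGroup F] (g : Ed d → F), Continuous g →
      ∀ (Φ : Ed d → Ed d), MeasurePreserving Φ → ∀ M : ℝ, 1 ≤ M →
      (∀ x y, ‖Φ x - Φ y‖ ≤ M * ‖x - y‖) →
      ∫⁻ h, (∫⁻ x, ‖g (Φ (x + h)) - g (Φ x)‖ₑ ^ p) / ‖h‖ₑ ^ (a + d) ≤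
        C * ENNReal.ofReal M ^ a * ∫⁻ h, (∫⁻ x, ‖g (x + h) - g x‖ₑ ^ p) / ‖h‖ₑ ^ (a + d) := by
  set V := volume (Metric.ball (0 : Ed d) 1) with hV
  set s : ℝ := a + d with hs
  set T : ℝ≥0∞ := ∫⁻ h : Ed d, (if 1 < ‖h‖ then ‖h‖ₑ ^ (-(s + d)) else 0) with hT
  have hd0 : (0:ℝ) ≤ d := Nat.cast_nonneg d
  have hTf : T < ⊤ := aux_tail_fin d (by linarith)
  have hV0 : V ≠ 0 := (Metric.measure_ball_pos volume _ one_pos).ne'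
  have hVt : V ≠ ⊤ := measure_ball_lt_top.ne
  refine ⟨2 ^ p * V⁻¹ * 2 ^ s * T, ?_, ?_⟩
  · refine ENNReal.mul_ne_top (ENNReal.mul_ne_top (ENNReal.mul_ne_top ?_ ?_) ?_) hTf.ne
    · exact ENNReal.rpow_ne_top_of_nonneg (by linarith) (by norm_num)
    · exact ENNReal.inv_ne_top.2 hV0
    · exact ENNReal.rpow_ne_top_of_nonneg (by linarith) (by norm_num)
  intro F _ g hg Φ hΦ M hM hL
  set m := ENNReal.ofReal M with hm
  have hm0 : m ≠ 0 := by simp [hm]; linarith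
  have hmt : m ≠ ⊤ := ENNReal.ofReal_ne_top
  set W : Ed d → ℝ≥0∞ := fun z => ∫⁻ x, ‖g (x + z) - g x‖ₑ ^ p with hW
  have hWm : Measurable W := aux_meas2 d g hg p
  have hW0 : W 0 = 0 := by
    simp only [hW, add_zero, sub_self, enorm_zero]
    rw [ENNReal.zero_rpow_of_pos (by linarith)]
    simp
  set D := 2 ^ p * V⁻¹ * m ^ (-(d:ℝ)) with hD
  have hDt : D ≠ ⊤ := by
    refine ENNReal.mul_ne_top (ENNReal.mul_ne_top ?_ ?_) ?_
    · exact ENNReal.rpow_ne_top_of_nonneg (by linarith) (by norm_num)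
    · exact ENNReal.inv_ne_top.2 hV0
    · simp [ENNReal.rpow_eq_top_iff, hm0, hmt]
  -- the pointwise bound
  have hpt : ∀ h : Ed d, (∫⁻ x, ‖g (Φ (x + h)) - g (Φ x)‖ₑ ^ p) / ‖h‖ₑ ^ s ≤
      D * ∫⁻ z, W z * (if ‖z‖ / (2 * M) < ‖h‖ then ‖h‖ₑ ^ (-(s + d)) else 0) := by
    intro h
    by_cases h0 : h = 0
    · have : ∫⁻ x, ‖g (Φ (x + h)) - g (Φ x)‖ₑ ^ p = 0 := by
        simp only [h0, add_zero, sub_self, enorm_zero]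
        rw [ENNReal.zero_rpow_of_pos (by linarith)]
        simp
      rw [this]; simp
    have hn : 0 < ‖h‖ := norm_pos_iff.2 h0
    have he0 : ‖h‖ₑ ≠ 0 := by simpa using h0
    have het : ‖h‖ₑ ≠ ⊤ := enorm_ne_top
    have hc := aux_core d g hg Φ hΦ hL hp h
    rw [Measure.addHaar_ball_of_pos volume _ (by positivity), finrank_euclideanSpace, Fintype.card_fin,
      ENNReal.ofReal_pow (by positivity), ENNReal.ofReal_mul (by linarith), ofReal_norm,
      ← ENNReal.rpow_natCast, ENNReal.mul_rpow_of_nonneg _ _ hd0, ← hV, ← hm] at hc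
    have e1 : ∫⁻ z in Metric.ball (0 : Ed d) (2 * (M * ‖h‖)), W z
        = ∫⁻ z, W z * (if ‖z‖ / (2 * M) < ‖h‖ then 1 else 0) := by
      rw [← lintegral_indicator Metric.isOpen_ball.measurableSet]
      congr 1
      ext z
      simp only [Set.indicator, mem_ball_zero_iff]
      have : ‖z‖ < 2 * (M * ‖h‖) ↔ ‖z‖ / (2 * M) < ‖h‖ := by
        rw [div_lt_iff₀ (by linarith)]
        ring_nf
      simp only [this]
      split_ifs <;> simp
    have e2 : ∫⁻ z, W z * (if ‖z‖ / (2 * M) < ‖h‖ then ‖h‖ₑ ^ (-(s + d)) else 0) =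
        ‖h‖ₑ ^ (-(s + d)) * ∫⁻ z in Metric.ball (0 : Ed d) (2 * (M * ‖h‖)), W z := by
      rw [e1, ← lintegral_const_mul' _ _ (by simp [ENNReal.rpow_eq_top_iff, h0])]
      congr 1
      ext z
      split_ifs
      · ring
      · simp
    rw [e2]
    set I := ∫⁻ z in Metric.ball (0 : Ed d) (2 * (M * ‖h‖)), W z
    set J := ∫⁻ x, ‖g (Φ (x + h)) - g (Φ x)‖ₑ ^ p
    have hmd : m ^ (-(d:ℝ)) * m ^ (d:ℝ) = 1 := by
      rw [← ENNReal.rpow_add _ _ hm0 hmt]; simp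
    have hhd : ‖h‖ₑ ^ (-(s + d)) * ‖h‖ₑ ^ (d:ℝ) = (‖h‖ₑ ^ s)⁻¹ := by
      rw [← ENNReal.rpow_add _ _ he0 het, ← ENNReal.rpow_neg]; congr 1; ring
    have hVV : V⁻¹ * V = 1 := ENNReal.inv_mul_cancel hV0 hVt
    calc J / ‖h‖ₑ ^ s = (V⁻¹ * V) * (m ^ (-(d:ℝ)) * m ^ (d:ℝ)) * (‖h‖ₑ ^ (-(s + d)) * ‖h‖ₑ ^ (d:ℝ)) * J := by
          rw [hmd, hhd, hVV, div_eq_mul_inv]; ring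
      _ = V⁻¹ * m ^ (-(d:ℝ)) * ‖h‖ₑ ^ (-(s + d)) * (m ^ (d:ℝ) * ‖h‖ₑ ^ (d:ℝ) * V * J) := by ring
      _ ≤ V⁻¹ * m ^ (-(d:ℝ)) * ‖h‖ₑ ^ (-(s + d)) * (2 ^ p * I) := by gcongr
      _ = _ := by rw [hD]; ring
  have hker : Measurable (Function.uncurry fun h z : Ed d =>
      W z * (if ‖z‖ / (2 * M) < ‖h‖ then ‖h‖ₑ ^ (-(s + d)) else 0)) := by
    refine (hWm.comp measurable_snd).mul ?_
    refine Measurable.ite ?_ ?_ measurable_const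
    · exact measurableSet_lt (by fun_prop) (by fun_prop)
    · exact (measurable_fst.enorm).pow_const _
  have htail : ∀ z : Ed d, W z * ∫⁻ h : Ed d, (if ‖z‖ / (2 * M) < ‖h‖ then ‖h‖ₑ ^ (-(s + d)) else 0)
      = 2 ^ s * m ^ s * T * (W z / ‖z‖ₑ ^ s) := by
    intro z
    by_cases h0 : z = 0
    · rw [h0, hW0]; simp
    have hn : 0 < ‖z‖ := norm_pos_iff.2 h0
    rw [aux_tail_scale d _ (by positivity), ← hT, ENNReal.ofReal_div_of_pos (by linarith),
      ENNReal.ofReal_mul (by norm_num), ofReal_norm, ← hm,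
      show (d:ℝ) - (s + d) = - s by ring, ENNReal.rpow_neg, ENNReal.div_rpow_of_nonneg _ _ (by linarith),
      ENNReal.mul_rpow_of_nonneg _ _ (by linarith), ENNReal.inv_div]
    · rw [div_eq_mul_inv, div_eq_mul_inv]
      simp only [ENNReal.ofReal_ofNat]
      ring
    · left
      refine ENNReal.mul_ne_top ?_ ?_
      · exact ENNReal.rpow_ne_top_of_nonneg (by linarith) (by norm_num)
      · exact ENNReal.rpow_ne_top_of_nonneg (by linarith) hmt
    · left
      simp [ENNReal.rpow_eq_zero_iff, hm0, hmt]
      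
  calc _ ≤ ∫⁻ h, D * ∫⁻ z, W z * (if ‖z‖ / (2 * M) < ‖h‖ then ‖h‖ₑ ^ (-(s + d)) else 0) :=
        lintegral_mono hpt
    _ = D * ∫⁻ z, ∫⁻ h, W z * (if ‖z‖ / (2 * M) < ‖h‖ then ‖h‖ₑ ^ (-(s + d)) else 0) := by
        rw [lintegral_const_mul' _ _ hDt, lintegral_lintegral_swap hker.aemeasurable]
    _ = D * ∫⁻ z, W z * ∫⁻ h : Ed d, (if ‖z‖ / (2 * M) < ‖h‖ then ‖h‖ₑ ^ (-(s + d)) else 0) := by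
        congr 2
        ext z
        rw [lintegral_const_mul]
        refine Measurable.ite ?_ ?_ measurable_const
        · exact measurableSet_lt (by fun_prop) (by fun_prop)
        · exact (measurable_id.enorm).pow_const _
    _ = D * (2 ^ s * m ^ s * T * ∫⁻ z, W z / ‖z‖ₑ ^ s) := by
        simp_rw [htail]
        rw [lintegral_const_mul']
        refine ENNReal.mul_ne_top (ENNReal.mul_ne_top ?_ ?_) hTf.ne
        · exact ENNReal.rpow_ne_top_of_nonneg (by linarith) (by norm_num)
        · exact ENNReal.rpow_ne_top_of_nonneg (by linarith) hmt
    _ = _ := by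
        have : m ^ (-(d:ℝ)) * m ^ s = m ^ a := by
          rw [← ENNReal.rpow_add _ _ hm0 hmt, hs]; congr 1; ring
        rw [hD, ← this]
        ring

theorem aux_gag_eq (d : ℕ) {F : Type*} [NormedAddCommGroup F] (f : Ed d → F) (hf : Continuous f)
    (p s : ℝ) :
    ∫⁻ x, ∫⁻ y, (‖f x - f y‖₊ : ℝ≥0∞) ^ p / (‖x - y‖₊ : ℝ≥0∞) ^ s
      = ∫⁻ h, (∫⁻ x, ‖f (x + h) - f x‖ₑ ^ p) / ‖h‖ₑ ^ s := by
  have hm : Measurable (Function.uncurry fun x h : Ed d => ‖f (x + h) - f x‖ₑ ^ p / ‖h‖ₑ ^ s) := by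
    exact (aux_meas d f hf p).div (measurable_snd.enorm.pow_const s)
  calc _ = ∫⁻ x, ∫⁻ h, ‖f (x + h) - f x‖ₑ ^ p / ‖h‖ₑ ^ s := by
        congr 1
        ext x
        rw [← lintegral_add_left_eq_self _ x]
        congr 1
        ext h
        change ‖f x - f (x + h)‖ₑ ^ p / ‖x - (x + h)‖ₑ ^ s = _
        rw [← neg_sub, enorm_neg, sub_add_cancel_left, enorm_neg]
    _ = ∫⁻ h, ∫⁻ x, ‖f (x + h) - f x‖ₑ ^ p / ‖h‖ₑ ^ s := lintegral_lintegral_swap hm.aemeasurable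
    _ = _ := by
        congr 1
        ext h
        simp_rw [div_eq_mul_inv]
        rw [lintegral_mul_const]
        exact (aux_meas d f hf p).comp (measurable_id.prodMk measurable_const)

noncomputable def auxK (d : ℕ) (s : ℝ) (κ : Ed d) : ℝ≥0∞ :=
  ∫⁻ h : Ed d, ‖Complex.exp (Complex.I * (⟪h, κ⟫ : ℂ)) - 1‖ₑ ^ (2 : ℕ) / ‖h‖ₑ ^ s

theorem auxK_rot (d : ℕ) (s : ℝ) (κ κ' : Ed d) (h : ‖κ‖ = ‖κ'‖) : auxK d s κ = auxK d s κ' := by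
  set R := (Submodule.span ℝ {κ - κ'})ᗮ.reflection with hR
  have hRk : R κ = κ' := Submodule.reflection_sub h
  unfold auxK
  rw [← R.measurePreserving.lintegral_comp_emb R.toHomeomorph.measurableEmbedding
    (fun h : Ed d => ‖Complex.exp (Complex.I * (⟪h, κ'⟫ : ℂ)) - 1‖ₑ ^ (2 : ℕ) / ‖h‖ₑ ^ s)]
  congr 1
  ext h
  rw [← hRk, R.inner_map_map, ← ofReal_norm (R h), R.norm_map, ofReal_norm]

theorem auxK_scale (d : ℕ) (s : ℝ) (e : Ed d) {c : ℝ} (hc : 0 < c) (hs : 0 ≤ s):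
    auxK d s (c • e) = ENNReal.ofReal c ^ (s - d) * auxK d s e := by
  have h1 := aux_lscale d
    (fun h : Ed d => ‖Complex.exp (Complex.I * (⟪h, e⟫ : ℂ)) - 1‖ₑ ^ (2 : ℕ) / ‖h‖ₑ ^ s) hc.ne'
  have hr0 : ENNReal.ofReal c ≠ 0 := by simpa using hc
  have h2 : ∀ h : Ed d, ‖Complex.exp (Complex.I * (⟪c • h, e⟫ : ℂ)) - 1‖ₑ ^ (2 : ℕ) / ‖c • h‖ₑ ^ s
      = ENNReal.ofReal c ^ (-s) *
        (‖Complex.exp (Complex.I * (⟪h, c • e⟫ : ℂ)) - 1‖ₑ ^ (2 : ℕ) / ‖h‖ₑ ^ s) := by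
    intro x
    rw [real_inner_smul_left, ← real_inner_smul_right, enorm_smul, Real.enorm_of_nonneg hc.le,
      ENNReal.mul_rpow_of_nonneg _ _ hs, div_eq_mul_inv, div_eq_mul_inv, ENNReal.mul_inv,
      ENNReal.rpow_neg]
    · ring
    · left; simp [ENNReal.rpow_eq_zero_iff, hc]
    · left; exact ENNReal.rpow_ne_top_of_nonneg hs ENNReal.ofReal_ne_top
  simp_rw [h2] at h1
  rw [lintegral_const_mul' _ _ (by simp [ENNReal.rpow_eq_top_iff, hc])] at h1
  have h3 : ENNReal.ofReal |(c ^ d)⁻¹| = ENNReal.ofReal c ^ (-(d : ℝ)) := by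
    rw [abs_of_pos (by positivity), ENNReal.ofReal_rpow_of_pos hc, Real.rpow_neg hc.le, Real.rpow_natCast]
  rw [h3] at h1
  unfold auxK
  rw [sub_eq_add_neg, ENNReal.rpow_add _ _ hr0 ENNReal.ofReal_ne_top, mul_assoc, ← h1, ← mul_assoc,
    ← ENNReal.rpow_add _ _ hr0 ENNReal.ofReal_ne_top]
  simp

theorem auxK_eq (d : ℕ) (s : ℝ) (e : Ed d) (he : ‖e‖ = 1) (hs : d < s) (κ : Ed d) :
    auxK d s κ = auxK d s e * ‖κ‖ₑ ^ (s - d) := by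
  have hd0 : (0:ℝ) ≤ d := Nat.cast_nonneg d
  by_cases h0 : κ = 0
  · subst h0
    rw [enorm_zero, ENNReal.zero_rpow_of_pos (by linarith)]
    simp [auxK]
  · rw [auxK_rot d s κ (‖κ‖ • e) (by rw [norm_smul, he]; simp), auxK_scale d s e (norm_pos_iff.2 h0)
      (by linarith), ofReal_norm, mul_comm]

theorem auxK_ne_zero (d : ℕ) (s : ℝ) (e : Ed d) (he : ‖e‖ = 1) (hs : 0 ≤ s) : auxK d s e ≠ 0 := by
  intro h
  unfold auxK at h
  have hc : Continuous fun h : Ed d => Complex.exp (Complex.I * (⟪h, e⟫ : ℂ)) - 1 := by fun_prop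
  rw [lintegral_eq_zero_iff] at h
  swap
  · exact ((hc.measurable.enorm).pow_const 2).div (measurable_id.enorm.pow_const s)
  have : (fun h : Ed d => Complex.exp (Complex.I * (⟪h, e⟫ : ℂ)) - 1) =ᵐ[volume] fun _ => 0 := by
    filter_upwards [h] with x hx
    simp only [Pi.zero_apply, ENNReal.div_eq_zero_iff] at hx
    rcases hx with hx | hx
    · simpa using hx
    · exact absurd hx (ENNReal.rpow_ne_top_of_nonneg hs enorm_ne_top)
  have h2 := (hc.ae_eq_iff_eq volume continuous_const).1 this
  have h3 := congrFun h2 (Real.pi • e)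
  simp only [real_inner_smul_left, real_inner_self_eq_norm_sq, he] at h3
  rw [mul_comm] at h3
  norm_num at h3

theorem auxK_fin (d : ℕ) (hd : 1 ≤ d) (s : ℝ) (e : Ed d) (he : ‖e‖ = 1) (hs : d < s) (hs2 : s < d + 2) :
    auxK d s e ≠ ⊤ := by
  have hd0 : (0:ℝ) ≤ d := Nat.cast_nonneg d
  have hI : IntegrableOn (fun h : Ed d => ‖h‖ ^ (-(s - 2))) (Metric.ball 0 2) := by
    apply integrableOn_ball_of_norm_le_rpow (C := 1) (α := s - 2) _ _
    · filter_upwards with x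
      rw [Real.norm_of_nonneg (by positivity), one_mul]
    · exact (measurable_norm.pow_const _).aestronglyMeasurable
    · simpa using hd
    · simp; linarith
  have hI2 := hI.lintegral_lt_top
  rw [← lintegral_indicator Metric.isOpen_ball.measurableSet] at hI2
  have hT := aux_tail_fin d hs
  have hmeas : Measurable fun h : Ed d => (if 1 < ‖h‖ then ‖h‖ₑ ^ (-s) else 0) := by
    refine Measurable.ite ?_ ?_ measurable_const
    · exact measurableSet_lt (by fun_prop) (by fun_prop)
    · exact (measurable_id.enorm).pow_const _
  have hle : ∀ h : Ed d, ‖Complex.exp (Complex.I * (⟪h, e⟫ : ℂ)) - 1‖ₑ ^ (2 : ℕ) / ‖h‖ₑ ^ s ≤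
      4 * (if 1 < ‖h‖ then ‖h‖ₑ ^ (-s) else 0) +
      (Metric.ball (0 : Ed d) 2).indicator (fun h => ENNReal.ofReal (‖h‖ ^ (-(s - 2)))) h := by
    intro h
    by_cases h1 : 1 < ‖h‖
    · refine le_add_right ?_
      rw [if_pos h1, ENNReal.rpow_neg, div_eq_mul_inv]
      gcongr
      have : ‖Complex.exp (Complex.I * (⟪h, e⟫ : ℂ)) - 1‖ₑ ≤ 2 := by
        refine (enorm_sub_le).trans ?_
        rw [← ofReal_norm, mul_comm, Complex.norm_exp_ofReal_mul_I]
        norm_num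
      calc _ ≤ (2:ℝ≥0∞) ^ 2 := by gcongr
        _ = 4 := by norm_num
    · refine le_add_left ?_
      by_cases h0 : h = 0
      · simp [h0]
      rw [Set.indicator_of_mem (by simp; linarith)]
      have hn : 0 < ‖h‖ := norm_pos_iff.2 h0
      have he0 : ‖h‖ₑ ≠ 0 := by simpa using h0
      have : ‖Complex.exp (Complex.I * (⟪h, e⟫ : ℂ)) - 1‖ₑ ≤ ‖h‖ₑ := by
        rw [← ofReal_norm, ← ofReal_norm]
        apply ENNReal.ofReal_le_ofReal
        refine (Real.norm_exp_I_mul_ofReal_sub_one_le).trans ?_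
        simpa [he] using norm_inner_le_norm (𝕜 := ℝ) h e
      rw [← ENNReal.ofReal_rpow_of_pos hn, ofReal_norm, neg_sub, sub_eq_add_neg (2:ℝ) s,
        ENNReal.rpow_add _ _ he0 enorm_ne_top, ENNReal.rpow_neg, div_eq_mul_inv]
      gcongr
      exact_mod_cast pow_le_pow_left' this 2
  refine ((lintegral_mono hle).trans_lt ?_).ne
  rw [lintegral_add_left (hmeas.const_mul _), lintegral_const_mul _ hmeas]
  exact ENNReal.add_lt_top.2 ⟨ENNReal.mul_lt_top (by norm_num) hT, hI2⟩

theorem aux_sob_gag (d : ℕ) (s : ℝ) (e : Ed d) (he : ‖e‖ = 1) (hs : d < s)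
    (f : Ed d → ℂ) (h1 : Integrable f) (h2 : MemLp f 2) :
    ∫⁻ h, (∫⁻ x, ‖f (x + h) - f x‖ₑ ^ (2 : ℝ)) / ‖h‖ₑ ^ s = auxK d s e *
      (ENNReal.ofReal ((2 * Real.pi) ^ (-(d : ℝ))) *
        ∫⁻ κ, ‖κ‖ₑ ^ (s - d) * ‖ftransform d f κ‖ₑ ^ (2 : ℕ)) := by
  have hd0 : (0:ℝ) ≤ d := Nat.cast_nonneg d
  have hfm : Measurable (ftransform d f) := (aux_ft_cont d f h1).measurable
  have hc : Continuous fun q : Ed d × Ed d => Complex.exp (Complex.I * (⟪q.1, q.2⟫ : ℂ)) - 1 := by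
    fun_prop
  have hm : Measurable (Function.uncurry fun h κ : Ed d =>
      ‖Complex.exp (Complex.I * (⟪h, κ⟫ : ℂ)) - 1‖ₑ ^ (2 : ℕ) / ‖h‖ₑ ^ s *
        ‖ftransform d f κ‖ₑ ^ (2 : ℕ)) := by
    exact ((hc.measurable.enorm.pow_const 2).div (measurable_fst.enorm.pow_const s)).mul
      ((hfm.comp measurable_snd).enorm.pow_const 2)
  have hm1 : ∀ h : Ed d, Measurable fun κ : Ed d =>
      ‖Complex.exp (Complex.I * (⟪h, κ⟫ : ℂ)) - 1‖ₑ ^ (2 : ℕ) * ‖ftransform d f κ‖ₑ ^ (2 : ℕ) := by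
    intro h
    have : Continuous fun κ : Ed d => Complex.exp (Complex.I * (⟪h, κ⟫ : ℂ)) - 1 := by fun_prop
    exact (this.measurable.enorm.pow_const 2).mul (hfm.enorm.pow_const 2)
  set c := ENNReal.ofReal ((2 * Real.pi) ^ (-(d : ℝ))) with hcdef
  have hct : c ≠ ⊤ := ENNReal.ofReal_ne_top
  calc _ = ∫⁻ h : Ed d, c * ∫⁻ κ, ‖Complex.exp (Complex.I * (⟪h, κ⟫ : ℂ)) - 1‖ₑ ^ (2 : ℕ) / ‖h‖ₑ ^ s *
        ‖ftransform d f κ‖ₑ ^ (2 : ℕ) := by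
        congr 1
        ext h
        simp_rw [ENNReal.rpow_ofNat]
        rw [aux_omega d f h1 h2 h, div_eq_mul_inv, mul_assoc, ← lintegral_mul_const _ (hm1 h)]
        congr 2
        ext κ
        rw [div_eq_mul_inv]; ring
    _ = c * ∫⁻ κ, ∫⁻ h : Ed d, ‖Complex.exp (Complex.I * (⟪h, κ⟫ : ℂ)) - 1‖ₑ ^ (2 : ℕ) / ‖h‖ₑ ^ s *
        ‖ftransform d f κ‖ₑ ^ (2 : ℕ) := by
        rw [lintegral_const_mul' _ _ hct, lintegral_lintegral_swap hm.aemeasurable]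
    _ = c * ∫⁻ κ, auxK d s e * (‖κ‖ₑ ^ (s - d) * ‖ftransform d f κ‖ₑ ^ (2 : ℕ)) := by
        congr 2
        ext κ
        rw [lintegral_mul_const' _ _ (by simp), ← mul_assoc, ← auxK_eq d s e he hs]
        rfl
    _ = _ := by
        rw [lintegral_const_mul _ (by exact (measurable_id.enorm.pow_const _).mul (hfm.enorm.pow_const 2))]
        ring

theorem aux_one_up (d : ℕ) (f : Ed d → ℂ) (h1 : Integrable f) (h2 : MemLp f 2) (z : Ed d) :
    ∫⁻ x, ‖f (x + z) - f x‖ₑ ^ (2 : ℝ) ≤ ‖z‖ₑ ^ (2 : ℕ) *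
      (ENNReal.ofReal ((2 * Real.pi) ^ (-(d : ℝ))) *
        ∫⁻ κ, ‖κ‖ₑ ^ (2 : ℕ) * ‖ftransform d f κ‖ₑ ^ (2 : ℕ)) := by
  simp_rw [ENNReal.rpow_ofNat]
  rw [aux_omega d f h1 h2 z, mul_left_comm, ← lintegral_const_mul' (‖z‖ₑ ^ (2:ℕ)) _ (by simp)]
  refine mul_le_mul' le_rfl (lintegral_mono fun κ => ?_)
  beta_reduce
  rw [← mul_assoc, ← mul_pow ‖z‖ₑ ‖κ‖ₑ]
  refine mul_le_mul' (pow_le_pow_left' ?_ 2) le_rfl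
  refine (Real.enorm_exp_I_mul_ofReal_sub_one_le).trans ?_
  rw [← ofReal_norm, ← ofReal_norm, ← ofReal_norm, ← ENNReal.ofReal_mul (norm_nonneg _)]
  exact ENNReal.ofReal_le_ofReal (norm_inner_le_norm (𝕜 := ℝ) z κ)

theorem aux_one_lim (y : ℝ) : Filter.Tendsto (fun n : ℕ => ((n : ℝ≥0∞) + 1) ^ 2 *
    ‖Complex.exp (Complex.I * (((n : ℝ) + 1)⁻¹ * y : ℝ)) - 1‖ₑ ^ (2 : ℕ)) Filter.atTop
    (nhds (‖y‖ₑ ^ (2 : ℕ))) := by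
  have hd : HasDerivAt (fun t : ℝ => Complex.exp (Complex.I * (t * y : ℝ))) (Complex.I * y) 0 := by
    have h1 : HasDerivAt (fun t : ℝ => Complex.I * ((t * y : ℝ) : ℂ)) (Complex.I * y) 0 := by
      have : HasDerivAt (fun t : ℝ => t * y) y 0 := by
        simpa using (hasDerivAt_id (0:ℝ)).mul_const y
      exact (this.ofReal_comp).const_mul _
    simpa using h1.cexp
  have h2 := hd.tendsto_slope_zero
  have h3 : Filter.Tendsto (fun n : ℕ => ((n : ℝ) + 1)⁻¹) Filter.atTop (nhdsWithin 0 {0}ᶜ) := by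
    rw [tendsto_nhdsWithin_iff]
    constructor
    · simpa using tendsto_one_div_add_atTop_nhds_zero_nat (𝕜 := ℝ)
    · filter_upwards with n
      have : (n:ℝ) + 1 ≠ 0 := by positivity
      simpa using this
  have h4 := (ENNReal.continuous_pow 2).continuousAt.tendsto.comp
    ((continuous_enorm.continuousAt.tendsto.comp (h2.comp h3)))
  have e1 : ‖Complex.I * (y : ℂ)‖ₑ = ‖y‖ₑ := by
    rw [enorm_mul]
    rw [← ofReal_norm, ← ofReal_norm, ← ofReal_norm]
    simp
  rw [e1] at h4
  refine h4.congr ?_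
  intro n
  simp only [Function.comp_apply, zero_add, inv_inv, zero_mul, Complex.ofReal_zero, mul_zero,
    Complex.exp_zero]
  rw [enorm_smul, mul_pow]
  congr 2
  rw [Real.enorm_of_nonneg (by positivity), ENNReal.ofReal_add (by positivity) (by norm_num)]
  simp

theorem aux_one_low (d : ℕ) (f : Ed d → ℂ) (h1 : Integrable f) (h2 : MemLp f 2) (B : ℝ≥0∞)
    (hB : ∀ h, h ≠ 0 → ∫⁻ x, ‖f (x + h) - f x‖ₑ ^ (2 : ℝ) ≤ ‖h‖ₑ ^ (2 : ℕ) * B) :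
      (ENNReal.ofReal ((2 * Real.pi) ^ (-(d : ℝ))) *
        ∫⁻ κ, ‖κ‖ₑ ^ (2 : ℕ) * ‖ftransform d f κ‖ₑ ^ (2 : ℕ)) ≤ d * B := by
  have hfm : Measurable (ftransform d f) := (aux_ft_cont d f h1).measurable
  set c := ENNReal.ofReal ((2 * Real.pi) ^ (-(d : ℝ))) with hcdef
  have hct : c ≠ ⊤ := ENNReal.ofReal_ne_top
  have key : ∀ i : Fin d, c * ∫⁻ κ : Ed d, ‖κ i‖ₑ ^ (2 : ℕ) * ‖ftransform d f κ‖ₑ ^ (2 : ℕ) ≤ B := by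
    intro i
    set hn : ℕ → Ed d := fun n => ((n : ℝ) + 1)⁻¹ • EuclideanSpace.single i (1:ℝ) with hhn
    have hinner : ∀ n (κ : Ed d), ⟪hn n, κ⟫ = ((n : ℝ) + 1)⁻¹ * κ i := by
      intro n κ
      rw [hhn, real_inner_smul_left, EuclideanSpace.inner_single_left]
      simp
    have hnn : ∀ n, ‖hn n‖ₑ = ((n : ℝ≥0∞) + 1)⁻¹ := by
      intro n
      have hpos : (0:ℝ) < (n:ℝ) + 1 := by positivity
      rw [← ofReal_norm, hhn, norm_smul, Real.norm_of_nonneg (by positivity)]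
      simp only [EuclideanSpace.norm_single, norm_one, mul_one]
      rw [ENNReal.ofReal_inv_of_pos hpos, ENNReal.ofReal_add (by positivity) (by norm_num)]
      simp
    set G : ℕ → Ed d → ℝ≥0∞ := fun n κ => ((n : ℝ≥0∞) + 1) ^ 2 *
      (‖Complex.exp (Complex.I * (⟪hn n, κ⟫ : ℂ)) - 1‖ₑ ^ (2 : ℕ) * ‖ftransform d f κ‖ₑ ^ (2 : ℕ)) with hG
    have hGm : ∀ n, Measurable (G n) := by
      intro n
      have : Continuous fun κ : Ed d => Complex.exp (Complex.I * (⟪hn n, κ⟫ : ℂ)) - 1 := by fun_prop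
      exact ((this.measurable.enorm.pow_const 2).mul (hfm.enorm.pow_const 2)).const_mul _
    have hGi : ∀ n, c * ∫⁻ κ, G n κ ≤ B := by
      intro n
      have ha0 : ((n : ℝ≥0∞) + 1) ≠ 0 := by simp
      have hat : ((n : ℝ≥0∞) + 1) ≠ ⊤ := by simp
      rw [hG, lintegral_const_mul' _ _ (by simp), mul_left_comm, ← aux_omega d f h1 h2]
      have hne : hn n ≠ 0 := by
        intro h
        have := hnn n
        rw [h, enorm_zero] at this
        exact (ENNReal.inv_ne_zero.2 hat) this.symm
      have := hB (hn n) hne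
      rw [hnn] at this
      simp_rw [ENNReal.rpow_ofNat] at this
      calc _ ≤ ((n : ℝ≥0∞) + 1) ^ 2 * ((((n : ℝ≥0∞) + 1)⁻¹) ^ 2 * B) := by gcongr
        _ = B := by rw [← mul_assoc, ← mul_pow, ENNReal.mul_inv_cancel ha0 hat]; simp
    have hlim : ∀ κ : Ed d, Filter.Tendsto (fun n => G n κ) Filter.atTop
        (nhds (‖κ i‖ₑ ^ (2 : ℕ) * ‖ftransform d f κ‖ₑ ^ (2 : ℕ))) := by
      intro κ
      have := ENNReal.Tendsto.mul_const (aux_one_lim (κ i)) (b := ‖ftransform d f κ‖ₑ ^ (2 : ℕ))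
        (Or.inr (by simp))
      refine this.congr ?_
      intro n
      rw [hG]
      simp only [hinner]
      rw [mul_assoc]
    calc c * ∫⁻ κ : Ed d, ‖κ i‖ₑ ^ (2 : ℕ) * ‖ftransform d f κ‖ₑ ^ (2 : ℕ)
        = ∫⁻ κ : Ed d, Filter.liminf (fun n => c * G n κ) Filter.atTop := by
          rw [← lintegral_const_mul' _ _ hct]
          congr 1
          ext κ
          exact (ENNReal.Tendsto.const_mul (hlim κ) (Or.inr hct)).liminf_eq.symm
      _ ≤ Filter.liminf (fun n => ∫⁻ κ, c * G n κ) Filter.atTop :=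
          lintegral_liminf_le fun n => (hGm n).const_mul c
      _ ≤ B := by
          refine Filter.liminf_le_of_le (by isBoundedDefault) ?_
          intro b hb
          obtain ⟨n, hn⟩ := hb.exists
          rw [lintegral_const_mul' _ _ hct] at hn
          exact hn.trans (hGi n)
  have hsum : ∀ κ : Ed d, ‖κ‖ₑ ^ (2 : ℕ) = ∑ i, ‖κ i‖ₑ ^ (2 : ℕ) := by
    intro κ
    rw [← ofReal_norm, ← ENNReal.ofReal_pow (norm_nonneg _), EuclideanSpace.norm_sq_eq,
      ENNReal.ofReal_sum_of_nonneg (fun i _ => by positivity)]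
    congr 1
    ext i
    rw [ENNReal.ofReal_pow (norm_nonneg _), ofReal_norm]
  simp_rw [hsum, Finset.sum_mul]
  rw [lintegral_finsetSum, Finset.mul_sum]
  · refine (Finset.sum_le_sum fun i _ => key i).trans ?_
    simp
  · intro i _
    have : Continuous fun κ : Ed d => κ i := by fun_prop
    exact (this.measurable.enorm.pow_const 2).mul (hfm.enorm.pow_const 2)

theorem aux_mp (d : ℕ) (Φ : Ed d → Ed d) (M : ℝ) (h : IsMPDiffeo d Φ M) :
    MeasurePreserving Φ ∧ 1 ≤ M ∧ ∀ x y, ‖Φ x - Φ y‖ ≤ M * ‖x - y‖ := by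
  obtain ⟨h1, -, h2, h3, h4⟩ := h
  refine ⟨⟨h1.continuous.measurable, h2⟩, h3, fun x y => ?_⟩
  exact Convex.norm_image_sub_le_of_norm_fderiv_le (𝕜 := ℝ) (s := Set.univ)
    (fun z _ => (h1.differentiable (by norm_num)) z) (fun z _ => h4 z) convex_univ
    (Set.mem_univ y) (Set.mem_univ x)

theorem aux_sob_sq (d : ℕ) (hd : 1 ≤ d) (θ : ℝ) (h0 : 0 ≤ θ) (h1 : θ ≤ 1) :
    ∃ C : ℝ≥0∞, C ≠ ⊤ ∧ ∀ (Φ : Ed d → Ed d), MeasurePreserving Φ → ∀ M : ℝ, 1 ≤ M →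
      (∀ x y, ‖Φ x - Φ y‖ ≤ M * ‖x - y‖) → ∀ g : Ed d → ℂ, Continuous g → Integrable g →
      MemLp g 2 →
      ENNReal.ofReal ((2 * Real.pi) ^ (-(d : ℝ))) *
        ∫⁻ κ, ‖κ‖ₑ ^ (2 * θ) * ‖ftransform d (fun x => g (Φ x)) κ‖ₑ ^ (2 : ℕ) ≤
      C * ENNReal.ofReal M ^ (2 * θ) * (ENNReal.ofReal ((2 * Real.pi) ^ (-(d : ℝ))) *
        ∫⁻ κ, ‖κ‖ₑ ^ (2 * θ) * ‖ftransform d g κ‖ₑ ^ (2 : ℕ)) := by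
  have hcomp : ∀ (Φ : Ed d → Ed d), MeasurePreserving Φ → ∀ g : Ed d → ℂ, Integrable g →
      MemLp g 2 → Integrable (fun x => g (Φ x)) ∧ MemLp (fun x => g (Φ x)) 2 := by
    intro Φ hΦ g g1 g2
    exact ⟨hΦ.integrable_comp_of_integrable g1, g2.comp_measurePreserving hΦ⟩
  rcases h0.eq_or_lt with h0 | h0
  · -- θ = 0
    subst h0
    refine ⟨1, by simp, ?_⟩
    intro Φ hΦ M hM hL g gc g1 g2
    obtain ⟨f1, f2⟩ := hcomp Φ hΦ g g1 g2
    simp only [mul_zero, ENNReal.rpow_zero, one_mul]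
    rw [aux_plancherel d _ f1 f2, aux_plancherel d _ g1 g2,
      hΦ.lintegral_comp (f := fun x => ‖g x‖ₑ ^ (2 : ℕ)) (gc.measurable.enorm.pow_const 2)]
  rcases h1.eq_or_lt with h1 | h1
  · -- θ = 1
    subst h1
    refine ⟨d * (2 ^ (2:ℝ) * 2 ^ d * 2 ^ 2), ?_, ?_⟩
    · refine ENNReal.mul_ne_top (by simp) (ENNReal.mul_ne_top (ENNReal.mul_ne_top ?_ ?_) ?_)
      · simp
      · simp
      · simp
    intro Φ hΦ M hM hL g gc g1 g2
    obtain ⟨f1, f2⟩ := hcomp Φ hΦ g g1 g2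
    simp only [mul_one, ENNReal.rpow_ofNat]
    set S := ENNReal.ofReal ((2 * Real.pi) ^ (-(d : ℝ))) *
        ∫⁻ κ, ‖κ‖ₑ ^ 2 * ‖ftransform d g κ‖ₑ ^ (2 : ℕ) with hS
    refine (aux_one_low d _ f1 f2 (2 ^ 2 * 2 ^ d * 2 ^ 2 * ENNReal.ofReal M ^ 2 * S) ?_).trans ?_
    swap
    · apply le_of_eq; ring
    intro h hh
    have hn : 0 < ‖h‖ := norm_pos_iff.2 hh
    have hc := aux_core d g gc Φ hΦ hL (p := 2) (by norm_num) h
    set t := M * ‖h‖ with ht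
    have htp : 0 < t := by positivity
    have hbd : ∫⁻ z in Metric.ball (0 : Ed d) (2 * t), ∫⁻ x, ‖g (x + z) - g x‖ₑ ^ (2:ℝ)
        ≤ ∫⁻ z in Metric.ball (0 : Ed d) (2 * t), ENNReal.ofReal (2 * t) ^ 2 * S := by
      refine setLIntegral_mono' Metric.isOpen_ball.measurableSet ?_
      intro z hz
      refine (aux_one_up d g g1 g2 z).trans ?_
      gcongr
      rw [← ofReal_norm]
      exact ENNReal.ofReal_le_ofReal (mem_ball_zero_iff.1 hz).le
    rw [setLIntegral_const, Measure.addHaar_ball_of_pos volume _ (by positivity),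
      finrank_euclideanSpace, Fintype.card_fin] at hbd
    rw [Measure.addHaar_ball_of_pos volume _ htp, finrank_euclideanSpace, Fintype.card_fin] at hc
    have hV0 : volume (Metric.ball (0 : Ed d) 1) ≠ 0 := (Metric.measure_ball_pos volume _ one_pos).ne'
    have hVt : volume (Metric.ball (0 : Ed d) 1) ≠ ⊤ := measure_ball_lt_top.ne
    set V := volume (Metric.ball (0 : Ed d) 1)
    set J := ∫⁻ x, ‖g (Φ (x + h)) - g (Φ x)‖ₑ ^ (2:ℝ)
    have hA0 : ENNReal.ofReal (t ^ d) * V ≠ 0 := mul_ne_zero (by simp; positivity) hV0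
    have hAt : ENNReal.ofReal (t ^ d) * V ≠ ⊤ := ENNReal.mul_ne_top ENNReal.ofReal_ne_top hVt
    rw [← ENNReal.mul_le_mul_iff_right hA0 hAt]
    refine hc.trans ?_
    refine (mul_le_mul_right hbd _).trans (le_of_eq ?_)
    have e1 : ENNReal.ofReal ((2 * t) ^ d) = 2 ^ d * ENNReal.ofReal (t ^ d) := by
      rw [mul_pow, ENNReal.ofReal_mul (by positivity), ENNReal.ofReal_pow (by norm_num),
        ENNReal.ofReal_ofNat]
    have e2 : ENNReal.ofReal (2 * t) = 2 * (ENNReal.ofReal M * ‖h‖ₑ) := by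
      rw [ENNReal.ofReal_mul (by norm_num), ht, ENNReal.ofReal_mul (by linarith), ofReal_norm,
        ENNReal.ofReal_ofNat]
    rw [e1, e2, ENNReal.rpow_ofNat]
    ring
  · -- 0 < θ < 1
    obtain ⟨C, hC, hmain⟩ := aux_gag d (2 * θ) 2 (by linarith) (by norm_num)
    refine ⟨C, hC, ?_⟩
    intro Φ hΦ M hM hL g gc g1 g2
    obtain ⟨f1, f2⟩ := hcomp Φ hΦ g g1 g2
    have := hmain g gc Φ hΦ M hM hL
    set e : Ed d := EuclideanSpace.single ⟨0, hd⟩ (1:ℝ)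
    have he : ‖e‖ = 1 := by simp [e]
    have hs : (d:ℝ) < 2 * θ + d := by linarith
    rw [aux_sob_gag d (2 * θ + d) e he hs (fun x => g (Φ x)) f1 f2,
      aux_sob_gag d (2 * θ + d) e he hs g g1 g2, add_sub_cancel_right] at this
    have hK0 := auxK_ne_zero d (2 * θ + d) e he (by positivity)
    have hKt := auxK_fin d hd (2 * θ + d) e he hs (by linarith)
    rw [mul_left_comm (C * ENNReal.ofReal M ^ (2 * θ))] at this
    exact (ENNReal.mul_le_mul_iff_right hK0 hKt).1 this

/-- For a measure-preserving `C¹` diffeomorphism `Φ` with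
`sup ‖DΦ‖ ≤ M`, `M ≥ 1`, and every Schwartz `g`:
(i) `{g∘Φ}_r ≤ M^r {g}_r` for `0 < r < 1`;
(ii) `[g∘Φ]_{r,p} ≤ C(d,r,p) M^r [g]_{r,p}` for `0 < r < 1`, `2 ≤ p < ∞`;
(iii) `[g∘Φ]_θ ≤ C(d,θ) M^θ [g]_θ` for `0 ≤ θ ≤ 1`;
with `C` independent of `Φ`, `M` and `g`. -/
theorem stmt15 (d : ℕ) (hd : 1 ≤ d) :
    (∀ (Φ : Ed d → Ed d) (M : ℝ), IsMPDiffeo d Φ M → ∀ r : ℝ, 0 < r → r < 1 →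
      ∀ g : SchwartzMap (Ed d) ℝ,
        holderSemi d r (fun ξ => g (Φ ξ)) ≤ ENNReal.ofReal (M ^ r) * holderSemi d r ⇑g) ∧
    (∀ r p : ℝ, 0 < r → r < 1 → 2 ≤ p →
      ∃ C : ℝ, 0 < C ∧ ∀ (Φ : Ed d → Ed d) (M : ℝ), IsMPDiffeo d Φ M →
        ∀ g : SchwartzMap (Ed d) ℝ,
          gagliardo d r p (fun ξ => g (Φ ξ))
            ≤ ENNReal.ofReal C * ENNReal.ofReal (M ^ r) * gagliardo d r p ⇑g) ∧
    (∀ θ : ℝ, 0 ≤ θ → θ ≤ 1 →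
      ∃ C : ℝ, 0 < C ∧ ∀ (Φ : Ed d → Ed d) (M : ℝ), IsMPDiffeo d Φ M →
        ∀ g : SchwartzMap (Ed d) ℝ,
          sobolevSemi d θ (fun ξ => ((g (Φ ξ) : ℝ) : ℂ))
            ≤ ENNReal.ofReal C * ENNReal.ofReal (M ^ θ) *
                sobolevSemi d θ (fun ξ => ((g ξ : ℝ) : ℂ))) := by

  refine ⟨?_, ?_, ?_⟩
  · intro Φ M h r hr0 hr1 g
    obtain ⟨hΦ, hM, hL⟩ := aux_mp d Φ M h
    unfold holderSemi
    refine iSup_le fun x => iSup_le fun y => ?_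
    have h1 : (‖g (Φ x) - g (Φ y)‖₊ : ℝ≥0∞) / (‖Φ x - Φ y‖₊ : ℝ≥0∞) ^ r ≤
        ⨆ x, ⨆ y, (‖g x - g y‖₊ : ℝ≥0∞) / (‖x - y‖₊ : ℝ≥0∞) ^ r :=
      le_iSup₂ (f := fun x y => (‖g x - g y‖₊ : ℝ≥0∞) / (‖x - y‖₊ : ℝ≥0∞) ^ r) (Φ x) (Φ y)
    refine le_trans ?_ (mul_le_mul_right h1 _)
    by_cases hxy : Φ x = Φ y
    · simp [hxy]
    have hL' : (‖Φ x - Φ y‖₊ : ℝ≥0∞) ≤ ENNReal.ofReal M * (‖x - y‖₊ : ℝ≥0∞) := by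
      change ‖Φ x - Φ y‖ₑ ≤ ENNReal.ofReal M * ‖x - y‖ₑ
      rw [← ofReal_norm, ← ofReal_norm, ← ENNReal.ofReal_mul (by linarith)]
      exact ENNReal.ofReal_le_ofReal (hL x y)
    have hxy' : x ≠ y := fun h => hxy (by rw [h])
    have hp1 : (‖Φ x - Φ y‖₊ : ℝ≥0∞) ^ r ≠ 0 := by
      simp [ENNReal.rpow_eq_zero_iff, sub_eq_zero, hxy]
    have hp2 : (‖Φ x - Φ y‖₊ : ℝ≥0∞) ^ r ≠ ⊤ :=
      ENNReal.rpow_ne_top_of_nonneg hr0.le ENNReal.coe_ne_top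
    have hp3 : (‖x - y‖₊ : ℝ≥0∞) ^ r ≠ 0 := by
      simp [ENNReal.rpow_eq_zero_iff, sub_eq_zero, hxy']
    have hp4 : (‖x - y‖₊ : ℝ≥0∞) ^ r ≠ ⊤ :=
      ENNReal.rpow_ne_top_of_nonneg hr0.le ENNReal.coe_ne_top
    have hL2 := ENNReal.rpow_le_rpow hL' hr0.le
    rw [ENNReal.mul_rpow_of_nonneg _ _ hr0.le, ENNReal.ofReal_rpow_of_pos (by linarith)] at hL2
    rw [ENNReal.div_le_iff hp3 hp4]
    set N := (‖g (Φ x) - g (Φ y)‖₊ : ℝ≥0∞)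
    calc N = N / (‖Φ x - Φ y‖₊ : ℝ≥0∞) ^ r * (‖Φ x - Φ y‖₊ : ℝ≥0∞) ^ r :=
          (ENNReal.div_mul_cancel hp1 hp2).symm
      _ ≤ N / (‖Φ x - Φ y‖₊ : ℝ≥0∞) ^ r * (ENNReal.ofReal (M ^ r) * (‖x - y‖₊ : ℝ≥0∞) ^ r) := by
          gcongr
      _ = _ := by ring
  · intro r p hr0 hr1 hp
    have hp0 : 0 < p := by linarith
    obtain ⟨C, hC, hmain⟩ := aux_gag d (r * p) p (by positivity) (by linarith)
    have hC' : C ^ (1 / p) ≠ ⊤ := ENNReal.rpow_ne_top_of_nonneg (by positivity) hC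
    refine ⟨(C ^ (1 / p)).toReal + 1, by positivity, ?_⟩
    intro Φ M h g
    obtain ⟨hΦ, hM, hL⟩ := aux_mp d Φ M h
    have := hmain (g : Ed d → ℝ) g.continuous Φ hΦ M hM hL
    unfold gagliardo
    rw [aux_gag_eq d (fun ξ => g (Φ ξ)) (g.continuous.comp h.1.continuous), aux_gag_eq d g g.continuous]
    refine (ENNReal.rpow_le_rpow this (by positivity : 0 ≤ 1 / p)).trans ?_
    rw [ENNReal.mul_rpow_of_nonneg _ _ (by positivity), ENNReal.mul_rpow_of_nonneg _ _ (by positivity),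
      ← ENNReal.rpow_mul, show r * p * (1 / p) = r by field_simp,
      ENNReal.ofReal_rpow_of_pos (by linarith)]
    gcongr
    rw [← ENNReal.ofReal_toReal hC']
    apply ENNReal.ofReal_le_ofReal
    rw [ENNReal.toReal_ofReal (by positivity)]
    linarith
  · intro θ h0 h1
    obtain ⟨C, hC, hmain⟩ := aux_sob_sq d hd θ h0 h1
    have hC' : C ^ ((1 : ℝ) / 2) ≠ ⊤ := ENNReal.rpow_ne_top_of_nonneg (by positivity) hC
    refine ⟨(C ^ ((1 : ℝ) / 2)).toReal + 1, by positivity, ?_⟩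
    intro Φ M h g
    obtain ⟨hΦ, hM, hL⟩ := aux_mp d Φ M h
    have g1 : Integrable (fun ξ => ((g ξ : ℝ) : ℂ)) := g.integrable.ofReal
    have g2 : MemLp (fun ξ => ((g ξ : ℝ) : ℂ)) 2 := (g.memLp 2).ofReal
    have gc : Continuous (fun ξ => ((g ξ : ℝ) : ℂ)) := Complex.continuous_ofReal.comp g.continuous
    have := hmain Φ hΦ M hM hL (fun ξ => ((g ξ : ℝ) : ℂ)) gc g1 g2
    unfold sobolevSemi
    refine (ENNReal.rpow_le_rpow this (by positivity : (0:ℝ) ≤ 1 / 2)).trans ?_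
    rw [ENNReal.mul_rpow_of_nonneg _ _ (by positivity), ENNReal.mul_rpow_of_nonneg _ _ (by positivity),
      ← ENNReal.rpow_mul, show 2 * θ * (1 / 2) = θ by ring,
      ENNReal.ofReal_rpow_of_pos (by linarith)]
    refine mul_le_mul' (mul_le_mul' ?_ le_rfl) le_rfl
    rw [← ENNReal.ofReal_toReal hC']
    apply ENNReal.ofReal_le_ofReal
    rw [ENNReal.toReal_ofReal (by positivity)]
    linarith
end
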